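/- Let {F_n} be the Fibonacci sequence with F_0 = F_1 = 1. Then the real number ξ1 = ∏_{n=1}^∞ (1 + 1/F_n) is transcendental over ℚ. -/

import Mathlib

/-!
The proof identifies the product with an eta quotient at an algebraic nome and applies the method
of Barré-Sirieix, Diaz, Gramain and Philibert (the Mahler–Manin conjecture), specialised to a real
nome.

*Reduction to modular functions.* Let `Q = φ⁻²`, with `φ` the golden ratio. Binet's formula and
Cassini's identity factor each `fib m + 1`, so the product telescopes in groups of four factors
(`partial_product`), and `ξ1 = κ α₁ γ₁²` with `κ` algebraic, `α₁ = ∏ (1 + Q ^ (2n+1))` and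
`γ₁ = ∏ (1 + Q ^ (2n))` (`limit_eq`). With `β₁ = ∏ (1 - Q ^ (2n+1))` one has `α₁ β₁ γ₁ = 1`. The
numbers `2¹² Q² γ₁²⁴`, `β₁²⁴ / Q`, `-α₁²⁴ / Q` are the values of the three conjugates of
`2¹² Δ(2τ)/Δ(τ)`, whose sum is a constant (`u_sum`). If `ξ1` is algebraic, this relation
makes `β₁²⁴` algebraic, and then the level one modular function `J` takes an algebraic value at the
algebraic nome `q₀ = Q²`.

*The transcendence argument* (`not_both_algebraic`). Suppose `q₀ ∈ (0, 1/4]` and `J(q₀)` are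
algebraic. The function `J` has integral `q`-expansion, with a simple pole at `q = 0` removed by
`t(q) = Δ(2τ)/Δ(τ)`. Siegel's lemma gives, for a parameter `s`, an integer polynomial `P` of degree
less than `2 s²` in each variable with small coefficients, such that `t^L P(q, J)` vanishes at
`q = 0` to an order `M ≥ 2 s⁴` (`exists_aux`). It is nonzero as `q` and `J` are algebraically
independent (`bieval_ne_zero`). Let `p` be the least prime with `P(q₀^p, J(q₀^p)) ≠ 0`. The zeros
at `q₀^p'` for the primes `p' < p`, together with Schwarz's lemma (`schwarz_zeros`) and the
integrality of the leading Taylor coefficient, bound `p` in terms of `s` and `M`; here a Chebyshev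
bound for the number of primes enters. The number `P(q₀^p, J(q₀^p))` is algebraic, since `J(pτ)` is a
root of the modular equation (`modular_equation`), a polynomial of degree `p + 1` over `ℤ[J(τ)]`
with leading coefficient `(p + 1)!`; a Liouville type bound
(`exists_lower_bound`) opposed to the vanishing order `M` bounds `M` in terms of `s` and `p`. The
two bounds contradict each other for large `s` (`growth_bounded`).
-/

open scoped BigOperators

noncomputable section

/-- Fibonacci sequence with `F 0 = F 1 = 1`. -/
def F : ℕ → ℕ
  | 0 => 1
  | 1 => 1
  | n + 2 => F (n + 1) + F n

/-- The golden ratio conjugate `β = (√5 - 1)/2`. -/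
noncomputable def β : ℝ := (Real.sqrt 5 - 1) / 2

/-- Jacobi theta function `θ₂(q) = 2 q^{1/4} ∑_{n≥0} q^{n(n+1)}`. -/
noncomputable def θ2 (q : ℝ) : ℝ := 2 * q ^ ((1 : ℝ) / 4) * ∑' n : ℕ, q ^ (n * (n + 1))

/-- Jacobi theta function `θ₃(q) = 1 + 2 ∑_{n≥1} q^{n²}`. -/
noncomputable def θ3 (q : ℝ) : ℝ := 1 + 2 * ∑' n : ℕ, q ^ ((n + 1) ^ 2)

/-- Jacobi theta function `θ₄(q) = 1 + 2 ∑_{n≥1} (-1)^n q^{n²}`. -/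
noncomputable def θ4 (q : ℝ) : ℝ := 1 + 2 * ∑' n : ℕ, (-1 : ℝ) ^ (n + 1) * q ^ ((n + 1) ^ 2)

namespace XiOne

open Filter Topology Metric

/-! ### Holomorphic functions on the unit disc with integral Taylor coefficients -/

/-- `h` is, on the open unit disc, the sum of the power series with integer coefficients `a`. -/
def IntSer (h : ℂ → ℂ) (a : ℕ → ℤ) : Prop :=
  ∀ z : ℂ, ‖z‖ < 1 → HasSum (fun n => (a n : ℂ) * z ^ n) (h z)

/-- `h` is, on the open unit disc, the sum of some power series with integer coefficients. -/
def IntHol (h : ℂ → ℂ) : Prop := ∃ a, IntSer h a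

lemma IntSer.add {h k : ℂ → ℂ} {a b : ℕ → ℤ} (ha : IntSer h a) (hb : IntSer k b) :
    IntSer (fun z => h z + k z) (fun n => a n + b n) := by
  intro z hz
  have := (ha z hz).add (hb z hz)
  refine this.congr_fun ?_ |> id
  intro n; push_cast; ring

lemma IntSer.mul {h k : ℂ → ℂ} {a b : ℕ → ℤ} (ha : IntSer h a) (hb : IntSer k b) :
    IntSer (fun z => h z * k z)
      (fun n => ∑ x ∈ Finset.HasAntidiagonal.antidiagonal n, a x.1 * b x.2) := by
  intro z hz
  have h1 := (ha z hz).summable.norm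
  have h2 := (hb z hz).summable.norm
  have h3 := summable_norm_sum_mul_antidiagonal_of_summable_norm h1 h2
  have h4 := tsum_mul_tsum_eq_tsum_sum_antidiagonal_of_summable_norm h1 h2
  rw [(ha z hz).tsum_eq, (hb z hz).tsum_eq] at h4
  dsimp only
  rw [h4]
  have h5 := h3.of_norm.hasSum
  refine h5.congr_fun ?_ |> id
  intro n
  push_cast
  rw [Finset.sum_mul]
  refine Finset.sum_congr rfl fun x hx => ?_
  rw [← Finset.HasAntidiagonal.mem_antidiagonal.1 hx, pow_add]; ring

lemma intSer_single (c : ℤ) (m : ℕ) :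
    IntSer (fun z => c * z ^ m) (fun n => if n = m then c else 0) := by
  intro z _
  have := hasSum_single (f := fun n => (((if n = m then c else 0 : ℤ)) : ℂ) * z ^ n) m
    (fun n hn => by simp [hn])
  simpa using this

lemma IntHol.add {h k : ℂ → ℂ} (ha : IntHol h) (hb : IntHol k) :
    IntHol (fun z => h z + k z) := by
  obtain ⟨a, ha⟩ := ha; obtain ⟨b, hb⟩ := hb; exact ⟨_, ha.add hb⟩

lemma IntHol.mul {h k : ℂ → ℂ} (ha : IntHol h) (hb : IntHol k) :
    IntHol (fun z => h z * k z) := by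
  obtain ⟨a, ha⟩ := ha; obtain ⟨b, hb⟩ := hb; exact ⟨_, ha.mul hb⟩

lemma intHol_const (c : ℤ) : IntHol (fun _ => (c : ℂ)) :=
  ⟨_, by simpa using intSer_single c 0⟩

lemma intHol_pow (m : ℕ) : IntHol (fun z => z ^ m) :=
  ⟨_, by simpa using intSer_single 1 m⟩

lemma IntHol.pow {h : ℂ → ℂ} (ha : IntHol h) (m : ℕ) : IntHol (fun z => h z ^ m) := by
  induction m with
  | zero => simpa using intHol_const 1
  | succ m ih => simpa [pow_succ] using ih.mul ha

lemma IntHol.const_mul {h : ℂ → ℂ} (ha : IntHol h) (c : ℤ) : IntHol (fun z => c * h z) :=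
  (intHol_const c).mul ha

lemma IntHol.sub {h k : ℂ → ℂ} (ha : IntHol h) (hb : IntHol k) :
    IntHol (fun z => h z - k z) := by
  have := ha.add (hb.const_mul (-1))
  simpa [sub_eq_add_neg] using this

lemma IntHol.sum {ι : Type*} (s : Finset ι) {h : ι → ℂ → ℂ} (ha : ∀ i ∈ s, IntHol (h i)) :
    IntHol (fun z => ∑ i ∈ s, h i z) := by
  classical
  induction s using Finset.induction_on with
  | empty => simpa using intHol_const 0
  | insert i s hi ih =>
    simp only [Finset.sum_insert hi]
    exact (ha i (by simp)).add (ih fun j hj => ha j (by simp [hj]))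

lemma IntHol.congr {h k : ℂ → ℂ} (ha : IntHol h) (hk : ∀ z, ‖z‖ < 1 → k z = h z) :
    IntHol k := by
  obtain ⟨a, ha⟩ := ha
  exact ⟨a, fun z hz => by rw [hk z hz]; exact ha z hz⟩

lemma IntSer.hasFPowerSeriesOnBall {h : ℂ → ℂ} {a : ℕ → ℤ} (ha : IntSer h a) :
    HasFPowerSeriesOnBall h
      (FormalMultilinearSeries.ofScalars ℂ (𝕜 := ℂ) (fun n => (a n : ℂ))) 0 1 := by
  have hrad : (1 : ENNReal) ≤
      (FormalMultilinearSeries.ofScalars ℂ (𝕜 := ℂ) (fun n => (a n : ℂ))).radius := by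
    refine ENNReal.le_of_forall_nnreal_lt fun r hr => ?_
    refine FormalMultilinearSeries.le_radius_of_summable _ ?_
    have hr1 : ‖((r : ℝ) : ℂ)‖ < 1 := by
      simpa using hr
    have := (ha _ hr1).summable.norm
    simpa [FormalMultilinearSeries.ofScalars_norm] using this
  refine ⟨hrad, one_pos, fun {y} hy => ?_⟩
  have hy' : ‖y‖ < 1 := by
    simpa [enorm_eq_nnnorm, ← NNReal.coe_lt_coe] using hy
  simpa [FormalMultilinearSeries.ofScalars_apply_eq, mul_comm] using ha y hy'

lemma IntHol.differentiableOn {h : ℂ → ℂ} (ha : IntHol h) :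
    DifferentiableOn ℂ h (ball 0 1) := by
  obtain ⟨a, ha⟩ := ha
  have := ha.hasFPowerSeriesOnBall.differentiableOn
  rw [← Metric.eball_ofReal] at *
  simpa using this

lemma IntSer.apply_zero {h : ℂ → ℂ} {a : ℕ → ℤ} (ha : IntSer h a) : h 0 = a 0 := by
  have h1 := ha 0 (by simp)
  have h2 := hasSum_single (f := fun n => (a n : ℂ) * (0 : ℂ) ^ n) 0
    (fun n hn => by simp [hn])
  simpa using h1.unique h2

/-- Division by `z ^ m` when the first `m` coefficients vanish. -/
lemma IntSer.shift {h : ℂ → ℂ} {a : ℕ → ℤ} (ha : IntSer h a) (m : ℕ)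
    (h0 : ∀ n < m, a n = 0) :
    ∃ k, IntSer k (fun n => a (n + m)) ∧ ∀ z : ℂ, ‖z‖ < 1 → h z = z ^ m * k z := by
  have key : ∀ z : ℂ, ‖z‖ < 1 → z ≠ 0 →
      HasSum (fun n => (a (n + m) : ℂ) * z ^ n) (h z / z ^ m) := by
    intro z hz hz0
    have h1 := (hasSum_nat_add_iff' (f := fun n => (a n : ℂ) * z ^ n) m).2 (ha z hz)
    rw [Finset.sum_eq_zero (fun i hi => by simp [h0 i (Finset.mem_range.1 hi)]), sub_zero] at h1
    have h2 := h1.div_const (z ^ m)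
    refine h2.congr_fun ?_ |> id
    intro n
    field_simp
    rw [pow_add]; ring
  refine ⟨fun z => if z = 0 then (a m : ℂ) else h z / z ^ m, ?_, ?_⟩
  · intro z hz
    by_cases hz0 : z = 0
    · have h2 := hasSum_single (f := fun n => (a (n + m) : ℂ) * (0 : ℂ) ^ n) 0
        (fun n hn => by simp [hn])
      subst hz0
      simpa using h2
    · simpa [hz0] using key z hz hz0
  · intro z hz
    by_cases hz0 : z = 0
    · subst hz0
      rcases Nat.eq_zero_or_pos m with rfl | hm
      · simpa using ha.apply_zero
      · simp [ha.apply_zero, h0 0 hm, hm.ne']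
    · simp only [hz0, if_false]
      field_simp

lemma IntSer.comp_pow {h : ℂ → ℂ} {a : ℕ → ℤ} (ha : IntSer h a) {p : ℕ} (hp : 0 < p) :
    IntHol (fun z => h (z ^ p)) := by
  refine ⟨fun n => if p ∣ n then a (n / p) else 0, fun z hz => ?_⟩
  have hz' : ‖z ^ p‖ < 1 := by
    rw [norm_pow]; exact pow_lt_one₀ (norm_nonneg _) hz hp.ne'
  have h1 := ha _ hz'
  have hinj : Function.Injective (fun n : ℕ => p * n) := fun x y hxy =>
    Nat.eq_of_mul_eq_mul_left hp hxy
  have h2 := (hinj.hasSum_iff (f := fun n => ((if p ∣ n then a (n / p) else 0 : ℤ) : ℂ) * z ^ n)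
    (a := h (z ^ p)) ?_).1 ?_
  · exact h2
  · intro x hx
    have : ¬ p ∣ x := fun ⟨c, hc⟩ => hx ⟨c, hc.symm⟩
    simp [this]
  · refine h1.congr_fun ?_ |> id
    intro n
    simp [Nat.mul_div_cancel_left _ hp, pow_mul]

/-- Averaging over `p`-th roots: `∑_b h (ζ ^ b * w)` depends integrally on `w ^ p`. -/
lemma IntSer.sum_roots {h : ℂ → ℂ} {a : ℕ → ℤ} (ha : IntSer h a) {p : ℕ} (hp : 0 < p)
    {ζ : ℂ} (hζ : IsPrimitiveRoot ζ p) :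
    ∃ k, IntHol k ∧ ∀ w : ℂ, ‖w‖ < 1 → ∑ b ∈ Finset.range p, h (ζ ^ b * w) = k (w ^ p) := by
  have key : ∀ w : ℂ, ‖w‖ < 1 → HasSum (fun n => ((p * a (p * n) : ℤ) : ℂ) * (w ^ p) ^ n)
      (∑ b ∈ Finset.range p, h (ζ ^ b * w)) := by
    intro w hw
    have hζ1 : ‖ζ‖ = 1 := hζ.norm'_eq_one hp.ne'
    have h1 : HasSum (fun n => ∑ b ∈ Finset.range p, (a n : ℂ) * (ζ ^ b * w) ^ n)
        (∑ b ∈ Finset.range p, h (ζ ^ b * w)) :=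
      hasSum_sum fun b _ => ha _ (by simpa [hζ1] using hw)
    have hinj : Function.Injective (fun n : ℕ => p * n) := fun x y hxy =>
      Nat.eq_of_mul_eq_mul_left hp hxy
    have h2 := (hinj.hasSum_iff (a := ∑ b ∈ Finset.range p, h (ζ ^ b * w))
      (f := fun n => ∑ b ∈ Finset.range p, (a n : ℂ) * (ζ ^ b * w) ^ n) ?_).2 h1
    · refine h2.congr_fun ?_ |> id
      intro n
      simp only [Function.comp]
      have : ∀ b ∈ Finset.range p, (a (p * n) : ℂ) * (ζ ^ b * w) ^ (p * n)
          = (a (p * n) : ℂ) * (w ^ p) ^ n := by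
        intro b _
        rw [mul_pow, ← pow_mul, mul_comm b, mul_assoc p, pow_mul ζ, hζ.pow_eq_one, one_pow,
          one_mul, pow_mul]
      rw [Finset.sum_congr rfl this]
      simp [mul_assoc]
    · intro x hx
      have hx' : ¬ p ∣ x := fun ⟨c, hc⟩ => hx ⟨c, hc.symm⟩
      have h3 : ∀ b ∈ Finset.range p, (a x : ℂ) * (ζ ^ b * w) ^ x
          = (a x : ℂ) * w ^ x * (ζ ^ x) ^ b := by
        intro b _
        rw [mul_pow, ← pow_mul, mul_comm b, pow_mul]; ring
      rw [Finset.sum_congr rfl h3, ← Finset.mul_sum]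
      have h4 : ζ ^ x ≠ 1 := fun h => hx' (hζ.pow_eq_one_iff_dvd x |>.1 h)
      have h5 := geom_sum_eq h4 p
      rw [h5, ← pow_mul, mul_comm x, pow_mul, hζ.pow_eq_one, one_pow, sub_self, zero_div, mul_zero]
  refine ⟨fun z => ∑' n, ((p * a (p * n) : ℤ) : ℂ) * z ^ n, ⟨fun n => p * a (p * n), ?_⟩, ?_⟩
  · intro z hz
    obtain ⟨w, rfl⟩ := IsAlgClosed.exists_pow_nat_eq z hp
    have hw : ‖w‖ < 1 := by
      rw [norm_pow] at hz
      by_contra hcon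
      exact absurd hz (not_lt.2 (one_le_pow₀ (not_lt.1 hcon)))
    exact (key w hw).summable.hasSum
  · intro w hw
    exact (key w hw).tsum_eq.symm

lemma iteratedDeriv_poly_zero (P : Polynomial ℤ) (k : ℕ) :
    iteratedDeriv k (fun z : ℂ => Polynomial.aeval z P) 0 = k.factorial * (P.coeff k : ℂ) := by
  have h : ∀ k : ℕ, ∀ P : Polynomial ℤ, iteratedDeriv k (fun z : ℂ => Polynomial.aeval z P)
      = fun z => Polynomial.aeval z (Polynomial.derivative^[k] P) := by
    intro k
    induction k with
    | zero => intro P; simp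
    | succ k ih =>
      intro P
      rw [iteratedDeriv_succ']
      have : deriv (fun z : ℂ => Polynomial.aeval z P)
          = fun z => Polynomial.aeval z (Polynomial.derivative P) := by
        ext z; exact Polynomial.deriv_aeval P
      rw [this, ih, Function.iterate_succ, Function.comp]
  rw [h]
  beta_reduce
  rw [← Polynomial.coeff_zero_eq_aeval_zero', Polynomial.coeff_iterate_derivative]
  simp [Nat.descFactorial_self]

/-- A locally uniform limit of integer polynomials on the disc has integral Taylor coefficients:
each coefficient is a limit of integers. -/
lemma intHol_of_tendsto {f : ℂ → ℂ} (P : ℕ → Polynomial ℤ)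
    (hf : TendstoLocallyUniformlyOn (fun N z => Polynomial.aeval z (P N)) f atTop (ball 0 1)) :
    IntHol f := by
  have hdiff : ∀ k N, DifferentiableOn ℂ
      (iteratedDeriv k (fun z : ℂ => Polynomial.aeval z (P N))) (ball 0 1) := by
    intro k N
    have : ContDiff ℂ ⊤ (fun z : ℂ => Polynomial.aeval z (P N)) :=
      Polynomial.contDiff_aeval _ _
    exact (this.differentiable_iteratedDeriv k (by exact_mod_cast WithTop.coe_lt_top _)).differentiableOn
  have hk : ∀ k, TendstoLocallyUniformlyOn
      (fun N => iteratedDeriv k (fun z : ℂ => Polynomial.aeval z (P N)))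
      (iteratedDeriv k f) atTop (ball 0 1) := by
    intro k
    induction k with
    | zero => simpa using hf
    | succ k ih =>
      simp only [iteratedDeriv_succ]
      exact ih.deriv (Eventually.of_forall (hdiff k)) isOpen_ball
  have h_int : ∀ k, ∃ c : ℤ, iteratedDeriv k f 0 = k.factorial * (c : ℂ) := by
    intro k
    have h1 := (hk k).tendsto_at (a := 0) (by simp)
    simp only [iteratedDeriv_poly_zero] at h1
    have hk0 : ((k.factorial : ℕ) : ℂ) ≠ 0 := by exact_mod_cast k.factorial_ne_zero
    have h2 := h1.const_mul ((k.factorial : ℂ)⁻¹)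
    simp only [← mul_assoc, inv_mul_cancel₀ hk0, one_mul] at h2
    have h3 := Complex.isClosed_range_intCast.mem_of_tendsto h2
      (Eventually.of_forall fun N => ⟨(P N).coeff k, rfl⟩)
    obtain ⟨c, hc⟩ := h3
    exact ⟨c, by rw [hc, ← mul_assoc, mul_inv_cancel₀ hk0, one_mul]⟩
  choose c hc using h_int
  have hd : DifferentiableOn ℂ f (ball 0 1) :=
    hf.differentiableOn (Eventually.of_forall fun N => by simpa using hdiff 0 N) isOpen_ball
  refine ⟨c, fun z hz => ?_⟩
  have h1 := Complex.hasSum_taylorSeries_on_ball (c := 0) (r := 1) (f := f)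
    (by simpa using hd) (z := z) (by simpa using hz)
  refine h1.congr_fun ?_ |> id
  intro n
  rw [hc n]
  have hk0 : ((n.factorial : ℕ) : ℂ) ≠ 0 := by exact_mod_cast n.factorial_ne_zero
  simp
  field_simp

/-! ### The infinite products -/

/-- The product `∏ (1 + ε z ^ (e n))`. -/
def prodE (ε : ℤ) (e : ℕ → ℕ) (z : ℂ) : ℂ := ∏' n, (1 + (ε : ℂ) * z ^ e n)

lemma norm_term_le {ε : ℤ} (hε : |ε| ≤ 1) {e : ℕ → ℕ} (he : ∀ n, n + 1 ≤ e n) {z : ℂ} {r : ℝ}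
    (hz : ‖z‖ ≤ r) (hr : r < 1) (n : ℕ) : ‖(ε : ℂ) * z ^ e n‖ ≤ r ^ (n + 1) := by
  have hr0 : 0 ≤ r := (norm_nonneg _).trans hz
  rw [norm_mul, norm_pow]
  have h1 : ‖(ε : ℂ)‖ ≤ 1 := by
    rw [Complex.norm_intCast]; exact_mod_cast hε
  calc ‖(ε : ℂ)‖ * ‖z‖ ^ e n ≤ 1 * r ^ e n := by gcongr
    _ = r ^ e n := one_mul _
    _ ≤ r ^ (n + 1) := pow_le_pow_of_le_one hr0 hr.le (he n)

lemma summable_pow_succ {r : ℝ} (hr0 : 0 ≤ r) (hr : r < 1) :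
    Summable fun n : ℕ => r ^ (n + 1) :=
  (summable_nat_add_iff 1).2 (summable_geometric_of_lt_one hr0 hr)

lemma prodE_multipliable {ε : ℤ} (hε : |ε| ≤ 1) {e : ℕ → ℕ} (he : ∀ n, n + 1 ≤ e n) {z : ℂ}
    (hz : ‖z‖ < 1) : Multipliable fun n => (1 + (ε : ℂ) * z ^ e n) := by
  apply multipliable_one_add_of_summable
  exact (summable_pow_succ (norm_nonneg z) hz).of_nonneg_of_le (fun n => norm_nonneg _)
    (norm_term_le hε he le_rfl hz)

lemma prodE_norm_le {ε : ℤ} (hε : |ε| ≤ 1) {e : ℕ → ℕ} (he : ∀ n, n + 1 ≤ e n) {z : ℂ} {r : ℝ}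
    (hz : ‖z‖ ≤ r) (hr : r < 1) : ‖prodE ε e z‖ ≤ Real.exp (r / (1 - r)) := by
  have hr0 : 0 ≤ r := (norm_nonneg _).trans hz
  have h1 := (prodE_multipliable hε he (hz.trans_lt hr)).hasProd.norm
  refine le_of_tendsto h1 (Eventually.of_forall fun s => ?_)
  have hs : HasSum (fun n : ℕ => r ^ (n + 1)) (r / (1 - r)) := by
    have := (hasSum_geometric_of_lt_one hr0 hr).mul_left r
    simpa [pow_succ', div_eq_mul_inv] using this
  calc ∏ n ∈ s, ‖1 + (ε : ℂ) * z ^ e n‖ ≤ ∏ n ∈ s, Real.exp (r ^ (n + 1)) := by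
        refine Finset.prod_le_prod (fun _ _ => norm_nonneg _) fun n _ => ?_
        calc ‖1 + (ε : ℂ) * z ^ e n‖ ≤ ‖(1 : ℂ)‖ + ‖(ε : ℂ) * z ^ e n‖ := norm_add_le _ _
          _ ≤ r ^ (n + 1) + 1 := by
            rw [norm_one, add_comm]; gcongr; exact norm_term_le hε he hz hr n
          _ ≤ _ := Real.add_one_le_exp _
    _ = Real.exp (∑ n ∈ s, r ^ (n + 1)) := (Real.exp_sum _ _).symm
    _ ≤ _ := Real.exp_le_exp.2 (sum_le_hasSum s (fun n _ => by positivity) hs)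

lemma prodE_intHol {ε : ℤ} (hε : |ε| ≤ 1) {e : ℕ → ℕ} (he : ∀ n, n + 1 ≤ e n) :
    IntHol (prodE ε e) := by
  have h1 : HasProdLocallyUniformlyOn (fun n (z : ℂ) => 1 + (ε : ℂ) * z ^ e n) (prodE ε e)
      (ball 0 1) := by
    apply hasProdLocallyUniformlyOn_of_forall_compact Metric.isOpen_ball
    intro K hK hcK
    rcases K.eq_empty_or_nonempty with hN | hN
    · simpa [hasProdUniformlyOn_iff_tendstoUniformlyOn, hN] using tendstoUniformlyOn_empty
    · obtain ⟨q₀, hq₀, _, HB⟩ := hcK.exists_sSup_image_eq_and_ge hN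
        (show ContinuousOn (fun q : ℂ ↦ ‖q‖) K by fun_prop)
      have hq1 : ‖q₀‖ < 1 := by simpa using hK hq₀
      exact (summable_pow_succ (norm_nonneg q₀) hq1).hasProdUniformlyOn_nat_one_add
        hcK (.of_forall fun n x hx ↦ norm_term_le hε he (HB x hx) hq1 n) (fun _ ↦ by fun_prop)
  have h2 := h1.tendstoLocallyUniformlyOn_finsetRange
  refine intHol_of_tendsto
    (fun N => ∏ n ∈ Finset.range N, (1 + Polynomial.C ε * Polynomial.X ^ e n)) ?_
  refine h2.congr fun N z _ => ?_
  simp [map_prod]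

lemma prodE_zero {ε : ℤ} {e : ℕ → ℕ} (he : ∀ n, n + 1 ≤ e n) : prodE ε e 0 = 1 := by
  have : ∀ n, e n ≠ 0 := fun n => by have := he n; omega
  simp [prodE, this]

/-- `E z = ∏ (1 - z ^ (n + 1))`. -/
def E : ℂ → ℂ := prodE (-1) (fun n => n + 1)
/-- `g z = ∏ (1 + z ^ (n + 1))`. -/
def g : ℂ → ℂ := prodE 1 (fun n => n + 1)
/-- `gi z = ∏ (1 - z ^ (2 n + 1))`, which is the inverse of `g z` by an identity of Euler. -/
def gi : ℂ → ℂ := prodE (-1) (fun n => 2 * n + 1)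

lemma g_intHol : IntHol g := prodE_intHol (by simp) (fun _ => le_rfl)
lemma gi_intHol : IntHol gi := prodE_intHol (by simp) (fun _ => by omega)
lemma g_zero : g 0 = 1 := prodE_zero (fun _ => le_rfl)
lemma gi_zero : gi 0 = 1 := prodE_zero (fun _ => by omega)
lemma g_norm_le {z : ℂ} {r : ℝ} (hz : ‖z‖ ≤ r) (hr : r < 1) :
    ‖g z‖ ≤ Real.exp (r / (1 - r)) := prodE_norm_le (by simp) (fun _ => le_rfl) hz hr
lemma gi_norm_le {z : ℂ} {r : ℝ} (hz : ‖z‖ ≤ r) (hr : r < 1) :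
    ‖gi z‖ ≤ Real.exp (r / (1 - r)) := prodE_norm_le (by simp) (fun _ => by omega) hz hr

lemma E_eq (z : ℂ) : E z = ∏' n : ℕ, (1 - z ^ (n + 1)) := by
  simp [E, prodE, sub_eq_add_neg]

lemma E_ne_zero {z : ℂ} (hz : ‖z‖ < 1) : E z ≠ 0 := by
  refine tprod_one_add_ne_zero_of_summable (f := fun n : ℕ => ((-1 : ℤ) : ℂ) * z ^ (n + 1)) ?_ ?_
  · intro n h
    have h2 : z ^ (n + 1) = 1 := by
      push_cast at h; linear_combination -h
    have := pow_lt_one₀ (norm_nonneg z) hz n.succ_ne_zero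
    rw [← norm_pow, h2] at this
    simp at this
  · exact (summable_pow_succ (norm_nonneg z) hz).of_nonneg_of_le (fun n => norm_nonneg _)
      (norm_term_le (by simp) (fun _ => le_rfl) le_rfl hz)

lemma E_sq {z : ℂ} (hz : ‖z‖ < 1) : E (z ^ 2) = E z * g z := by
  have h1 := prodE_multipliable (ε := -1) (by simp) (e := fun n => n + 1) (fun _ => le_rfl) hz
  have h2 := prodE_multipliable (ε := 1) (by simp) (e := fun n => n + 1) (fun _ => le_rfl) hz
  unfold E g prodE
  rw [← h1.tprod_mul h2]
  refine tprod_congr fun n => ?_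
  rw [← pow_mul, mul_comm 2, pow_mul]; push_cast; ring

lemma E_eq_gi_mul {z : ℂ} (hz : ‖z‖ < 1) : E z = gi z * E (z ^ 2) := by
  have hz2 : ‖z ^ 2‖ < 1 := by
    rw [norm_pow]; exact pow_lt_one₀ (norm_nonneg z) hz two_ne_zero
  have h1 := prodE_multipliable (ε := -1) (by simp) (e := fun n => 2 * n + 1)
    (fun _ => by omega) hz
  have h2 := prodE_multipliable (ε := -1) (by simp) (e := fun n => n + 1) (fun _ => le_rfl) hz2
  unfold E gi prodE
  have h3 : ∀ n : ℕ, (1 + ((-1 : ℤ) : ℂ) * (z ^ 2) ^ (n + 1))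
      = 1 + ((-1 : ℤ) : ℂ) * z ^ ((2 * n + 1) + 1) := fun n => by
    rw [← pow_mul]; ring_nf
  simp only [h3] at h2 ⊢
  exact (tprod_even_mul_odd (f := fun n => 1 + ((-1 : ℤ) : ℂ) * z ^ (n + 1)) h1 h2).symm

lemma g_mul_gi {z : ℂ} (hz : ‖z‖ < 1) : g z * gi z = 1 := by
  have h1 := E_eq_gi_mul hz
  rw [E_sq hz] at h1
  have h2 := E_ne_zero hz
  have : E z * (g z * gi z) = E z * 1 := by rw [mul_one]; nth_rw 2 [h1]; ring
  exact mul_left_cancel₀ h2 this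

lemma g_ne_zero {z : ℂ} (hz : ‖z‖ < 1) : g z ≠ 0 := left_ne_zero_of_mul_eq_one (g_mul_gi hz)
lemma gi_ne_zero {z : ℂ} (hz : ‖z‖ < 1) : gi z ≠ 0 := right_ne_zero_of_mul_eq_one (g_mul_gi hz)

lemma one_le_norm_g_ofReal {x : ℝ} (hx0 : 0 ≤ x) (hx : x < 1) : 1 ≤ ‖g (x : ℂ)‖ := by
  have hz : ‖(x : ℂ)‖ < 1 := by simpa [abs_of_nonneg hx0] using hx
  have h1 := (prodE_multipliable (ε := 1) (by simp) (e := fun n => n + 1)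
    (fun _ => le_rfl) hz).hasProd.norm
  refine ge_of_tendsto h1 (Eventually.of_forall fun s => ?_)
  rw [← Finset.prod_const_one (s := s)]
  refine Finset.prod_le_prod (fun _ _ => zero_le_one) fun n _ => ?_
  have : (1 + ((1 : ℤ) : ℂ) * (x : ℂ) ^ (n + 1)) = ((1 + x ^ (n + 1) : ℝ) : ℂ) := by push_cast; ring
  rw [this, Complex.norm_real, Real.norm_of_nonneg (by positivity)]
  have : 0 ≤ x ^ (n + 1) := by positivity
  linarith

end XiOne

namespace XiOne

open Filter Topology Metric UpperHalfPlane ModularGroup MatrixGroups ModularForm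

/-! ### Functions invariant under the modular group -/

/-- Invariance of a function on the upper half plane under `τ ↦ τ + 1` and `τ ↦ -1 / τ`. -/
def ModInv (f : ℂ → ℂ) : Prop :=
  ∀ τ : ℂ, 0 < τ.im → f (τ + 1) = f τ ∧ f (-1 / τ) = f τ

lemma im_neg_one_div {τ : ℂ} (hτ : 0 < τ.im) : 0 < (-1 / τ).im := by
  have := UpperHalfPlane.im_inv_neg_coe_pos ⟨τ, hτ⟩
  rw [neg_div, one_div, ← inv_neg]
  simpa using this

lemma slash_S_of {f : ℂ → ℂ} {k : ℕ}
    (hS : ∀ τ : ℂ, 0 < τ.im → f (-1 / τ) = τ ^ k * f τ) :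
    (fun τ : ℍ => f τ) ∣[(k : ℤ)] S = fun τ : ℍ => f τ := by
  ext τ
  have h0 : (τ : ℂ) ≠ 0 := τ.ne_zero
  have h1 : denom (S : GL (Fin 2) ℝ) τ = τ := by
    rw [ModularGroup.denom_apply]; simp [S]
  have h2 : f (-(τ : ℂ))⁻¹ = (τ : ℂ) ^ k * f τ := by
    rw [← hS τ τ.im_pos, inv_neg, neg_div, one_div]
  rw [SL_slash_apply, modular_S_smul, h1]
  show f (-(τ : ℂ))⁻¹ * _ = _
  rw [h2, zpow_neg, zpow_natCast]
  field_simp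

lemma slash_T_of {f : ℂ → ℂ} {k : ℤ} (hT : ∀ τ : ℂ, 0 < τ.im → f (τ + 1) = f τ) :
    (fun τ : ℍ => f τ) ∣[k] T = fun τ : ℍ => f τ := by
  ext τ
  have h1 : denom (T : GL (Fin 2) ℝ) τ = 1 := by
    rw [ModularGroup.denom_apply]; simp [T]
  have h2 : f (1 + (τ : ℂ)) = f τ := by rw [add_comm]; exact hT τ τ.im_pos
  rw [SL_slash_apply, modular_T_smul, h1]
  simpa using h2

/-- Transformation behaviour under all integral matrices of determinant one, deduced from the
behaviour under the two generators. -/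
lemma transform_of_gen {f : ℂ → ℂ} {k : ℕ} (hT : ∀ τ : ℂ, 0 < τ.im → f (τ + 1) = f τ)
    (hS : ∀ τ : ℂ, 0 < τ.im → f (-1 / τ) = τ ^ k * f τ) {a b c d : ℤ} (h : a * d - b * c = 1)
    {τ : ℂ} (hτ : 0 < τ.im) : f ((a * τ + b) / (c * τ + d)) = (c * τ + d) ^ k * f τ := by
  let γ : SL(2, ℤ) := ⟨!![a, b; c, d], by simp [Matrix.det_fin_two, h]⟩
  have h1 := SlashInvariantForm.slash_action_generators_SL2Z (slash_S_of hS) (slash_T_of hT) γ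
  have h2 := congrFun h1 ⟨τ, hτ⟩
  rw [SL_slash_apply] at h2
  have h3 : denom (γ : GL (Fin 2) ℝ) (⟨τ, hτ⟩ : ℍ) = c * τ + d := by
    rw [ModularGroup.denom_apply]; simp [γ]
  have h4 : ((γ • (⟨τ, hτ⟩ : ℍ) : ℍ) : ℂ) = (a * τ + b) / (c * τ + d) := by
    rw [UpperHalfPlane.coe_specialLinearGroup_apply]
    simp [γ]
  have h5 : (c * τ + d : ℂ) ≠ 0 := by rw [← h3]; exact denom_ne_zero _ _
  simp only [h4, h3] at h2
  rw [zpow_neg, zpow_natCast] at h2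
  rw [← h2, mul_left_comm, mul_inv_cancel₀ (pow_ne_zero k h5), mul_one]

lemma im_moebius_pos {a b c d : ℤ} (h : a * d - b * c = 1) {τ : ℂ} (hτ : 0 < τ.im) :
    0 < ((a * τ + b) / (c * τ + d) : ℂ).im := by
  let γ : SL(2, ℤ) := ⟨!![a, b; c, d], by simp [Matrix.det_fin_two, h]⟩
  have h4 : ((γ • (⟨τ, hτ⟩ : ℍ) : ℍ) : ℂ) = (a * τ + b) / (c * τ + d) := by
    rw [UpperHalfPlane.coe_specialLinearGroup_apply]
    simp [γ]
  rw [← h4]; exact (γ • (⟨τ, hτ⟩ : ℍ)).im_pos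

lemma ModInv.transform {f : ℂ → ℂ} (hf : ModInv f) {a b c d : ℤ} (h : a * d - b * c = 1)
    {τ : ℂ} (hτ : 0 < τ.im) : f ((a * τ + b) / (c * τ + d)) = f τ := by
  have := transform_of_gen (k := 0) (fun τ hτ => (hf τ hτ).1)
    (fun τ hτ => by simpa using (hf τ hτ).2) h hτ
  simpa using this

/-- A holomorphic modular invariant function bounded at the cusp is constant. -/
lemma const_of_inv {f : ℂ → ℂ} (hd : DifferentiableOn ℂ f {z | 0 < z.im}) (hf : ModInv f)
    {A B : ℝ} (hb : ∀ τ : ℂ, 0 < τ.im → A ≤ τ.im → ‖f τ‖ ≤ B) :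
    ∃ c, ∀ τ : ℂ, 0 < τ.im → f τ = c := by
  have hinv : ∀ γ : SL(2, ℤ), (fun τ : ℍ => f τ) ∣[((0 : ℕ) : ℤ)] γ = fun τ : ℍ => f τ :=
    SlashInvariantForm.slash_action_generators_SL2Z
      (slash_S_of fun τ hτ => by simpa using (hf τ hτ).2) (slash_T_of fun τ hτ => (hf τ hτ).1)
  have hinv' : ∀ γ : SL(2, ℤ), (fun τ : ℍ => f τ) ∣[(0 : ℤ)] γ = fun τ : ℍ => f τ := hinv
  let M : ModularForm 𝒮ℒ 0 :=
    { toFun := fun τ : ℍ => f τ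
      slash_action_eq' := by
        rintro γ ⟨A, rfl⟩
        exact hinv' A
      holo' := by
        rw [UpperHalfPlane.mdifferentiable_iff]
        refine hd.congr fun z hz => ?_
        simp [ofComplex_apply_of_im_pos hz]
      bdd_at_cusps' := by
        intro c hc
        rw [Subgroup.IsArithmetic.isCusp_iff_isCusp_SL2Z] at hc
        rw [OnePoint.isBoundedAt_iff_forall_SL2Z hc]
        intro γ _
        rw [hinv' γ, isBoundedAtImInfty_iff]
        exact ⟨B, A, fun τ hτ => hb τ τ.im_pos hτ⟩ }
  obtain ⟨c, hc⟩ := ModularFormClass.levelOne_weight_zero_const M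
  exact ⟨c, fun τ hτ => congrFun hc ⟨τ, hτ⟩⟩

/-- The nome `exp (2 π i τ)`. -/
def ex (τ : ℂ) : ℂ := Complex.exp (2 * Real.pi * Complex.I * τ)

lemma ex_ne_zero (τ : ℂ) : ex τ ≠ 0 := Complex.exp_ne_zero _

lemma norm_ex (τ : ℂ) : ‖ex τ‖ = Real.exp (-(2 * Real.pi * τ.im)) := by
  rw [ex, Complex.norm_exp]
  simp

lemma norm_ex_lt_one {τ : ℂ} (hτ : 0 < τ.im) : ‖ex τ‖ < 1 := by
  rw [norm_ex, Real.exp_lt_one_iff]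
  have := Real.pi_pos
  simp; positivity

lemma ex_add (τ σ : ℂ) : ex (τ + σ) = ex τ * ex σ := by
  rw [ex, ex, ex, ← Complex.exp_add]; ring_nf

lemma ex_one : ex 1 = 1 := by simp [ex, Complex.exp_two_pi_mul_I]

lemma ex_half : ex (1 / 2) = -1 := by
  rw [ex, ← Complex.exp_pi_mul_I]; ring_nf

lemma ex_nat_mul (n : ℕ) (τ : ℂ) : ex (n * τ) = ex τ ^ n := by
  rw [ex, ex, ← Complex.exp_nat_mul]; ring_nf

lemma differentiable_ex : Differentiable ℂ ex := by unfold ex; fun_prop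

lemma exists_ex_eq {z : ℂ} (hz0 : z ≠ 0) (hz : ‖z‖ < 1) : ∃ τ : ℂ, 0 < τ.im ∧ ex τ = z := by
  have hpi : (2 * Real.pi * Complex.I : ℂ) ≠ 0 := Complex.two_pi_I_ne_zero
  have h1 : ex (Complex.log z / (2 * Real.pi * Complex.I)) = z := by
    rw [ex, mul_div_cancel₀ _ hpi, Complex.exp_log hz0]
  refine ⟨_, ?_, h1⟩
  by_contra hcon
  rw [← h1, norm_ex] at hz
  have : 0 ≤ -(2 * Real.pi * (Complex.log z / (2 * Real.pi * Complex.I)).im) := by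
    have := Real.pi_pos
    nlinarith [not_lt.1 hcon]
  exact absurd hz (not_lt.2 (Real.one_le_exp this))

lemma differentiableOn_comp_ex {h : ℂ → ℂ} (hh : IntHol h) :
    DifferentiableOn ℂ (fun τ => h (ex τ)) {z | 0 < z.im} :=
  hh.differentiableOn.comp differentiable_ex.differentiableOn
    (fun τ hτ => by simpa using norm_ex_lt_one hτ)

lemma IntHol.bounded_near_zero {h : ℂ → ℂ} (hh : IntHol h) :
    ∃ A B : ℝ, ∀ τ : ℂ, 0 < τ.im → A ≤ τ.im → ‖h (ex τ)‖ ≤ B := by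
  have hc : ContinuousOn h (closedBall 0 (1 / 2)) :=
    hh.differentiableOn.continuousOn.mono (closedBall_subset_ball (by norm_num))
  obtain ⟨B, hB⟩ := (isCompact_closedBall (0 : ℂ) (1 / 2)).exists_bound_of_continuousOn hc
  refine ⟨1, B, fun τ _ hτ => hB _ ?_⟩
  rw [mem_closedBall, dist_zero_right, norm_ex]
  have : -(2 * Real.pi * τ.im) ≤ -1 := by nlinarith [Real.pi_gt_three]
  calc _ ≤ Real.exp (-1) := Real.exp_le_exp.2 this
    _ ≤ 1 / 2 := by
      rw [Real.exp_neg, inv_eq_one_div]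
      have := Real.add_one_le_exp 1
      apply one_div_le_one_div_of_le <;> linarith

/-- A modular invariant function with an integral expansion in `ex τ` is an integer constant. -/
lemma const_of_intHol {f h : ℂ → ℂ} (hh : IntHol h) (hf : ModInv f)
    (hfh : ∀ τ : ℂ, 0 < τ.im → f τ = h (ex τ)) :
    ∃ c : ℤ, h 0 = c ∧ ∀ τ : ℂ, 0 < τ.im → f τ = c := by
  obtain ⟨A, B, hAB⟩ := hh.bounded_near_zero
  obtain ⟨c, hc⟩ := const_of_inv
    ((differentiableOn_comp_ex hh).congr fun τ hτ => hfh τ hτ) hf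
    (fun τ hτ hA => by rw [hfh τ hτ]; exact hAB τ hτ hA)
  have h0 : Tendsto (fun n : ℕ => h (ex (n * Complex.I))) atTop (𝓝 (h 0)) := by
    have hcont : ContinuousAt h 0 :=
      (hh.differentiableOn.differentiableAt (ball_mem_nhds _ one_pos)).continuousAt
    refine hcont.tendsto.comp ?_
    have h1 : ‖ex Complex.I‖ < 1 := norm_ex_lt_one (by simp)
    simpa [ex_nat_mul] using tendsto_pow_atTop_nhds_zero_of_norm_lt_one h1
  have h1 : Tendsto (fun n : ℕ => h (ex (n * Complex.I))) atTop (𝓝 c) := by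
    refine tendsto_const_nhds.congr' ?_
    filter_upwards [eventually_gt_atTop 0] with n hn
    have him : 0 < ((n : ℂ) * Complex.I).im := by simpa using hn
    rw [← hfh _ him, hc _ him]
  have h2 := tendsto_nhds_unique h0 h1
  obtain ⟨a, ha⟩ := hh
  refine ⟨a 0, ha.apply_zero, fun τ hτ => ?_⟩
  rw [hc τ hτ, ← h2, ha.apply_zero]

/-! ### The modular function `J` -/

/-- The modular discriminant as a function of a complex variable. -/
def D (τ : ℂ) : ℂ := ex τ * E (ex τ) ^ 24

lemma D_eq (τ : ℍ) : D τ = ModularForm.discriminant τ := by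
  rw [ModularForm.discriminant_eq_q_prod]
  have h1 : Function.Periodic.qParam 1 (τ : ℂ) = ex τ := by
    simp [Function.Periodic.qParam, ex]
  have h2 : ∀ n, ModularForm.eta_q n τ = ex τ ^ (n + 1) := fun n => by
    rw [ModularForm.eta_q, h1]
  have hz := norm_ex_lt_one τ.im_pos
  rw [h1, D, E_eq]
  simp only [h2]
  rw [(ModularForm.multipliable_one_sub_pow hz).tprod_pow]

lemma D_T {τ : ℂ} : D (τ + 1) = D τ := by
  rw [D, ex_add, ex_one, mul_one, D]

lemma D_S {τ : ℂ} (hτ : 0 < τ.im) : D (-1 / τ) = τ ^ 12 * D τ := by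
  have h1 := congrFun ModularForm.discriminant_S_invariant ⟨τ, hτ⟩
  rw [SL_slash_apply, modular_S_smul, ModularGroup.denom_S] at h1
  rw [← D_eq, ← D_eq] at h1
  have h0 : τ ≠ 0 := fun h => by simp [h] at hτ
  change D (-τ)⁻¹ * τ ^ (-(12 : ℤ)) = D τ at h1
  rw [neg_div, one_div, ← inv_neg, ← h1, zpow_neg, mul_left_comm]
  rw [show τ ^ (12 : ℤ) = τ ^ 12 from by norm_cast, mul_inv_cancel₀ (pow_ne_zero _ h0), mul_one]

lemma D_ne_zero {τ : ℂ} (hτ : 0 < τ.im) : D τ ≠ 0 :=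
  mul_ne_zero (ex_ne_zero τ) (pow_ne_zero _ (E_ne_zero (norm_ex_lt_one hτ)))

/-- `t z = z ∏ (1 + z ^ n) ^ 24`, so that `t (ex τ) = Δ(2τ) / Δ(τ)`. -/
def t (z : ℂ) : ℂ := z * g z ^ 24

lemma t_intHol : IntHol t := by
  have := (intHol_pow 1).mul (g_intHol.pow 24)
  simpa [t] using! this

lemma t_ne_zero {z : ℂ} (hz0 : z ≠ 0) (hz : ‖z‖ < 1) : t z ≠ 0 :=
  mul_ne_zero hz0 (pow_ne_zero _ (g_ne_zero hz))

/-- The first of the three conjugates of `2 ^ 12 Δ(2τ) / Δ(τ)`. -/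
def u1 (τ : ℂ) : ℂ := 2 ^ 12 * D (2 * τ) / D τ
/-- The second conjugate. -/
def u2 (τ : ℂ) : ℂ := D (τ / 2) / D τ
/-- The third conjugate. -/
def u3 (τ : ℂ) : ℂ := D ((τ + 1) / 2) / D τ

lemma u1_T (τ : ℂ) : u1 (τ + 1) = u1 τ := by
  rw [u1, u1, D_T, show 2 * (τ + 1) = 2 * τ + 1 + 1 by ring, D_T, D_T]
lemma u2_T (τ : ℂ) : u2 (τ + 1) = u3 τ := by rw [u2, u3, D_T]
lemma u3_T (τ : ℂ) : u3 (τ + 1) = u2 τ := by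
  rw [u2, u3, D_T, show (τ + 1 + 1) / 2 = τ / 2 + 1 by ring, D_T]

lemma im_two_mul {τ : ℂ} (hτ : 0 < τ.im) : 0 < (2 * τ).im := by simpa using hτ
lemma im_div_two {τ : ℂ} (hτ : 0 < τ.im) : 0 < (τ / 2).im := by
  rw [show τ / 2 = ((1 / 2 : ℝ) : ℂ) * τ by push_cast; ring,
    Complex.im_ofReal_mul]
  positivity
lemma im_add_one_div_two {τ : ℂ} (hτ : 0 < τ.im) : 0 < ((τ + 1) / 2).im :=
  im_div_two (by simpa using hτ)

lemma u1_S {τ : ℂ} (hτ : 0 < τ.im) : u1 (-1 / τ) = u2 τ := by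
  have h0 : τ ≠ 0 := fun h => by simp [h] at hτ
  have hD := D_ne_zero hτ
  rw [u1, u2, D_S hτ, show 2 * (-1 / τ) = -1 / (τ / 2) by field_simp, D_S (im_div_two hτ)]
  field_simp

lemma u2_S {τ : ℂ} (hτ : 0 < τ.im) : u2 (-1 / τ) = u1 τ := by
  have h0 : τ ≠ 0 := fun h => by simp [h] at hτ
  have hD := D_ne_zero hτ
  rw [u1, u2, D_S hτ, show (-1 / τ) / 2 = -1 / (2 * τ) by field_simp, D_S (im_two_mul hτ)]
  field_simp

lemma u3_S {τ : ℂ} (hτ : 0 < τ.im) : u3 (-1 / τ) = u3 τ := by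
  have h0 : τ ≠ 0 := fun h => by simp [h] at hτ
  have hD := D_ne_zero hτ
  have h1 := transform_of_gen (k := 12) (fun τ _ => D_T) (fun τ hτ => D_S hτ)
    (a := 1) (b := -1) (c := 2) (d := -1) (by norm_num) (im_add_one_div_two hτ)
  have h2 : (((1 : ℤ) : ℂ) * ((τ + 1) / 2) + ((-1 : ℤ) : ℂ)) /
      (((2 : ℤ) : ℂ) * ((τ + 1) / 2) + ((-1 : ℤ) : ℂ)) = (-1 / τ + 1) / 2 := by
    rw [show ((2 : ℤ) : ℂ) * ((τ + 1) / 2) + ((-1 : ℤ) : ℂ) = τ by push_cast; ring]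
    push_cast; field_simp; ring
  have h3 : ((2 : ℤ) : ℂ) * ((τ + 1) / 2) + ((-1 : ℤ) : ℂ) = τ := by push_cast; ring
  rw [h2, h3] at h1
  rw [u3, u3, D_S hτ, h1]
  field_simp

lemma u1_q {τ : ℂ} (hτ : 0 < τ.im) : u1 τ = 2 ^ 12 * t (ex τ) := by
  have hz := norm_ex_lt_one hτ
  have h1 := E_ne_zero hz
  have h0 := ex_ne_zero τ
  have h2 : ex (2 * τ) = ex τ ^ 2 := by exact_mod_cast ex_nat_mul 2 τ
  rw [u1, D, D, h2, E_sq hz, t]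
  field_simp

/-- The common shape of the second and the third conjugate. -/
lemma quot_q {σ τ : ℂ} (hσ : 0 < σ.im) (h : ex τ = ex σ ^ 2) :
    D σ / D τ = gi (ex σ) ^ 24 / ex σ := by
  have hz := norm_ex_lt_one hσ
  have h1 := E_ne_zero hz
  have h0 := ex_ne_zero σ
  have h2 : E (ex σ ^ 2) ≠ 0 := by rw [E_sq hz]; exact mul_ne_zero h1 (g_ne_zero hz)
  rw [D, D, h, E_eq_gi_mul hz]
  field_simp

lemma ex_half_sq (τ : ℂ) : ex τ = ex (τ / 2) ^ 2 := by
  rw [← ex_nat_mul]; congr 1; push_cast; ring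

lemma ex_add_one_half (τ : ℂ) : ex ((τ + 1) / 2) = -ex (τ / 2) := by
  rw [add_div, ex_add, ex_half]; ring

lemma u2_q {τ : ℂ} (hτ : 0 < τ.im) : u2 τ = gi (ex (τ / 2)) ^ 24 / ex (τ / 2) :=
  quot_q (im_div_two hτ) (ex_half_sq τ)

lemma u3_q {τ : ℂ} (hτ : 0 < τ.im) : u3 τ = -(gi (-ex (τ / 2)) ^ 24 / ex (τ / 2)) := by
  have := quot_q (im_add_one_div_two hτ) (τ := τ)
    (by rw [ex_add_one_half, neg_sq, ← ex_half_sq])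
  rw [u3, this, ex_add_one_half, div_neg]

lemma gi_mul_gi_neg {w : ℂ} (hw : ‖w‖ < 1) : gi w * gi (-w) = gi (w ^ 2) := by
  have h1 := prodE_multipliable (ε := -1) (by simp) (e := fun n => 2 * n + 1)
    (fun _ => by omega) hw
  have h2 := prodE_multipliable (ε := -1) (by simp) (e := fun n => 2 * n + 1)
    (fun _ => by omega) (z := -w) (by simpa using hw)
  unfold gi prodE
  rw [← h1.tprod_mul h2]
  refine tprod_congr fun n => ?_
  rw [Odd.neg_pow ⟨n, rfl⟩, ← pow_mul, mul_comm 2 (2 * n + 1), pow_mul]; push_cast; ring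

lemma u_prod {τ : ℂ} (hτ : 0 < τ.im) : u1 τ * u2 τ * u3 τ = -2 ^ 12 := by
  have hw := norm_ex_lt_one (im_div_two hτ)
  have hz := norm_ex_lt_one hτ
  have h0 := ex_ne_zero (τ / 2)
  have h1 := gi_mul_gi_neg hw
  rw [← ex_half_sq] at h1
  have h2 := g_mul_gi hz
  rw [u1_q hτ, u2_q hτ, u3_q hτ, t]
  calc 2 ^ 12 * (ex τ * g (ex τ) ^ 24) * (gi (ex (τ / 2)) ^ 24 / ex (τ / 2)) *
        -(gi (-ex (τ / 2)) ^ 24 / ex (τ / 2))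
      = -2 ^ 12 * (g (ex τ) * (gi (ex (τ / 2)) * gi (-ex (τ / 2)))) ^ 24 *
        (ex τ / ex (τ / 2) ^ 2) := by field_simp
    _ = _ := by rw [h1, h2, ← ex_half_sq, div_self (ex_ne_zero τ)]; ring

lemma exists_cc : ∃ c : ℤ, ∀ τ : ℂ, 0 < τ.im → u1 τ + u2 τ + u3 τ = c := by
  obtain ⟨a, ha⟩ := (gi_intHol.pow 24).sub (intHol_const 1)
  have ha0 : a 0 = 0 := by
    have := ha.apply_zero
    simp only [gi_zero] at this
    have h : ((a 0 : ℤ) : ℂ) = 0 := by rw [← this]; simp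
    exact_mod_cast h
  obtain ⟨k, hk, hk2⟩ := ha.shift 1 (fun n hn => by
    have : n = 0 := by omega
    rw [this, ha0])
  obtain ⟨K, hK, hK2⟩ := hk.sum_roots (p := 2) (by norm_num) (ζ := -1) (IsPrimitiveRoot.neg_one 0 (by norm_num))
  have hH := (t_intHol.const_mul (2 ^ 12)).add hK
  have hinv : ModInv (fun τ => u1 τ + u2 τ + u3 τ) := by
    intro τ hτ
    constructor
    · simp only [u1_T, u2_T, u3_T]; ring
    · simp only [u1_S hτ, u2_S hτ, u3_S hτ]; ring
  suffices h : ∀ τ : ℂ, 0 < τ.im → u1 τ + u2 τ + u3 τ = _ from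
    (const_of_intHol hH hinv h).imp fun c hc => hc.2
  · intro τ hτ
    have hw := norm_ex_lt_one (im_div_two hτ)
    have h0 := ex_ne_zero (τ / 2)
    have h1 := hk2 _ hw
    have h2 := hk2 (-ex (τ / 2)) (by simpa using hw)
    have h3 := hK2 _ hw
    rw [← ex_half_sq, Finset.sum_range_succ, Finset.sum_range_one, pow_zero, pow_one, one_mul,
      neg_one_mul] at h3
    simp only [u1_q hτ, u2_q hτ, u3_q hτ, ← h3]
    push_cast
    field_simp
    push_cast at h1 h2
    linear_combination h1 - h2

/-- The constant value (in fact `-48`) of `u1 + u2 + u3`. -/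
def cc : ℤ := Classical.choose exists_cc

lemma u_sum {τ : ℂ} (hτ : 0 < τ.im) : u1 τ + u2 τ + u3 τ = cc :=
  Classical.choose_spec exists_cc τ hτ

/-- The modular function `J` as a function of the nome; up to sign it is the second elementary
symmetric function of `u1`, `u2`, `u3`. -/
def Jq (z : ℂ) : ℂ := (t z)⁻¹ + (2 ^ 24 * t z ^ 2 - cc * 2 ^ 12 * t z)

/-- A modular function for the full modular group, with a simple pole at the cusp. -/
def J (τ : ℂ) : ℂ := Jq (ex τ)

lemma J_eq {τ : ℂ} (hτ : 0 < τ.im) : J τ = -(u1 τ * u2 τ + u1 τ * u3 τ + u2 τ * u3 τ) := by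
  have h1 := u_sum hτ
  have h2 := u_prod hτ
  have h3 := u1_q hτ
  have h4 := t_ne_zero (ex_ne_zero τ) (norm_ex_lt_one hτ)
  have h5 : u2 τ * u3 τ = -(t (ex τ))⁻¹ := by
    rw [eq_neg_iff_add_eq_zero]
    field_simp
    rw [h3] at h2
    have : (2 : ℂ) ^ 12 * (t (ex τ) * u2 τ * u3 τ + 1) = 0 := by linear_combination h2
    have := (mul_eq_zero.1 this).resolve_left (by norm_num)
    linear_combination this
  have h6 : u1 τ * u2 τ + u1 τ * u3 τ = u1 τ * (cc - u1 τ) := by rw [← h1]; ring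
  rw [h6, h5, h3, J, Jq]; ring

lemma J_inv : ModInv J := by
  intro τ hτ
  have h1 : 0 < (τ + 1).im := by simpa using hτ
  constructor
  · rw [J_eq h1, J_eq hτ, u1_T, u2_T, u3_T]; ring
  · rw [J_eq (im_neg_one_div hτ), J_eq hτ, u1_S hτ, u2_S hτ, u3_S hτ]; ring

/-- The regular part `z * Jq z`. -/
def kJ (z : ℂ) : ℂ := gi z ^ 24 + z * (2 ^ 24 * t z ^ 2 - cc * 2 ^ 12 * t z)

lemma kJ_intHol : IntHol kJ := by
  have h := (gi_intHol.pow 24).add ((intHol_pow 1).mul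
    (((t_intHol.pow 2).const_mul (2 ^ 24)).sub (t_intHol.const_mul (cc * 2 ^ 12))))
  refine h.congr fun z _ => ?_
  simp only [kJ]; push_cast; ring

lemma kJ_zero : kJ 0 = 1 := by simp [kJ, gi_zero]

lemma kJ_eq {z : ℂ} (hz0 : z ≠ 0) (hz : ‖z‖ < 1) : z * Jq z = kJ z := by
  have h1 := g_mul_gi hz
  have h2 := g_ne_zero hz
  have h3 : gi z = (g z)⁻¹ := eq_inv_of_mul_eq_one_right h1
  rw [Jq, kJ, mul_add, h3]
  congr 1
  rw [t]; field_simp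

lemma J_mul_ex {τ : ℂ} (hτ : 0 < τ.im) : ex τ * J τ = kJ (ex τ) :=
  kJ_eq (ex_ne_zero τ) (norm_ex_lt_one hτ)

lemma J_differentiableOn : DifferentiableOn ℂ J {z | 0 < z.im} := by
  have h := (differentiableOn_comp_ex kJ_intHol).div differentiable_ex.differentiableOn
    (fun τ _ => ex_ne_zero τ)
  refine h.congr fun τ hτ => ?_
  rw [Pi.div_apply, eq_div_iff (ex_ne_zero τ), mul_comm]; exact J_mul_ex hτ

end XiOne

namespace XiOne

open Filter Topology Metric

lemma norm_t_le {z : ℂ} {r : ℝ} (hz : ‖z‖ ≤ r) (hr : r < 1) :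
    ‖t z‖ ≤ Real.exp (24 * (r / (1 - r))) := by
  rw [t, norm_mul, norm_pow, show (24 : ℝ) * (r / (1 - r)) = ((24 : ℕ) : ℝ) * (r / (1 - r)) by
    norm_num, Real.exp_nat_mul]
  calc ‖z‖ * ‖g z‖ ^ 24 ≤ 1 * Real.exp (r / (1 - r)) ^ 24 := by
        gcongr
        · exact hz.trans hr.le
        · exact g_norm_le hz hr
    _ = _ := one_mul _

lemma t_inv_eq {z : ℂ} (hz : ‖z‖ < 1) : (t z)⁻¹ = gi z ^ 24 / z := by
  have h3 : gi z = (g z)⁻¹ := eq_inv_of_mul_eq_one_right (g_mul_gi hz)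
  rw [t, h3, mul_inv, inv_pow, div_eq_mul_inv, mul_comm]

/-- The size of `J` in terms of the height of the point. -/
lemma exists_J_growth : ∃ C : ℝ, 1 ≤ C ∧ ∀ τ : ℂ, 0 < τ.im →
    ‖J τ‖ ≤ Real.exp (C * (1 + τ.im + 1 / τ.im)) := by
  set A : ℝ := 2 ^ 24 + |(cc : ℝ)| * 2 ^ 12 with hA
  have hA0 : 0 ≤ A := by positivity
  refine ⟨A + 48, by linarith, fun τ hτ => ?_⟩
  set y := τ.im
  set r := ‖ex τ‖ with hr
  have hr1 : r < 1 := norm_ex_lt_one hτ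
  have hrpos : 0 < r := norm_pos_iff.2 (ex_ne_zero τ)
  have hpi := Real.pi_gt_three
  have hpi4 := Real.pi_lt_four
  have hrexp : r = Real.exp (-(2 * Real.pi * y)) := norm_ex τ
  have hx : 0 < 2 * Real.pi * y := by positivity
  have hρ : r / (1 - r) ≤ 1 / y := by
    have h1 : r * (2 * Real.pi * y + 1) ≤ 1 := by
      calc r * (2 * Real.pi * y + 1) ≤ r * Real.exp (2 * Real.pi * y) := by
            gcongr; exact Real.add_one_le_exp _
        _ = 1 := by rw [hrexp, ← Real.exp_add]; simp
    rw [div_le_div_iff₀ (by linarith) hτ]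
    have : 0 < r * y := by positivity
    nlinarith
  have ht := norm_t_le (z := ex τ) le_rfl hr1
  have ht2 : ‖t (ex τ)‖ ≤ Real.exp (24 * (1 / y)) :=
    ht.trans (Real.exp_le_exp.2 (by linarith))
  have ht1 : 1 ≤ Real.exp (24 * (1 / y)) := Real.one_le_exp (by positivity)
  have h1 : ‖(t (ex τ))⁻¹‖ ≤ Real.exp (24 * (1 / y) + 8 * y) := by
    rw [t_inv_eq hr1, norm_div, norm_pow, Real.exp_add, div_eq_mul_inv]
    gcongr
    · rw [show (24 : ℝ) * (1 / y) = ((24 : ℕ) : ℝ) * (1 / y) by norm_num, Real.exp_nat_mul]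
      gcongr
      exact (gi_norm_le le_rfl hr1).trans (Real.exp_le_exp.2 hρ)
    · rw [← hr, hrexp, ← Real.exp_neg, neg_neg]
      exact Real.exp_le_exp.2 (by nlinarith)
  have h2 : ‖(2 ^ 24 * t (ex τ) ^ 2 - cc * 2 ^ 12 * t (ex τ) : ℂ)‖ ≤
      A * Real.exp (24 * (1 / y)) ^ 2 := by
    calc _ ≤ ‖(2 ^ 24 * t (ex τ) ^ 2 : ℂ)‖ + ‖(cc * 2 ^ 12 * t (ex τ) : ℂ)‖ := norm_sub_le _ _
      _ = 2 ^ 24 * ‖t (ex τ)‖ ^ 2 + |(cc : ℝ)| * 2 ^ 12 * ‖t (ex τ)‖ := by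
        simp [Complex.norm_intCast]
      _ ≤ 2 ^ 24 * Real.exp (24 * (1 / y)) ^ 2
          + |(cc : ℝ)| * 2 ^ 12 * Real.exp (24 * (1 / y)) ^ 2 := by
        gcongr
        exact ht2.trans (by nlinarith)
      _ = _ := by rw [hA]; ring
  have h3 : Real.exp (24 * (1 / y)) ^ 2 ≤ Real.exp (48 * (1 / y) + 8 * y) := by
    rw [← Real.exp_nat_mul]
    refine Real.exp_le_exp.2 ?_
    push_cast; nlinarith
  have h4 : Real.exp (24 * (1 / y) + 8 * y) ≤ Real.exp (48 * (1 / y) + 8 * y) := by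
    refine Real.exp_le_exp.2 ?_
    have : 0 < 1 / y := by positivity
    linarith
  calc ‖J τ‖ ≤ ‖(t (ex τ))⁻¹‖ + ‖(2 ^ 24 * t (ex τ) ^ 2 - cc * 2 ^ 12 * t (ex τ) : ℂ)‖ :=
        norm_add_le _ _
    _ ≤ Real.exp (48 * (1 / y) + 8 * y) + A * Real.exp (48 * (1 / y) + 8 * y) := by
        gcongr
        · exact h1.trans h4
        · exact h2.trans (by gcongr)
    _ = (A + 1) * Real.exp (48 * (1 / y) + 8 * y) := by ring
    _ ≤ Real.exp A * Real.exp (48 * (1 / y) + 8 * y) := by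
        gcongr; exact Real.add_one_le_exp A
    _ = Real.exp (A + (48 * (1 / y) + 8 * y)) := (Real.exp_add _ _).symm
    _ ≤ _ := by
        refine Real.exp_le_exp.2 ?_
        have : 0 < 1 / y := by positivity
        nlinarith [mul_nonneg hA0 hτ.le, mul_nonneg hA0 this.le]

lemma exists_im_bound {δ : ℝ} (hδ : 0 < δ) : ∃ A : ℝ, ∀ τ : ℂ, A ≤ τ.im → ‖ex τ‖ < δ := by
  refine ⟨max 1 (-Real.log δ), fun τ hτ => ?_⟩
  have h1 := (le_max_left _ _).trans hτ
  have h2 := (le_max_right _ _).trans hτ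
  rw [norm_ex, ← Real.lt_log_iff_exp_lt hδ]
  nlinarith [Real.pi_gt_three]

/-- `J` is surjective: otherwise `1 / (J - c)` would be a nonzero modular invariant function
vanishing at the cusp. -/
lemma J_surj (c : ℂ) : ∃ τ : ℂ, 0 < τ.im ∧ J τ = c := by
  by_contra hcon
  push Not at hcon
  have hne : ∀ τ : ℂ, 0 < τ.im → J τ - c ≠ 0 := fun τ hτ => sub_ne_zero.2 (hcon τ hτ)
  have hcont : ContinuousAt (fun z => kJ z - c * z) 0 := by
    have : ContinuousAt kJ 0 :=
      (kJ_intHol.differentiableOn.differentiableAt (ball_mem_nhds _ one_pos)).continuousAt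
    fun_prop
  have h0 : kJ 0 - c * 0 = 1 := by rw [kJ_zero]; ring
  obtain ⟨δ, hδ, hδ2⟩ := Metric.continuousAt_iff.1 hcont (1 / 2) (by norm_num)
  have hlow : ∀ z : ℂ, ‖z‖ < δ → 1 / 2 ≤ ‖kJ z - c * z‖ := by
    intro z hz
    have := hδ2 (x := z) (by simpa using hz)
    rw [h0, dist_eq_norm] at this
    have h2 := norm_sub_norm_le (1 : ℂ) (1 - (kJ z - c * z))
    rw [← norm_neg, neg_sub] at this
    simp only [sub_sub_cancel, norm_one] at h2
    linarith
  have hbd : ∀ τ : ℂ, 0 < τ.im → ‖ex τ‖ < δ → ‖(J τ - c)⁻¹‖ ≤ 2 * ‖ex τ‖ := by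
    intro τ hτ hlt
    have h1 : ex τ * (J τ - c) = kJ (ex τ) - c * ex τ := by rw [← J_mul_ex hτ]; ring
    have h2 := hlow _ hlt
    rw [← h1, norm_mul] at h2
    rw [norm_inv, inv_le_iff_one_le_mul₀ (norm_pos_iff.2 (hne τ hτ))]
    linarith
  obtain ⟨A, hA⟩ := exists_im_bound hδ
  obtain ⟨d, hd⟩ := const_of_inv (f := fun τ => (J τ - c)⁻¹) (A := A) (B := 2)
    ((J_differentiableOn.sub_const c).inv fun τ hτ => hne τ hτ)
    (fun τ hτ => ⟨by simp only [(J_inv τ hτ).1], by simp only [(J_inv τ hτ).2]⟩)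
    (fun τ hτ hAτ => (hbd τ hτ (hA τ hAτ)).trans (by
      have := (norm_ex_lt_one hτ).le
      linarith))
  have hd0 : d ≠ 0 := by
    rw [← hd Complex.I (by simp)]
    exact inv_ne_zero (hne _ (by simp))
  obtain ⟨A', hA'⟩ := exists_im_bound (δ := ‖d‖ / 2) (by positivity)
  let τ : ℂ := (max (max A A') 1 : ℝ) * Complex.I
  have him : τ.im = max (max A A') 1 := by simp [τ]
  have hτ : 0 < τ.im := by rw [him]; positivity
  have h1 := hbd τ hτ (hA τ (by rw [him]; exact (le_max_left A A').trans (le_max_left _ _)))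
  have h2 := hA' τ (by rw [him]; exact (le_max_right A A').trans (le_max_left _ _))
  have h3 : (J τ - c)⁻¹ = d := hd τ hτ
  rw [h3] at h1
  linarith

/-- A modular invariant function with an integral expansion and a pole of order at most `m` at the
cusp is an integral polynomial in `J`. -/
lemma poly_in_J (m : ℕ) : ∀ {f h : ℂ → ℂ}, IntHol h → ModInv f →
    (∀ τ : ℂ, 0 < τ.im → ex τ ^ m * f τ = h (ex τ)) →
    ∃ Q : Polynomial ℤ, ∀ τ : ℂ, 0 < τ.im → f τ = Polynomial.aeval (J τ) Q := by
  induction m with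
  | zero =>
    intro f h hh hf hfh
    obtain ⟨c, -, hc⟩ := const_of_intHol hh hf (fun τ hτ => by simpa using hfh τ hτ)
    exact ⟨Polynomial.C c, fun τ hτ => by simp [hc τ hτ]⟩
  | succ m ih =>
    intro f h hh hf hfh
    obtain ⟨a, ha⟩ := hh
    obtain ⟨b, hb⟩ := (show IntHol h from ⟨a, ha⟩).sub ((kJ_intHol.pow (m + 1)).const_mul (a 0))
    have hb0 : b 0 = 0 := by
      have h1 := hb.apply_zero
      simp only [kJ_zero, ha.apply_zero] at h1
      have h : ((b 0 : ℤ) : ℂ) = 0 := by rw [← h1]; simp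
      exact_mod_cast h
    obtain ⟨k, hk, hk2⟩ := hb.shift 1 (fun n hn => by
      have : n = 0 := by omega
      rw [this, hb0])
    obtain ⟨Q, hQ⟩ := ih (f := fun τ => f τ - a 0 * J τ ^ (m + 1)) ⟨_, hk⟩
      (fun τ hτ => by simp only [(hf τ hτ).1, (hf τ hτ).2, (J_inv τ hτ).1, (J_inv τ hτ).2,
        and_self])
      (fun τ hτ => by
        have h1 := hk2 _ (norm_ex_lt_one hτ)
        rw [← hfh τ hτ, ← J_mul_ex hτ, pow_one] at h1
        refine mul_left_cancel₀ (ex_ne_zero τ) ?_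
        rw [← h1]; ring)
    refine ⟨Q + Polynomial.C (a 0) * Polynomial.X ^ (m + 1), fun τ hτ => ?_⟩
    have := hQ τ hτ
    simp [← this]

/-! ### The modular polynomial of prime level -/

lemma J_add_int {τ : ℂ} (hτ : 0 < τ.im) (m : ℤ) : J (τ + m) = J τ := by
  have := J_inv.transform (a := 1) (b := m) (c := 0) (d := 1) (by norm_num) hτ
  simpa using this

section Level

variable (p : ℕ) [hp : Fact p.Prime]

/-- The point whose `J`-value is the conjugate with index `i`: `p τ` or `(τ + b) / p`. -/
def cpt (i : Option (ZMod p)) (τ : ℂ) : ℂ := i.elim (p * τ) (fun b => (τ + (b.val : ℂ)) / p)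

/-- The `p + 1` conjugates of `J (p τ)` over the field of modular functions. -/
def Jc (i : Option (ZMod p)) (τ : ℂ) : ℂ := J (cpt p i τ)

lemma im_nat_mul {p : ℕ} (τ : ℂ) : ((p : ℂ) * τ).im = p * τ.im := by simp

lemma im_div_nat {p : ℕ} (τ : ℂ) : (τ / (p : ℂ)).im = τ.im / p := by
  rw [← Complex.ofReal_natCast, Complex.div_ofReal_im]

lemma im_cpt_pos (i : Option (ZMod p)) {τ : ℂ} (hτ : 0 < τ.im) : 0 < (cpt p i τ).im := by
  have hp0 : (0 : ℝ) < p := by exact_mod_cast hp.out.pos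
  rcases i with _ | b
  · simp only [cpt, Option.elim, im_nat_mul]; positivity
  · simp only [cpt, Option.elim, im_div_nat]
    have : (τ + (b.val : ℂ)).im = τ.im := by rw [Complex.add_im, Complex.natCast_im, add_zero]
    rw [this]; positivity

lemma J_div_eq {τ : ℂ} (hτ : 0 < τ.im) (n : ℤ) : J ((τ + n) / p) = Jc p (some (n : ZMod p)) τ := by
  have hp0 : (p : ℂ) ≠ 0 := by exact_mod_cast hp.out.ne_zero
  have h1 : ((n : ZMod p).val : ℤ) ≡ n [ZMOD p] := by
    rw [← ZMod.intCast_eq_intCast_iff]; simp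
  obtain ⟨m, hm⟩ := h1.dvd
  have h2 : (τ + n) / p = cpt p (some (n : ZMod p)) τ + m := by
    simp only [cpt, Option.elim]
    have : (n : ℂ) = ((n : ZMod p).val : ℂ) + p * m := by
      have h3 : n = ((n : ZMod p).val : ℤ) + p * m := by linarith
      have h4 := congrArg (Int.cast : ℤ → ℂ) h3
      push_cast at h4
      exact h4
    rw [this]; field_simp; ring
  rw [h2, J_add_int (im_cpt_pos p _ hτ), Jc]

lemma Jc_T (i : Option (ZMod p)) {τ : ℂ} (hτ : 0 < τ.im) :
    Jc p i (τ + 1) = Jc p (Equiv.optionCongr (Equiv.addRight (1 : ZMod p)) i) τ := by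
  rcases i with _ | b
  · simp only [Jc, cpt, Option.elim, Equiv.optionCongr_apply, Option.map_none]
    rw [mul_add, mul_one]
    have := J_add_int (τ := p * τ) (im_cpt_pos p none hτ) p
    simpa using this
  · simp only [Equiv.optionCongr_apply, Option.map_some, Equiv.coe_addRight]
    have := J_div_eq p hτ (b.val + 1)
    push_cast at this
    rw [ZMod.natCast_zmod_val] at this
    rw [← this, Jc]
    simp only [cpt, Option.elim]
    congr 1; ring

/-- The permutation of the conjugates induced by `τ ↦ -1 / τ`. -/
def permS : Option (ZMod p) → Option (ZMod p)
  | none => some 0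
  | some b => if b = 0 then none else some (-b⁻¹)

lemma permS_invol : Function.Involutive (permS p) := by
  intro i
  rcases i with _ | b
  · simp [permS]
  · by_cases hb : b = 0
    · simp [permS, hb]
    · simp [permS, hb, inv_neg]

lemma Jc_S (i : Option (ZMod p)) {τ : ℂ} (hτ : 0 < τ.im) :
    Jc p i (-1 / τ) = Jc p (permS p i) τ := by
  have hp0 : (p : ℂ) ≠ 0 := by exact_mod_cast hp.out.ne_zero
  have h0 : τ ≠ 0 := fun h => by simp [h] at hτ
  rcases i with _ | b
  · have h1 := (J_inv (cpt p (some 0) τ) (im_cpt_pos p _ hτ)).2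
    simp only [permS, Jc]
    rw [← h1]; congr 1
    simp only [cpt, Option.elim, ZMod.val_zero]
    field_simp; simp [h0]
  · by_cases hb : b = 0
    · have h1 := (J_inv (cpt p none τ) (im_cpt_pos p _ hτ)).2
      simp only [permS, Jc, hb, if_true]
      rw [← h1]; congr 1
      simp only [cpt, Option.elim, ZMod.val_zero]
      field_simp; simp
    · simp only [permS, hb, if_false]
      set b' : ZMod p := -b⁻¹ with hb'
      have h1 : ((b.val * b'.val + 1 : ℕ) : ZMod p) = 0 := by
        push_cast
        rw [ZMod.natCast_zmod_val, ZMod.natCast_zmod_val, hb', mul_neg, mul_inv_cancel₀ hb]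
        ring
      obtain ⟨c, hc⟩ := (ZMod.natCast_eq_zero_iff _ _).1 h1
      have hcZ : (b.val : ℤ) * b'.val + 1 = p * c := by exact_mod_cast hc
      have hcC : (b.val : ℂ) * b'.val + 1 = p * c := by exact_mod_cast hc
      have h2 := J_inv.transform (a := b.val) (b := -c) (c := p) (d := -b'.val)
        (by linarith) (im_cpt_pos p (some b') hτ)
      rw [Jc, Jc, ← h2]; congr 1
      have h3 : (((p : ℤ) : ℂ) * cpt p (some b') τ + ((-(b'.val : ℤ) : ℤ) : ℂ)) = τ := by
        simp only [cpt, Option.elim]; push_cast; field_simp; ring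
      rw [h3]
      simp only [cpt, Option.elim]; push_cast
      field_simp
      linear_combination -hcC

/-- The power sums of the conjugates. -/
def Jpow (k : ℕ) (τ : ℂ) : ℂ := ∑ i, Jc p i τ ^ k

lemma Jpow_inv (k : ℕ) : ModInv (Jpow p k) := by
  intro τ hτ
  constructor
  · simp only [Jpow, Jc_T p _ hτ]
    exact Equiv.sum_comp (Equiv.optionCongr (Equiv.addRight (1 : ZMod p)))
      (fun i => Jc p i τ ^ k)
  · simp only [Jpow, Jc_S p _ hτ]
    exact Equiv.sum_comp (permS_invol p).toPerm (fun i => Jc p i τ ^ k)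

lemma isPrimitiveRoot_ex : IsPrimitiveRoot (ex (1 / p)) p := by
  have := Complex.isPrimitiveRoot_exp p hp.out.ne_zero
  convert this using 1
  rw [ex]; congr 1; ring

lemma Jpow_eq_poly (k : ℕ) :
    ∃ Q : Polynomial ℤ, ∀ τ : ℂ, 0 < τ.im → Jpow p k τ = Polynomial.aeval (J τ) Q := by
  have hp0 : (p : ℂ) ≠ 0 := by exact_mod_cast hp.out.ne_zero
  obtain ⟨a, ha⟩ := kJ_intHol.pow k
  have hA := ha.comp_pow hp.out.pos
  obtain ⟨b, hb⟩ := (intHol_pow (p * p * k - k)).mul (kJ_intHol.pow k)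
  obtain ⟨K, hK, hK2⟩ := hb.sum_roots hp.out.pos (isPrimitiveRoot_ex p)
  refine poly_in_J (p * k) (hA.add hK) (Jpow_inv p k) fun τ hτ => ?_
  have hw := norm_ex_lt_one (τ := τ / p) (by
    have := im_cpt_pos p (some 0) hτ
    simpa [cpt] using this)
  have hwp : ex (τ / p) ^ p = ex τ := by
    rw [← ex_nat_mul]; congr 1; field_simp
  have h1 := hK2 _ hw
  rw [hwp] at h1
  rw [← h1, Jpow, Fintype.sum_option, mul_add]
  congr 1
  · have h2 := J_mul_ex (im_cpt_pos p none hτ)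
    simp only [cpt, Option.elim, ex_nat_mul] at h2
    rw [← h2, mul_pow, ← pow_mul]; rfl
  · rw [Finset.mul_sum, Finset.sum_range]
    obtain ⟨q, rfl⟩ : ∃ q, p = q + 1 := ⟨p - 1, (Nat.succ_pred_prime hp.out).symm⟩
    refine Finset.sum_congr rfl fun b _ => ?_
    have h3 : ex (1 / ((q + 1 : ℕ) : ℂ)) ^ (ZMod.val b) * ex (τ / ((q + 1 : ℕ) : ℂ))
        = ex (cpt (q + 1) (some b) τ) := by
      rw [← ex_nat_mul, ← ex_add]
      simp only [cpt, Option.elim]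
      congr 1; field_simp; ring
    have h4 : ex (cpt (q + 1) (some b) τ) ^ (q + 1) = ex τ := by
      rw [← ex_nat_mul]
      simp only [cpt, Option.elim]
      rw [mul_div_cancel₀ _ hp0, ex_add]
      have : ex (ZMod.val b : ℂ) = 1 := by
        have := ex_nat_mul (ZMod.val b) 1
        rwa [mul_one, ex_one, one_pow] at this
      rw [this, mul_one]
    have h5 := J_mul_ex (im_cpt_pos (q + 1) (some b) hτ)
    change _ = (ex (1 / ((q + 1 : ℕ) : ℂ)) ^ (ZMod.val b) * ex (τ / ((q + 1 : ℕ) : ℂ)))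
      ^ ((q + 1) * (q + 1) * k - k) * _ ^ k
    change _ = _ * kJ (ex (1 / ((q + 1 : ℕ) : ℂ)) ^ (ZMod.val b) * _) ^ k
    have h6 : (q + 1) * (q + 1) * k = (q + 1) * ((q + 1) * k) := by ring
    rw [h3, ← h5, mul_pow, ← mul_assoc, ← pow_add, Nat.sub_add_cancel, h6,
      pow_mul (ex (cpt (q + 1) (some b) τ)), h4]
    · rfl
    · nlinarith [Nat.zero_le k, Nat.zero_le (q * k), Nat.zero_le (q * q * k)]

end Level

/-- A polynomial in `J` whose pole at `i∞` has order at most `d` has degree at most `d`. -/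
lemma natDegree_le_of_growth {R : Polynomial ℤ} {d : ℕ} {A C : ℝ}
    (h : ∀ τ : ℂ, 0 < τ.im → A ≤ τ.im → ‖Polynomial.aeval (J τ) R‖ * ‖ex τ‖ ^ d ≤ C) :
    R.natDegree ≤ d := by
  by_contra hcon
  push Not at hcon
  set n := R.natDegree with hn
  have hR : R ≠ 0 := by rintro rfl; simp at hn; omega
  set k : ℂ → ℂ := fun z => ∑ i ∈ Finset.range (n + 1), (R.coeff i : ℂ) * (z ^ (n - i) * kJ z ^ i)
    with hk
  have hkc : ContinuousAt kJ 0 :=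
    (kJ_intHol.differentiableOn.continuousOn).continuousAt (ball_mem_nhds _ one_pos)
  have hcont : ContinuousAt k 0 := by
    simp only [hk]
    fun_prop
  have hk0 : k 0 = R.leadingCoeff := by
    simp only [hk]
    rw [Finset.sum_eq_single n]
    · simp [kJ_zero, hn]
    · intro i hi hin
      have : n - i ≠ 0 := by have := Finset.mem_range.1 hi; omega
      simp [this]
    · simp
  have hlim : Tendsto (fun z : ℂ => C * ‖z‖ ^ (n - d)) (𝓝[≠] 0) (𝓝 0) := by
    have : ContinuousAt (fun z : ℂ => C * ‖z‖ ^ (n - d)) 0 := by fun_prop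
    have h2 := this.tendsto.mono_left (nhdsWithin_le_nhds (s := {0}ᶜ))
    have h3 : n - d ≠ 0 := by omega
    simpa [h3] using h2
  have hk1 : Tendsto (fun z => ‖k z‖) (𝓝[≠] 0) (𝓝 ‖(R.leadingCoeff : ℂ)‖) := by
    rw [← hk0]
    exact (hcont.norm.tendsto).mono_left nhdsWithin_le_nhds
  have hle : ∀ᶠ z in 𝓝[≠] (0 : ℂ), ‖k z‖ ≤ C * ‖z‖ ^ (n - d) := by
    have hb : ∀ᶠ z in 𝓝[≠] (0 : ℂ), z ∈ ball (0 : ℂ) 1 ∩ ball 0 (Real.exp (-(2 * Real.pi * A))) :=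
      nhdsWithin_le_nhds (inter_mem (ball_mem_nhds _ one_pos) (ball_mem_nhds _ (Real.exp_pos _)))
    filter_upwards [hb, self_mem_nhdsWithin] with z hz hz0
    simp only [Set.mem_inter_iff, mem_ball, dist_zero_right] at hz
    obtain ⟨τ, hτ, rfl⟩ := exists_ex_eq hz0 hz.1
    have hA : A ≤ τ.im := by
      have h1 := hz.2
      rw [norm_ex, Real.exp_lt_exp] at h1
      have := Real.pi_pos
      nlinarith
    have h2 : k (ex τ) = Polynomial.aeval (J τ) R * ex τ ^ n := by
      simp only [hk]
      rw [Polynomial.aeval_eq_sum_range, Finset.sum_mul]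
      refine Finset.sum_congr rfl fun i hi => ?_
      have hi' : i ≤ n := by have := Finset.mem_range.1 hi; omega
      rw [← J_mul_ex hτ, mul_pow, zsmul_eq_mul]
      have : ex τ ^ n = ex τ ^ (n - i) * ex τ ^ i := by rw [← pow_add, Nat.sub_add_cancel hi']
      rw [this]; ring
    have h3 : ex τ ^ n = ex τ ^ d * ex τ ^ (n - d) := by
      rw [← pow_add, Nat.add_sub_cancel' hcon.le]
    rw [h2, h3, norm_mul, norm_mul, norm_pow, norm_pow, ← mul_assoc]
    exact mul_le_mul_of_nonneg_right (h τ hτ hA) (by positivity)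
  have := le_of_tendsto_of_tendsto hk1 hlim hle
  rw [norm_le_zero_iff] at this
  have h5 : R.leadingCoeff = 0 := by exact_mod_cast this
  exact hR (Polynomial.leadingCoeff_eq_zero.1 h5)

section Level

variable (p : ℕ) [hp : Fact p.Prime]

/-- The elementary symmetric functions of the conjugates. -/
def Jsym (k : ℕ) (τ : ℂ) : ℂ :=
  MvPolynomial.aeval (fun i => Jc p i τ) (MvPolynomial.esymm (Option (ZMod p)) ℤ k)

/-- By Newton's identities `k! e_k` is a polynomial in `J` with integer coefficients. -/
lemma Jsym_eq_poly (k : ℕ) : ∃ R : Polynomial ℤ, ∀ τ : ℂ, 0 < τ.im →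
    (k.factorial : ℂ) * Jsym p k τ = Polynomial.aeval (J τ) R := by
  induction k using Nat.strong_induction_on with
  | _ k ih =>
    rcases k with _ | k
    · exact ⟨1, fun τ _ => by simp [Jsym]⟩
    choose! R hR using ih
    choose Q hQ using Jpow_eq_poly p
    refine ⟨(-1) ^ (k + 2) * ∑ a ∈ Finset.HasAntidiagonal.antidiagonal (k + 1) with a.1 < k + 1,
      (-1) ^ a.1 * (((k.factorial / a.1.factorial : ℕ) : Polynomial ℤ) * R a.1) * Q a.2,
      fun τ hτ => ?_⟩
    have h1 := congrArg (MvPolynomial.aeval (fun i => Jc p i τ))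
      (MvPolynomial.mul_esymm_eq_sum (Option (ZMod p)) ℤ (k + 1))
    simp only [map_mul, map_sum, map_pow, map_neg, map_one, map_natCast] at h1 ⊢
    rw [Nat.factorial_succ]
    have h2 : (((k + 1) * k.factorial : ℕ) : ℂ) * Jsym p (k + 1) τ
        = (k.factorial : ℂ) * (((k + 1 : ℕ) : ℂ) * Jsym p (k + 1) τ) := by push_cast; ring
    rw [h2, Jsym, h1, mul_left_comm, Finset.mul_sum]
    congr 1
    refine Finset.sum_congr rfl fun a ha => ?_
    have ha1 : a.1 < k + 1 := (Finset.mem_filter.1 ha).2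
    rw [← hR a.1 ha1 τ hτ, ← hQ a.2 τ hτ]
    have h3 : (k.factorial : ℂ) = ((k.factorial / a.1.factorial : ℕ) : ℂ) * (a.1.factorial : ℂ) := by
      exact_mod_cast (Nat.div_mul_cancel (Nat.factorial_dvd_factorial (Nat.lt_succ_iff.1 ha1))).symm
    have h4 : MvPolynomial.aeval (fun i => Jc p i τ) (MvPolynomial.psum (Option (ZMod p)) ℤ a.2)
        = Jpow p a.2 τ := by simp [MvPolynomial.psum, Jpow]
    rw [h4, h3, Jsym]; ring

lemma norm_ex_cpt_some (b : ZMod p) (τ : ℂ) :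
    ‖ex (cpt p (some b) τ)‖ ^ p = ‖ex τ‖ := by
  have hp0 : (p : ℝ) ≠ 0 := by exact_mod_cast hp.out.ne_zero
  rw [norm_ex, norm_ex, ← Real.exp_nat_mul]
  congr 1
  simp only [cpt, Option.elim, im_div_nat]
  rw [Complex.add_im, Complex.natCast_im, add_zero]
  field_simp

lemma Jsym_growth (k : ℕ) : ∃ A C : ℝ, ∀ τ : ℂ, 0 < τ.im → A ≤ τ.im →
    ‖Jsym p k τ‖ * ‖ex τ‖ ^ (p + 1) ≤ C := by
  have hp0 : (0 : ℝ) < p := by exact_mod_cast hp.out.pos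
  have hp1 : (1 : ℝ) ≤ p := by exact_mod_cast hp.out.one_le
  obtain ⟨A, B, hAB⟩ := kJ_intHol.bounded_near_zero
  set B' := max B 1
  have hB' : 1 ≤ B' := le_max_right _ _
  refine ⟨p * |A|, ((Finset.powersetCard k (Finset.univ : Finset (Option (ZMod p)))).card : ℝ)
    * B' ^ (p + 1), fun τ hτ hA => ?_⟩
  have hcA : ∀ i, A ≤ (cpt p i τ).im := by
    intro i
    refine (le_abs_self A).trans ?_
    rcases i with _ | b
    · simp only [cpt, Option.elim, im_nat_mul]
      nlinarith [abs_nonneg A]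
    · simp only [cpt, Option.elim, im_div_nat]
      rw [Complex.add_im, Complex.natCast_im, add_zero, le_div_iff₀ hp0]
      linarith
  have hn : ∀ i, 0 < ‖ex (cpt p i τ)‖ := fun i => norm_pos_iff.2 (ex_ne_zero _)
  have h1 : ∀ i, ‖Jc p i τ‖ ≤ B' / ‖ex (cpt p i τ)‖ := by
    intro i
    rw [le_div_iff₀ (hn i), mul_comm, Jc, ← norm_mul, J_mul_ex (im_cpt_pos p i hτ)]
    exact (hAB _ (im_cpt_pos p i hτ) (hcA i)).trans (le_max_left _ _)
  have h2 : ∀ i, 1 ≤ B' / ‖ex (cpt p i τ)‖ := by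
    intro i
    rw [le_div_iff₀ (hn i), one_mul]
    exact (norm_ex_lt_one (im_cpt_pos p i hτ)).le.trans hB'
  have h3 : ∏ i, B' / ‖ex (cpt p i τ)‖ = B' ^ (p + 1) / ‖ex τ‖ ^ (p + 1) := by
    rw [Finset.prod_div_distrib, Finset.prod_const, Finset.card_univ, Fintype.card_option,
      ZMod.card, Fintype.prod_option]
    congr 1
    have h4 : ∀ b : ZMod p, ‖ex (cpt p (some b) τ)‖ = ‖ex (cpt p (some 0) τ)‖ := by
      intro b
      refine (pow_left_inj₀ (norm_nonneg _) (norm_nonneg _) hp.out.ne_zero).1 ?_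
      rw [norm_ex_cpt_some, norm_ex_cpt_some]
    simp only [h4]
    rw [Finset.prod_const, Finset.card_univ, ZMod.card, norm_ex_cpt_some]
    simp only [cpt, Option.elim, ex_nat_mul, norm_pow]
    rw [pow_succ]
  have h5 : ‖Jsym p k τ‖ ≤ (Finset.powersetCard k (Finset.univ : Finset (Option (ZMod p)))).card
      * (B' ^ (p + 1) / ‖ex τ‖ ^ (p + 1)) := by
    rw [Jsym, MvPolynomial.esymm]
    simp only [map_sum, map_prod, MvPolynomial.aeval_X]
    refine (norm_sum_le _ _).trans ?_
    rw [← nsmul_eq_mul]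
    refine Finset.sum_le_card_nsmul _ _ _ fun t _ => ?_
    rw [norm_prod, ← h3]
    calc ∏ i ∈ t, ‖Jc p i τ‖ ≤ ∏ i ∈ t, B' / ‖ex (cpt p i τ)‖ :=
          Finset.prod_le_prod (fun _ _ => norm_nonneg _) fun i _ => h1 i
      _ ≤ ∏ i, B' / ‖ex (cpt p i τ)‖ := by
          rw [← Finset.prod_sdiff (Finset.subset_univ t)]
          refine le_mul_of_one_le_left
            (Finset.prod_nonneg fun i _ => zero_le_one.trans (h2 i)) ?_
          calc (1 : ℝ) = ∏ i ∈ Finset.univ \ t, (1 : ℝ) := by simp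
            _ ≤ _ := Finset.prod_le_prod (fun _ _ => zero_le_one) fun i _ => h2 i
  have h6 : 0 < ‖ex τ‖ ^ (p + 1) := pow_pos (norm_pos_iff.2 (ex_ne_zero _)) _
  rw [mul_div_assoc'] at h5
  rwa [le_div_iff₀ h6] at h5

/-- The modular equation of level `p`, with denominators cleared by `(p + 1)!`. -/
theorem modular_equation : ∃ R : ℕ → Polynomial ℤ,
    R 0 = Polynomial.C ((p + 1).factorial : ℤ) ∧ (∀ j, (R j).natDegree ≤ p + 1) ∧
    ∀ τ : ℂ, 0 < τ.im → ∀ Y : ℂ, ((p + 1).factorial : ℂ) * ∏ i, (Y - Jc p i τ)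
      = ∑ j ∈ Finset.range (p + 2), Polynomial.aeval (J τ) (R j) * Y ^ (p + 1 - j) := by
  choose R hR using Jsym_eq_poly p
  have hdeg : ∀ j, (R j).natDegree ≤ p + 1 := by
    intro j
    obtain ⟨A, C, h⟩ := Jsym_growth p j
    refine natDegree_le_of_growth (A := A) (C := j.factorial * C) fun τ hτ hA => ?_
    rw [← hR j τ hτ, norm_mul, mul_assoc, Complex.norm_natCast]
    exact mul_le_mul_of_nonneg_left (h τ hτ hA) (by positivity)
  refine ⟨fun j => if j = 0 then Polynomial.C ((p + 1).factorial : ℤ) else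
    Polynomial.C ((-1) ^ j * (((p + 1).factorial / j.factorial : ℕ) : ℤ)) * R j,
    by simp, fun j => ?_, fun τ hτ Y => ?_⟩
  · dsimp only
    split_ifs
    · simp
    · exact (Polynomial.natDegree_C_mul_le _ _).trans (hdeg j)
  · have h1 := congrArg (Polynomial.eval Y) (Multiset.prod_X_sub_X_eq_sum_esymm
      (Finset.univ.val.map fun i => Jc p i τ))
    rw [Multiset.map_map] at h1
    change Polynomial.eval Y (∏ i, (Polynomial.X - Polynomial.C (Jc p i τ))) = _ at h1
    rw [Polynomial.eval_prod] at h1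
    have hcard : Multiset.card (Finset.univ.val.map fun i => Jc p i τ) = p + 1 := by
      rw [Multiset.card_map, Finset.card_val, Finset.card_univ, Fintype.card_option, ZMod.card]
    simp only [hcard, Polynomial.eval_sub, Polynomial.eval_X, Polynomial.eval_C,
      Polynomial.eval_finsetSum, Polynomial.eval_mul, Polynomial.eval_pow, Polynomial.eval_neg,
      Polynomial.eval_one] at h1
    rw [h1, Finset.mul_sum]
    refine Finset.sum_congr rfl fun j hj => ?_
    have hj' : j ≤ p + 1 := by have := Finset.mem_range.1 hj; omega
    have h2 : (Finset.univ.val.map fun i => Jc p i τ).esymm j = Jsym p j τ :=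
      (MvPolynomial.aeval_esymm_eq_multiset_esymm (Option (ZMod p)) ℤ j _).symm
    rw [h2]
    dsimp only
    split_ifs with h0
    · subst h0; simp [Jsym]
    · simp only [map_mul, Polynomial.aeval_C]
      rw [← hR j τ hτ]
      have h3 : ((p + 1).factorial : ℂ)
          = (((p + 1).factorial / j.factorial : ℕ) : ℂ) * (j.factorial : ℂ) := by
        exact_mod_cast (Nat.div_mul_cancel (Nat.factorial_dvd_factorial hj')).symm
      generalize (p + 1).factorial / j.factorial = x at h3 ⊢
      rw [h3]
      simp
      ring

end Level

/-! ### Lower bounds for algebraic numbers -/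

/-- Liouville's inequality: the product of the conjugates of a nonzero algebraic integer
is a nonzero integer. -/
lemma one_le_of_conjugates {α : ℂ} (hα : IsIntegral ℤ α) (h0 : α ≠ 0) (S : Finset ℂ) {M : ℝ}
    (hM : 1 ≤ M) (hS : ∀ r ∈ (minpoly ℚ α).rootSet ℂ, r ∈ S) (hSM : ∀ s ∈ S, ‖s‖ ≤ M) :
    1 ≤ ‖α‖ * M ^ S.card := by
  classical
  have hαQ : IsIntegral ℚ α := hα.tower_top
  set f := (minpoly ℚ α).map (algebraMap ℚ ℂ) with hf
  have hmon : f.Monic := (minpoly.monic hαQ).map _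
  have hsplit : f.Splits := IsAlgClosed.splits _
  have hnd : f.roots.Nodup :=
    Polynomial.nodup_roots ((minpoly.irreducible hαQ).separable.map)
  have hc := hsplit.coeff_zero_eq_prod_roots_of_monic hmon
  have h_int : f.coeff 0 = ((minpoly ℤ α).coeff 0 : ℂ) := by
    rw [hf, minpoly.isIntegrallyClosed_eq_field_fractions' ℚ hα]
    simp [Polynomial.coeff_map]
  have hz : (minpoly ℤ α).coeff 0 ≠ 0 := by
    intro h
    have h2 := minpoly.coeff_zero_ne_zero hαQ h0
    rw [minpoly.isIntegrallyClosed_eq_field_fractions' ℚ hα, Polynomial.coeff_map, h] at h2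
    simp at h2
  have h1 : (1 : ℝ) ≤ ‖f.coeff 0‖ := by
    rw [h_int, Complex.norm_intCast]
    exact_mod_cast Int.one_le_abs hz
  have hprod : f.roots.prod = ∏ r ∈ f.roots.toFinset, r := by
    rw [Finset.prod_eq_multiset_prod, Multiset.toFinset_val, hnd.dedup, Multiset.map_id']
  have hroots : ∀ r ∈ f.roots.toFinset, r ∈ (minpoly ℚ α).rootSet ℂ := by
    intro r hr
    rw [Polynomial.mem_rootSet]
    refine ⟨minpoly.ne_zero hαQ, ?_⟩
    have := (Polynomial.mem_roots hmon.ne_zero).1 (Multiset.mem_toFinset.1 hr)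
    rwa [Polynomial.IsRoot, hf, Polynomial.eval_map_algebraMap] at this
  have hαmem : α ∈ f.roots.toFinset := by
    rw [Multiset.mem_toFinset, Polynomial.mem_roots hmon.ne_zero, Polynomial.IsRoot, hf,
      Polynomial.eval_map_algebraMap, minpoly.aeval]
  rw [hc, norm_mul, norm_pow, norm_neg, norm_one, one_pow, one_mul, hprod, norm_prod,
    ← Finset.mul_prod_erase _ _ hαmem] at h1
  refine h1.trans (mul_le_mul_of_nonneg_left ?_ (norm_nonneg _))
  calc ∏ r ∈ f.roots.toFinset.erase α, ‖r‖ ≤ ∏ r ∈ f.roots.toFinset.erase α, M :=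
        Finset.prod_le_prod (fun _ _ => norm_nonneg _) fun r hr =>
          hSM r (hS r (hroots r (Finset.mem_of_mem_erase hr)))
    _ = M ^ (f.roots.toFinset.erase α).card := by rw [Finset.prod_const]
    _ ≤ M ^ S.card := pow_le_pow_right₀ hM (Finset.card_le_card fun r hr =>
          hS r (hroots r (Finset.mem_of_mem_erase hr)))

lemma exists_embedding {α : ℂ} (hα : IsAlgebraic ℚ α) {r : ℂ} (hr : r ∈ (minpoly ℚ α).rootSet ℂ) :
    ∃ σ : algebraicClosure ℚ ℂ →ₐ[ℚ] ℂ, σ ⟨α, mem_algebraicClosure_iff.2 hα⟩ = r := by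
  have : Algebra.IsAlgebraic ℚ (algebraicClosure ℚ ℂ) := algebraicClosure.isAlgebraic ℚ ℂ
  have h := Algebra.IsAlgebraic.range_eval_eq_rootSet_minpoly (F := ℚ) (K := algebraicClosure ℚ ℂ)
    ℂ ⟨α, mem_algebraicClosure_iff.2 hα⟩
  have h2 : minpoly ℚ (⟨α, mem_algebraicClosure_iff.2 hα⟩ : algebraicClosure ℚ ℂ) = minpoly ℚ α :=
    (minpoly.algebraMap_eq (algebraMap (algebraicClosure ℚ ℂ) ℂ).injective _).symm
  rw [h2] at h
  rw [← h] at hr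
  exact hr

lemma exists_denominator {x : ℂ} (hx : IsAlgebraic ℚ x) :
    ∃ d : ℕ, 1 ≤ d ∧ IsIntegral ℤ ((d : ℂ) * x) := by
  have hx' : IsAlgebraic ℤ x := (IsFractionRing.isAlgebraic_iff ℤ ℚ ℂ).2 hx
  obtain ⟨y, hy, h⟩ := hx'.exists_integral_multiple
  refine ⟨y.natAbs, Int.natAbs_pos.2 hy, ?_⟩
  rw [zsmul_eq_mul] at h
  rcases Int.natAbs_eq y with h2 | h2
  · rw [h2] at h; simpa using h
  · rw [h2] at h; simpa using h.neg

lemma isIntegral_natCast' (n : ℕ) : IsIntegral ℤ (n : ℂ) := by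
  simpa using (isIntegral_algebraMap (R := ℤ) (A := ℂ) (x := (n : ℤ)))

lemma isIntegral_intCast' (n : ℤ) : IsIntegral ℤ (n : ℂ) := by
  simpa using (isIntegral_algebraMap (R := ℤ) (A := ℂ) (x := n))

lemma isIntegral_pow_mul_aeval {R : Polynomial ℤ} {n : ℕ} (hR : R.natDegree ≤ n) {d x : ℂ}
    (hd : IsIntegral ℤ d) (hx : IsIntegral ℤ (d * x)) :
    IsIntegral ℤ (d ^ n * Polynomial.aeval x R) := by
  rw [Polynomial.aeval_eq_sum_range' (Nat.lt_succ_of_le hR), Finset.mul_sum]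
  refine IsIntegral.sum _ fun i hi => ?_
  have hi' : i ≤ n := Nat.lt_succ_iff.1 (Finset.mem_range.1 hi)
  have : d ^ n * R.coeff i • x ^ i = (R.coeff i : ℂ) * (d ^ (n - i) * (d * x) ^ i) := by
    rw [mul_pow, zsmul_eq_mul, ← Nat.sub_add_cancel hi', pow_add, Nat.add_sub_cancel]; ring
  rw [this]
  exact (isIntegral_intCast' _).mul ((hd.pow _).mul (hx.pow _))

/-- A root of a polynomial with algebraic integer coefficients becomes integral after
multiplication by the leading coefficient. -/
lemma isIntegral_lead_mul {n : ℕ} (b : ℕ → ℂ) (hb : ∀ j, IsIntegral ℤ (b j)) {y : ℂ}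
    (h : ∑ j ∈ Finset.range (n + 1), b j * y ^ (n - j) = 0) (h0 : b 0 ≠ 0) :
    IsIntegral ℤ (b 0 * y) := by
  set O := integralClosure ℤ ℂ
  set P : Polynomial O := ∑ j ∈ Finset.range (n + 1),
    Polynomial.C (⟨b j, hb j⟩ : O) * Polynomial.X ^ (n - j) with hP
  have hev : Polynomial.aeval y P = 0 := by
    rw [hP]
    simp only [map_sum, map_mul, Polynomial.aeval_C, map_pow, Polynomial.aeval_X]
    exact h
  have hcoeff : P.coeff n = ⟨b 0, hb 0⟩ := by
    rw [hP, Polynomial.finsetSum_coeff, Finset.sum_eq_single 0]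
    · simp
    · intro j hj hj0
      have := Finset.mem_range.1 hj
      rw [Polynomial.coeff_C_mul, Polynomial.coeff_X_pow, if_neg (by omega), mul_zero]
    · simp
  have hdeg : P.natDegree = n := by
    refine Polynomial.natDegree_eq_of_le_of_coeff_ne_zero ?_ ?_
    · rw [hP]
      refine Polynomial.natDegree_sum_le_of_forall_le _ _ fun j _ => ?_
      exact (Polynomial.natDegree_C_mul_X_pow_le _ _).trans (Nat.sub_le _ _)
    · rw [hcoeff]
      intro h; exact h0 (congrArg Subtype.val h)
  have h1 := isIntegral_leadingCoeff_smul P y hev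
  rw [Polynomial.leadingCoeff, hdeg, hcoeff] at h1
  exact isIntegral_trans (R := ℤ) (A := O) _ h1

/-- The value `∑ c i j x ^ i y ^ j` of a bivariate integer polynomial of degree at most `L`
in each variable. -/
def bieval (L : ℕ) (c : ℕ → ℕ → ℤ) (x y : ℂ) : ℂ :=
  ∑ i ∈ Finset.range (L + 1), ∑ j ∈ Finset.range (L + 1), (c i j : ℂ) * x ^ i * y ^ j

lemma norm_bieval_le {L : ℕ} {c : ℕ → ℕ → ℤ} {H A B : ℝ} (hH : ∀ i j, |(c i j : ℝ)| ≤ H)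
    (hH0 : 0 ≤ H) (hA : 1 ≤ A) (hB : 1 ≤ B) {x y : ℂ} (hx : ‖x‖ ≤ A) (hy : ‖y‖ ≤ B) :
    ‖bieval L c x y‖ ≤ ((L : ℝ) + 1) ^ 2 * (H * A ^ L * B ^ L) := by
  rw [bieval]
  have h1 : ∀ i ∈ Finset.range (L + 1), ‖∑ j ∈ Finset.range (L + 1), (c i j : ℂ) * x ^ i * y ^ j‖
      ≤ (L + 1 : ℝ) * (H * A ^ L * B ^ L) := by
    intro i hi
    refine (norm_sum_le _ _).trans ?_
    have h2 : ∀ j ∈ Finset.range (L + 1), ‖(c i j : ℂ) * x ^ i * y ^ j‖ ≤ H * A ^ L * B ^ L := by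
      intro j hj
      rw [norm_mul, norm_mul, norm_pow, norm_pow, Complex.norm_intCast]
      have hi' : i ≤ L := Nat.lt_succ_iff.1 (Finset.mem_range.1 hi)
      have hj' : j ≤ L := Nat.lt_succ_iff.1 (Finset.mem_range.1 hj)
      have h3 : ‖x‖ ^ i ≤ A ^ L :=
        (pow_le_pow_left₀ (norm_nonneg _) hx i).trans (pow_le_pow_right₀ hA hi')
      have h4 : ‖y‖ ^ j ≤ B ^ L :=
        (pow_le_pow_left₀ (norm_nonneg _) hy j).trans (pow_le_pow_right₀ hB hj')
      gcongr
      exact hH i j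
    refine (Finset.sum_le_card_nsmul _ _ _ h2).trans ?_
    simp
  refine (norm_sum_le _ _).trans ((Finset.sum_le_card_nsmul _ _ _ h1).trans ?_)
  simp
  apply le_of_eq; ring

lemma isIntegral_bieval {L : ℕ} (c : ℕ → ℕ → ℤ) {a b x y : ℂ} (ha : IsIntegral ℤ a)
    (hb : IsIntegral ℤ b) (hx : IsIntegral ℤ (a * x)) (hy : IsIntegral ℤ (b * y)) :
    IsIntegral ℤ ((a * b) ^ L * bieval L c x y) := by
  rw [bieval, Finset.mul_sum]
  refine IsIntegral.sum _ fun i hi => ?_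
  rw [Finset.mul_sum]
  refine IsIntegral.sum _ fun j hj => ?_
  have hi' : i ≤ L := Nat.lt_succ_iff.1 (Finset.mem_range.1 hi)
  have hj' : j ≤ L := Nat.lt_succ_iff.1 (Finset.mem_range.1 hj)
  have h1 : a ^ L = a ^ (L - i) * a ^ i := by rw [← pow_add, Nat.sub_add_cancel hi']
  have h2 : b ^ L = b ^ (L - j) * b ^ j := by rw [← pow_add, Nat.sub_add_cancel hj']
  have : (a * b) ^ L * ((c i j : ℂ) * x ^ i * y ^ j)
      = (c i j : ℂ) * ((a ^ (L - i) * (a * x) ^ i) * (b ^ (L - j) * (b * y) ^ j)) := by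
    rw [mul_pow, h1, h2, mul_pow, mul_pow]; ring
  rw [this]
  exact (isIntegral_intCast' _).mul (((ha.pow _).mul (hx.pow _)).mul ((hb.pow _).mul (hy.pow _)))

lemma exists_Jc_growth : ∃ C : ℝ, 1 ≤ C ∧ ∀ (p : ℕ) [Fact p.Prime] (i : Option (ZMod p)) (τ : ℂ),
    0 < τ.im → ‖Jc p i τ‖ ≤ Real.exp (p * (C * (1 + τ.im + 1 / τ.im))) := by
  obtain ⟨C, hC, h⟩ := exists_J_growth
  refine ⟨C, hC, fun p hp i τ hτ => ?_⟩
  refine (h _ (im_cpt_pos p i hτ)).trans (Real.exp_le_exp.2 ?_)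
  have hp1 : (1 : ℝ) ≤ p := by exact_mod_cast hp.out.one_le
  have hp0 : (0 : ℝ) < p := by linarith
  have hi : 0 < 1 / τ.im := by positivity
  have key : 1 + (cpt p i τ).im + 1 / (cpt p i τ).im ≤ p * (1 + τ.im + 1 / τ.im) := by
    rcases i with _ | b
    · simp only [cpt, Option.elim, im_nat_mul]
      have : 1 / (p * τ.im) ≤ 1 / τ.im := by
        apply one_div_le_one_div_of_le hτ; nlinarith
      nlinarith
    · simp only [cpt, Option.elim, im_div_nat]
      rw [Complex.add_im, Complex.natCast_im, add_zero, one_div_div]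
      have h1 : τ.im / p ≤ τ.im := div_le_self hτ.le hp1
      have h2 : p / τ.im = p * (1 / τ.im) := by ring
      rw [h2]; nlinarith
  calc C * (1 + (cpt p i τ).im + 1 / (cpt p i τ).im) ≤ C * (p * (1 + τ.im + 1 / τ.im)) := by
        gcongr
    _ = _ := by ring

lemma Jc_root (p : ℕ) [hp : Fact p.Prime] {R : ℕ → Polynomial ℤ} {j y : ℂ} {τ : ℂ}
    (hτ : 0 < τ.im) (hJ : J τ = j)
    (hR : ∀ τ : ℂ, 0 < τ.im → ∀ Y : ℂ, ((p + 1).factorial : ℂ) * ∏ i, (Y - Jc p i τ)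
      = ∑ j ∈ Finset.range (p + 2), Polynomial.aeval (J τ) (R j) * Y ^ (p + 1 - j))
    (hy : ∑ k ∈ Finset.range (p + 2), Polynomial.aeval j (R k) * y ^ (p + 1 - k) = 0) :
    ∃ i, y = Jc p i τ := by
  subst hJ
  rw [← hR τ hτ y, mul_eq_zero] at hy
  have h0 : ((p + 1).factorial : ℂ) ≠ 0 := by exact_mod_cast (Nat.factorial_ne_zero _)
  have := hy.resolve_left h0
  rw [Finset.prod_eq_zero_iff] at this
  obtain ⟨i, _, hi⟩ := this
  exact ⟨i, sub_eq_zero.1 hi⟩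

lemma factorial_le_exp {p : ℕ} (hp : 2 ≤ p) :
    ((p + 1).factorial : ℝ) ≤ Real.exp (4 * (p * Real.log p)) := by
  have hp2 : (2 : ℝ) ≤ p := by exact_mod_cast hp
  have h1 : ((p + 1).factorial : ℝ) ≤ ((p + 1 : ℕ) : ℝ) ^ (p + 1) := by
    exact_mod_cast Nat.factorial_le_pow (p + 1)
  have h2 : ((p + 1 : ℕ) : ℝ) ≤ (p : ℝ) ^ 2 := by push_cast; nlinarith
  have h3 : ((p : ℝ) ^ 2) ^ (p + 1) = (p : ℝ) ^ (2 * (p + 1)) := by rw [← pow_mul]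
  have h4 : (p : ℝ) ^ (2 * (p + 1)) ≤ (p : ℝ) ^ (4 * p) :=
    pow_le_pow_right₀ (by linarith) (by omega)
  have h5 : Real.exp (4 * (p * Real.log p)) = (p : ℝ) ^ (4 * p) := by
    rw [← Real.rpow_natCast, Real.rpow_def_of_pos (by linarith)]
    congr 1; push_cast; ring
  rw [h5]
  exact h1.trans ((pow_le_pow_left₀ (by positivity) h2 _).trans (h3.le.trans h4))

lemma map_bieval {K : IntermediateField ℚ ℂ} (σ : K →ₐ[ℚ] ℂ) (L N : ℕ) (c : ℕ → ℕ → ℤ) (x y : K)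
    {α : ℂ} (hα : α = (N : ℂ) * bieval L c x y) (hmem : α ∈ K) :
    σ ⟨α, hmem⟩ = (N : ℂ) * bieval L c (σ x) (σ y) := by
  have : (⟨α, hmem⟩ : K) = (N : K) * ∑ i ∈ Finset.range (L + 1), ∑ j ∈ Finset.range (L + 1),
      (c i j : K) * x ^ i * y ^ j := by
    apply Subtype.ext
    change α = _
    rw [hα, bieval]
    push_cast
    rfl
  rw [this]
  simp [bieval]

lemma map_aeval_int {K : IntermediateField ℚ ℂ} (σ : K →ₐ[ℚ] ℂ) (x : K) (R : Polynomial ℤ) :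
    σ (Polynomial.aeval x R) = Polynomial.aeval (σ x) R :=
  (Polynomial.aeval_algHom_apply (σ.restrictScalars ℤ) x R).symm

lemma map_mem_rootSet {K : IntermediateField ℚ ℂ} (σ : K →ₐ[ℚ] ℂ) {x : ℂ} (hx : IsAlgebraic ℚ x)
    (hmem : x ∈ K) : σ ⟨x, hmem⟩ ∈ (minpoly ℚ x).rootSet ℂ := by
  rw [Polynomial.mem_rootSet]
  refine ⟨minpoly.ne_zero hx.isIntegral, ?_⟩
  rw [Polynomial.aeval_algHom_apply]
  have : Polynomial.aeval (⟨x, hmem⟩ : K) (minpoly ℚ x) = 0 := by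
    apply Subtype.ext
    have h := Polynomial.aeval_algHom_apply K.val ⟨x, hmem⟩ (minpoly ℚ x)
    have h2 : K.val ⟨x, hmem⟩ = x := rfl
    rw [h2, minpoly.aeval] at h
    exact h.symm
  rw [this, map_zero]

set_option maxHeartbeats 1000000 in
/-- The lower bound for nonzero values of integer polynomials at `(q ^ p, J (p τ))`, when
`q = exp (2 π i τ)` and `J τ` are algebraic. The conjugates of `J (p τ)` are values `Jc p i τ'` with
`J τ'` a conjugate of `J τ`, whence the bound on their number and size; the modular
equation yields a denominator. -/
theorem exists_lower_bound {τ₀ : ℂ} (hτ₀ : 0 < τ₀.im) (hq : IsAlgebraic ℚ (ex τ₀))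
    (hj : IsAlgebraic ℚ (J τ₀)) : ∃ C : ℝ, 1 ≤ C ∧ ∀ (p : ℕ) [Fact p.Prime] (L : ℕ) (H : ℝ)
      (c : ℕ → ℕ → ℤ), 1 ≤ L → 1 ≤ H → (∀ i j, |(c i j : ℝ)| ≤ H) →
      bieval L c (ex τ₀ ^ p) (J (p * τ₀)) ≠ 0 →
      1 ≤ ‖bieval L c (ex τ₀ ^ p) (J (p * τ₀))‖
        * Real.exp (C * p * (Real.log H + L * (p * Real.log p))) := by
  classical
  obtain ⟨δ₁, hδ₁, hi₁⟩ := exists_denominator hq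
  obtain ⟨δ₂, hδ₂, hi₂⟩ := exists_denominator hj
  obtain ⟨C₀, hC₀, hgrow⟩ := exists_Jc_growth
  choose T hT hJT using J_surj
  set Sq : Finset ℂ := ((minpoly ℚ (ex τ₀)).rootSet_finite ℂ).toFinset with hSq
  set Sj : Finset ℂ := ((minpoly ℚ (J τ₀)).rootSet_finite ℂ).toFinset with hSj
  set K₁ : ℝ := ∑ a ∈ Sq, ‖a‖ with hK₁
  set K : ℝ := ∑ b ∈ Sj, C₀ * (1 + (T b).im + 1 / (T b).im) with hK
  have hKb : ∀ b, 0 ≤ C₀ * (1 + (T b).im + 1 / (T b).im) := by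
    intro b; have := hT b; positivity
  have hK₁0 : 0 ≤ K₁ := Finset.sum_nonneg fun _ _ => norm_nonneg _
  have hK0 : 0 ≤ K := Finset.sum_nonneg fun b _ => hKb b
  set K₂ : ℝ := (δ₁ : ℝ) + δ₂ with hK₂
  have hK₂0 : 0 ≤ K₂ := by positivity
  set K₃ : ℝ := 4 + 2 * (2 + 3 * K₂ + K₁ + K) with hK₃
  set d : ℕ := Sq.card * Sj.card with hd
  refine ⟨(2 * d + 1) * K₃, by nlinarith [(Nat.cast_nonneg d : (0 : ℝ) ≤ d)],
    fun p hp L H c hL hH hc hne => ?_⟩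
  have hp2 : (2 : ℝ) ≤ p := by exact_mod_cast hp.out.two_le
  have hL1 : (1 : ℝ) ≤ L := by exact_mod_cast hL
  have hlog : 1 ≤ 2 * Real.log p := by
    have h1 : Real.log 2 ≤ Real.log p := Real.log_le_log (by norm_num) hp2
    have := Real.log_two_gt_d9
    linarith
  obtain ⟨R, hR0, hRdeg, hR⟩ := modular_equation p
  set y : ℂ := J (p * τ₀) with hy
  have hrel : ∑ k ∈ Finset.range (p + 2), Polynomial.aeval (J τ₀) (R k) * y ^ (p + 1 - k) = 0 := by
    rw [← hR τ₀ hτ₀ y]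
    refine mul_eq_zero_of_right _ (Finset.prod_eq_zero (Finset.mem_univ none) ?_)
    simp [Jc, cpt, hy]
  -- the denominator of `y`
  set a : ℕ := δ₂ ^ (p + 1) * (p + 1).factorial with ha
  have ha0 : a ≠ 0 := by positivity
  have hay : IsIntegral ℤ ((a : ℂ) * y) := by
    have h1 := isIntegral_lead_mul (n := p + 1)
      (fun k => (δ₂ : ℂ) ^ (p + 1) * Polynomial.aeval (J τ₀) (R k))
      (fun k => isIntegral_pow_mul_aeval (hRdeg k) (isIntegral_natCast' _) hi₂) (y := y)
      (by simp only [mul_assoc]; rw [← Finset.mul_sum, hrel, mul_zero])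
      (by
        rw [hR0, Polynomial.aeval_C]
        have : (a : ℂ) ≠ 0 := by exact_mod_cast ha0
        simpa [ha] using this)
    rw [hR0, Polynomial.aeval_C] at h1
    simpa [ha] using h1
  have hqp : IsIntegral ℤ (((δ₁ ^ p : ℕ) : ℂ) * ex τ₀ ^ p) := by
    push_cast; rw [← mul_pow]; exact hi₁.pow p
  set N : ℕ := (δ₁ ^ p * a) ^ L with hN
  have hN0 : N ≠ 0 := by positivity
  set θ := bieval L c (ex τ₀ ^ p) y with hθ
  have hNθ : IsIntegral ℤ ((N : ℂ) * θ) := by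
    have := isIntegral_bieval (L := L) c (isIntegral_natCast' _) (isIntegral_natCast' _) hqp hay
    rw [hN]; push_cast at this ⊢; exact this
  have hNθ0 : (N : ℂ) * θ ≠ 0 := mul_ne_zero (by exact_mod_cast hN0) hne
  have hyalg : IsAlgebraic ℚ y := by
    have h1 : IsAlgebraic ℚ ((a : ℂ) * y) := (hay.tower_top (A := ℚ)).isAlgebraic
    have h2 : IsAlgebraic ℚ ((a : ℂ)) := isAlgebraic_natCast a
    have h3 := h2.inv.mul h1
    rwa [inv_mul_cancel_left₀ (by exact_mod_cast ha0)] at h3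
  have hNθalg : IsAlgebraic ℚ ((N : ℂ) * θ) := (hNθ.tower_top (A := ℚ)).isAlgebraic
  -- all conjugates of `N θ`
  set S : Finset ℂ := ((Sq ×ˢ Sj) ×ˢ (Finset.univ : Finset (Option (ZMod p)))).image
    fun x => (N : ℂ) * bieval L c (x.1.1 ^ p) (Jc p x.2 (T x.1.2)) with hS
  have hroot : ∀ r ∈ (minpoly ℚ ((N : ℂ) * θ)).rootSet ℂ, r ∈ S := by
    intro r hr
    obtain ⟨σ, rfl⟩ := exists_embedding hNθalg hr
    have hqm : ex τ₀ ∈ algebraicClosure ℚ ℂ := mem_algebraicClosure_iff.2 hq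
    have hjm : J τ₀ ∈ algebraicClosure ℚ ℂ := mem_algebraicClosure_iff.2 hj
    have hym : y ∈ algebraicClosure ℚ ℂ := mem_algebraicClosure_iff.2 hyalg
    rw [map_bieval σ L N c (⟨ex τ₀, hqm⟩ ^ p) ⟨y, hym⟩ (by simp [hθ])]
    have hyr : ∑ k ∈ Finset.range (p + 2),
        Polynomial.aeval (σ ⟨J τ₀, hjm⟩) (R k) * (σ ⟨y, hym⟩) ^ (p + 1 - k) = 0 := by
      have h1 : ∑ k ∈ Finset.range (p + 2), Polynomial.aeval (⟨J τ₀, hjm⟩ : algebraicClosure ℚ ℂ)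
          (R k) * (⟨y, hym⟩ : algebraicClosure ℚ ℂ) ^ (p + 1 - k) = 0 := by
        apply Subtype.ext
        have h2 : ∀ k, ((Polynomial.aeval (⟨J τ₀, hjm⟩ : algebraicClosure ℚ ℂ) (R k) :
            algebraicClosure ℚ ℂ) : ℂ) = Polynomial.aeval (J τ₀) (R k) := by
          intro k
          exact (map_aeval_int (algebraicClosure ℚ ℂ).val _ (R k))
        push_cast
        simp only [h2]
        exact hrel
      have h3 := congrArg σ h1
      rw [map_sum, map_zero] at h3
      rw [← h3]
      refine Finset.sum_congr rfl fun k _ => ?_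
      rw [map_mul, map_pow]
      rw [map_aeval_int]
    obtain ⟨i, hi⟩ := Jc_root p (hT (σ ⟨J τ₀, hjm⟩)) (hJT _) hR hyr
    rw [hS, Finset.mem_image]
    refine ⟨((σ ⟨ex τ₀, hqm⟩, σ ⟨J τ₀, hjm⟩), i), ?_, ?_⟩
    · simp only [Finset.mem_product, Finset.mem_univ, and_true, hSq, hSj, Set.Finite.mem_toFinset]
      exact ⟨map_mem_rootSet σ hq hqm, map_mem_rootSet σ hj hjm⟩
    · rw [hi, map_pow]
  have hScard : S.card ≤ d * (p + 1) := by
    refine Finset.card_image_le.trans ?_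
    rw [Finset.card_product, Finset.card_product, Finset.card_univ, Fintype.card_option, ZMod.card]
  -- the size of `N` and of the conjugates
  set Λ : ℝ := L * (p * Real.log p) with hΛ
  have hpL : (p : ℝ) * L ≤ 2 * Λ := by
    rw [hΛ]
    have : (p : ℝ) * L * 1 ≤ p * L * (2 * Real.log p) := by gcongr
    linarith
  have hLpL : (L : ℝ) ≤ p * L := by nlinarith
  have hΛ0 : 0 ≤ Λ := by nlinarith
  have hexp : ∀ n : ℕ, (n : ℝ) ≤ Real.exp n := fun n => by
    have := Real.add_one_le_exp (n : ℝ); linarith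
  have hNle : (N : ℝ) ≤ Real.exp (3 * K₂ * (p * L) + 4 * Λ) := by
    have h1 : (δ₁ : ℝ) ≤ Real.exp K₂ :=
      (hexp δ₁).trans (Real.exp_le_exp.2 (by rw [hK₂]; simp))
    have h2 : (δ₂ : ℝ) ≤ Real.exp K₂ :=
      (hexp δ₂).trans (Real.exp_le_exp.2 (by rw [hK₂]; simp))
    have h3 := factorial_le_exp hp.out.two_le
    have h4 : (N : ℝ) ≤ (Real.exp K₂ ^ p * (Real.exp K₂ ^ (p + 1)
        * Real.exp (4 * (p * Real.log p)))) ^ L := by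
      rw [hN, ha]; push_cast
      gcongr
    refine h4.trans ?_
    simp only [← Real.exp_nat_mul, ← Real.exp_add]
    apply Real.exp_le_exp.2
    push_cast
    have h5 : K₂ * L ≤ K₂ * (p * L) := by gcongr
    rw [hΛ]
    nlinarith
  set M : ℝ := H * Real.exp (K₃ * Λ) with hM
  have hK₃Λ : 0 ≤ K₃ * Λ := by rw [hK₃]; positivity
  have hM1 : 1 ≤ M := by
    rw [hM]
    have := Real.one_le_exp hK₃Λ
    nlinarith
  have hNM : (N : ℝ) ≤ M := by
    refine hNle.trans ?_
    have : Real.exp (3 * K₂ * (p * L) + 4 * Λ) ≤ Real.exp (K₃ * Λ) := by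
      apply Real.exp_le_exp.2
      have : 3 * K₂ * (p * L) ≤ 3 * K₂ * (2 * Λ) := by gcongr
      rw [hK₃]
      nlinarith
    rw [hM]
    nlinarith [Real.exp_pos (K₃ * Λ)]
  have hSM : ∀ s ∈ S, ‖s‖ ≤ M := by
    intro s hs
    rw [hS, Finset.mem_image] at hs
    obtain ⟨⟨⟨a, b⟩, i⟩, hx, rfl⟩ := hs
    simp only [Finset.mem_product, Finset.mem_univ, and_true] at hx
    dsimp only
    have h1 : ‖a‖ ≤ Real.exp K₁ := by
      have : ‖a‖ ≤ K₁ := Finset.single_le_sum (f := fun a : ℂ => ‖a‖)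
        (fun _ _ => norm_nonneg _) hx.1
      have h2 := Real.add_one_le_exp K₁
      linarith
    have h2 : ‖Jc p i (T b)‖ ≤ Real.exp (p * K) := by
      refine (hgrow p i (T b) (hT b)).trans (Real.exp_le_exp.2 ?_)
      have : C₀ * (1 + (T b).im + 1 / (T b).im) ≤ K := Finset.single_le_sum
        (f := fun b => C₀ * (1 + (T b).im + 1 / (T b).im)) (fun b _ => hKb b) hx.2
      gcongr
    have h3 := norm_bieval_le (L := L) hc (by linarith)
      (one_le_pow₀ (Real.one_le_exp hK₁0) : 1 ≤ Real.exp K₁ ^ p)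
      (Real.one_le_exp (by positivity : 0 ≤ p * K))
      (by rw [norm_pow]; exact pow_le_pow_left₀ (norm_nonneg _) h1 p) h2
    have h4 : ((L : ℝ) + 1) ^ 2 ≤ Real.exp L ^ 2 :=
      pow_le_pow_left₀ (by positivity) (Real.add_one_le_exp _) 2
    rw [norm_mul, Complex.norm_natCast]
    calc (N : ℝ) * ‖bieval L c (a ^ p) (Jc p i (T b))‖
        ≤ Real.exp (3 * K₂ * (p * L) + 4 * Λ) * (Real.exp L ^ 2 *
          (H * (Real.exp K₁ ^ p) ^ L * Real.exp (p * K) ^ L)) := by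
          refine mul_le_mul hNle (h3.trans ?_) (norm_nonneg _) (Real.exp_pos _).le
          gcongr
      _ = H * Real.exp (3 * K₂ * (p * L) + 4 * Λ + 2 * L + K₁ * (p * L) + K * (p * L)) := by
          simp only [← Real.exp_nat_mul, Real.exp_add]
          push_cast
          rw [show (L : ℝ) * (p * K₁) = K₁ * (p * L) by ring,
            show (L : ℝ) * (p * K) = K * (p * L) by ring]
          ring
      _ ≤ M := by
          rw [hM]
          refine mul_le_mul_of_nonneg_left (Real.exp_le_exp.2 ?_) (by linarith)
          have e1 : 3 * K₂ * (p * L) ≤ 3 * K₂ * (2 * Λ) := by gcongr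
          have e2 : K₁ * (p * L) ≤ K₁ * (2 * Λ) := by gcongr
          have e3 : K * (p * L) ≤ K * (2 * Λ) := by gcongr
          have e4 : K₃ * Λ = 4 * Λ + 4 * Λ + 3 * K₂ * (2 * Λ) + K₁ * (2 * Λ) + K * (2 * Λ) := by
            rw [hK₃]; ring
          linarith
  have hmain := one_le_of_conjugates hNθ hNθ0 S hM1 hroot hSM
  rw [norm_mul, Complex.norm_natCast] at hmain
  have hcard2 : S.card + 1 ≤ (2 * d + 1) * p := by
    have := hp.out.two_le
    nlinarith
  have hfin : 1 ≤ ‖θ‖ * M ^ ((2 * d + 1) * p) := by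
    calc 1 ≤ N * ‖θ‖ * M ^ S.card := hmain
      _ ≤ M * ‖θ‖ * M ^ S.card := by gcongr
      _ = ‖θ‖ * M ^ (S.card + 1) := by ring
      _ ≤ _ := by gcongr
  refine hfin.trans (mul_le_mul_of_nonneg_left ?_ (norm_nonneg _))
  have hMexp : M = Real.exp (Real.log H + K₃ * Λ) := by
    rw [hM, Real.exp_add, Real.exp_log (by linarith)]
  rw [hMexp, ← Real.exp_nat_mul]
  apply Real.exp_le_exp.2
  push_cast
  have hlH : 0 ≤ Real.log H := Real.log_nonneg hH
  have hK₃1 : 1 ≤ K₃ := by nlinarith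
  have : Real.log H + K₃ * Λ ≤ K₃ * (Real.log H + Λ) := by nlinarith
  calc (2 * (d : ℝ) + 1) * p * (Real.log H + K₃ * Λ)
      ≤ (2 * (d : ℝ) + 1) * p * (K₃ * (Real.log H + Λ)) := by gcongr
    _ = _ := by ring

/-! ### Algebraic independence of `q` and `J`, and Schwarz's lemma -/

lemma coeff_eq_zero_of_infinite {n : ℕ} (a : ℕ → ℂ) {S : Set ℂ} (hS : S.Infinite)
    (h : ∀ x ∈ S, ∑ i ∈ Finset.range n, a i * x ^ i = 0) : ∀ i < n, a i = 0 := by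
  set P : Polynomial ℂ := ∑ i ∈ Finset.range n, Polynomial.C (a i) * Polynomial.X ^ i with hP
  have h0 : P = 0 := by
    refine Polynomial.eq_zero_of_infinite_isRoot P (hS.mono fun x hx => ?_)
    have := h x hx
    simpa [hP, Polynomial.eval_finsetSum] using this
  intro i hi
  have h1 : P.coeff i = a i := by
    rw [hP, Polynomial.finsetSum_coeff]
    simp [Polynomial.coeff_X_pow, hi]
  rw [← h1, h0, Polynomial.coeff_zero]

/-- Infinitely many points of the orbit of `τ` under `τ ↦ τ / (n τ + 1)` have different `q`. -/
lemma infinite_ex_orbit {τ : ℂ} (hτ : 0 < τ.im) (hre : 0 ≤ τ.re) :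
    (Set.range fun n : ℕ => ex (τ / (n * τ + 1))).Infinite := by
  refine Set.infinite_range_of_injective ?_
  have him : ∀ n : ℕ, (τ / (n * τ + 1)).im = τ.im / Complex.normSq (n * τ + 1) := by
    intro n
    rw [Complex.div_im]
    simp
    ring
  have hns : ∀ n : ℕ, Complex.normSq (n * τ + 1)
      = (n : ℝ) ^ 2 * (τ.re ^ 2 + τ.im ^ 2) + 2 * n * τ.re + 1 := by
    intro n
    rw [Complex.normSq_apply]
    simp
    ring
  have hmono : StrictMono fun n : ℕ => Complex.normSq (n * τ + 1) := by
    refine strictMono_nat_of_lt_succ fun n => ?_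
    rw [hns, hns]; push_cast
    have : (0 : ℝ) ≤ n := Nat.cast_nonneg n
    have h2 : 0 < τ.re ^ 2 + τ.im ^ 2 := by positivity
    nlinarith [mul_nonneg this h2.le]
  intro m n hmn
  apply hmono.injective
  have h1 := congrArg norm hmn
  simp only [norm_ex, Real.exp_eq_exp, neg_inj, him] at h1
  have hpi := Real.pi_pos
  have hpos : ∀ n : ℕ, Complex.normSq (n * τ + 1) ≠ 0 := by
    intro n; rw [hns]; positivity
  have h2 : τ.im / Complex.normSq (m * τ + 1) = τ.im / Complex.normSq (n * τ + 1) :=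
    mul_left_cancel₀ (by positivity) h1
  rw [div_eq_div_iff (hpos m) (hpos n)] at h2
  exact (mul_left_cancel₀ hτ.ne' h2).symm

/-- `exp (2 π i τ)` and `J` are algebraically independent. -/
lemma bieval_ne_zero {L : ℕ} {c : ℕ → ℕ → ℤ}
    (h : ∀ τ : ℂ, 0 < τ.im → bieval L c (ex τ) (J τ) = 0) :
    ∀ i < L + 1, ∀ j < L + 1, c i j = 0 := by
  have key : ∀ w : ℂ, ∀ i < L + 1, ∑ j ∈ Finset.range (L + 1), (c i j : ℂ) * w ^ j = 0 := by
    intro w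
    obtain ⟨τ, hτ, hre, hw⟩ : ∃ τ : ℂ, 0 < τ.im ∧ 0 ≤ τ.re ∧ J τ = w := by
      obtain ⟨τ, hτ, hw⟩ := J_surj w
      refine ⟨τ + (⌈|τ.re|⌉ : ℤ), by simpa using hτ, ?_, by rw [J_add_int hτ, hw]⟩
      have := Int.le_ceil |τ.re|
      have h2 := neg_abs_le τ.re
      simp only [Complex.add_re, Complex.intCast_re]
      linarith
    refine coeff_eq_zero_of_infinite _ (infinite_ex_orbit hτ hre) ?_
    rintro _ ⟨n, rfl⟩
    have h1 := J_inv.transform (a := 1) (b := 0) (c := n) (d := 1) (by norm_num) hτ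
    have h2 := im_moebius_pos (a := 1) (b := 0) (c := n) (d := 1) (by norm_num) hτ
    simp only [Int.cast_one, one_mul, Int.cast_zero, add_zero, Int.cast_natCast] at h1 h2
    have h3 := h _ h2
    rw [h1, hw, bieval] at h3
    rw [← h3]
    refine Finset.sum_congr rfl fun i _ => ?_
    rw [Finset.sum_mul]
    exact Finset.sum_congr rfl fun j _ => by ring
  intro i hi j hj
  have := coeff_eq_zero_of_infinite (fun j => (c i j : ℂ)) Set.infinite_univ
    (fun w _ => key w i hi) j hj
  exact_mod_cast this

/-- A function bounded on a circle and having many zeros close to the centre is small there. -/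
lemma schwarz_zeros {r : ℝ} (hr0 : 0 < r) (hr1 : r < 1) (X : Finset ℂ) :
    ∀ {f : ℂ → ℂ} {B : ℝ}, DifferentiableOn ℂ f (ball 0 1) → (∀ z, ‖z‖ = r → ‖f z‖ ≤ B) →
      (∀ x ∈ X, x ≠ 0 ∧ ‖x‖ < r ∧ f x = 0) → ‖f 0‖ * ∏ x ∈ X, (r - ‖x‖) / ‖x‖ ≤ B := by
  classical
  induction X using Finset.induction_on with
  | empty =>
    intro f B hf hB _
    rw [Finset.prod_empty, mul_one]
    refine Complex.norm_le_of_forall_mem_frontier_norm_le (U := ball 0 r) isBounded_ball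
      ?_ (fun z hz => ?_) (subset_closure (mem_ball_self hr0))
    · refine DifferentiableOn.diffContOnCl ?_
      exact hf.mono ((closure_ball_subset_closedBall).trans (closedBall_subset_ball hr1))
    · rw [frontier_ball _ hr0.ne', mem_sphere, dist_zero_right] at hz
      exact hB z hz
  | insert x X hx ih =>
    intro f B hf hB hX
    obtain ⟨hx0, hxr, hfx⟩ := hX x (Finset.mem_insert_self _ _)
    have hxpos : 0 < ‖x‖ := norm_pos_iff.2 hx0
    have hg : DifferentiableOn ℂ (dslope f x) (ball 0 1) :=
      (Complex.differentiableOn_dslope (isOpen_ball.mem_nhds (by simp; linarith))).2 hf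
    have hfg : ∀ z, f z = (z - x) * dslope f x z := by
      intro z
      have := sub_smul_dslope f x z
      rw [hfx, sub_zero, smul_eq_mul] at this
      exact this.symm
    have h1 := ih (f := dslope f x) (B := B / (r - ‖x‖)) hg (fun z hz => by
        rw [le_div_iff₀ (by linarith)]
        have h2 := hB z hz
        rw [hfg z, norm_mul] at h2
        have h3 : r - ‖x‖ ≤ ‖z - x‖ := by rw [← hz]; exact norm_sub_norm_le z x
        nlinarith [norm_nonneg (dslope f x z)])
      (fun y hy => by
        obtain ⟨h2, h3, h4⟩ := hX y (Finset.mem_insert_of_mem hy)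
        refine ⟨h2, h3, ?_⟩
        rw [hfg y, mul_eq_zero] at h4
        refine h4.resolve_left fun h5 => hx ?_
        rwa [← sub_eq_zero.1 h5])
    rw [Finset.prod_insert hx, hfg 0, norm_mul, zero_sub, norm_neg]
    rw [le_div_iff₀ (by linarith)] at h1
    calc _ = ‖dslope f x 0‖ * (∏ x ∈ X, (r - ‖x‖) / ‖x‖) * (r - ‖x‖) := by
          field_simp
      _ ≤ B := h1

/-! ### The auxiliary function -/

/-- Cauchy's estimate for the coefficients of a power series. -/
lemma IntSer.cauchy {h : ℂ → ℂ} {a : ℕ → ℤ} (ha : IntSer h a) {r B : ℝ} (hr0 : 0 < r) (hr1 : r < 1)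
    (hB : ∀ z, ‖z‖ = r → ‖h z‖ ≤ B) (m : ℕ) : |(a m : ℝ)| ≤ B / r ^ m := by
  have hd : DifferentiableOn ℂ h (ball 0 1) := IntHol.differentiableOn ⟨a, ha⟩
  have h1 := Complex.norm_iteratedDeriv_le_of_forall_mem_sphere_norm_le m hr0
    (DifferentiableOn.diffContOnCl (hd.mono
      ((closure_ball_subset_closedBall).trans (closedBall_subset_ball hr1))))
    (fun z hz => hB z (by simpa using hz))
  have h2 := ha.hasFPowerSeriesOnBall.hasFPowerSeriesAt
  have h3 := h2.analyticAt.hasFPowerSeriesAt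
  have h4 := congrArg (fun s => FormalMultilinearSeries.coeff s m)
    (h2.eq_formalMultilinearSeries h3)
  simp only [FormalMultilinearSeries.coeff_ofScalars] at h4
  have hf : (0 : ℝ) < m.factorial := by exact_mod_cast m.factorial_pos
  have h5 : |(a m : ℝ)| = ‖iteratedDeriv m h 0‖ / m.factorial := by
    rw [← Complex.norm_intCast, h4, norm_div, Complex.norm_natCast]
  rw [h5, div_le_iff₀ hf]
  refine h1.trans (le_of_eq ?_)
  ring

lemma IntSer.congr_coeff {h : ℂ → ℂ} {a b : ℕ → ℤ} (ha : IntSer h a) (hab : ∀ n, a n = b n) :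
    IntSer h b := by
  have : a = b := funext hab
  rwa [← this]

lemma IntSer.sum {ι : Type*} (s : Finset ι) {h : ι → ℂ → ℂ} {a : ι → ℕ → ℤ}
    (ha : ∀ i, IntSer (h i) (a i)) (c : ι → ℤ) :
    IntSer (fun z => ∑ i ∈ s, (c i : ℂ) * h i z) (fun n => ∑ i ∈ s, c i * a i n) := by
  intro z hz
  have := hasSum_sum (s := s) fun i _ => ((ha i z hz).mul_left (c i : ℂ))
  refine this.congr_fun ?_ |> id
  intro n
  push_cast
  rw [Finset.sum_mul]
  exact Finset.sum_congr rfl fun i _ => by ring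

attribute [local instance] Matrix.seminormedAddCommGroup in
/-- Siegel's lemma: with twice as many integer power series as conditions, some small integer
combination vanishes to the prescribed order. -/
lemma siegel_series {ι : Type*} [Fintype ι] {a : ι → ℕ → ℤ} {M₀ : ℕ} {U : ℝ}
    (hM₀ : 0 < M₀) (hcard : Fintype.card ι = 2 * M₀)
    (hU : 1 ≤ U) (hb : ∀ k, ∀ m < M₀, |(a k m : ℝ)| ≤ U) :
    ∃ c : ι → ℤ, c ≠ 0 ∧ (∀ k, |(c k : ℝ)| ≤ 2 * M₀ * U) ∧
      ∀ m < M₀, ∑ k, c k * a k m = 0 := by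
  classical
  set A : Matrix (Fin M₀) ι ℤ := Matrix.of fun m k => a k m with hA
  obtain ⟨c, hc0, hAc, hcn⟩ := Int.Matrix.exists_ne_zero_int_vec_norm_le A
    (by rw [hcard, Fintype.card_fin]; omega) (by rw [Fintype.card_fin]; exact hM₀)
  refine ⟨c, hc0, fun k => ?_, fun m hm => ?_⟩
  · have h1 : ‖A‖ ≤ U := by
      rw [Matrix.norm_le_iff (by linarith)]
      intro m k
      rw [Int.norm_eq_abs]
      exact hb k m m.2
    have hM' : (0 : ℝ) < M₀ := by exact_mod_cast hM₀
    have h2 : ((Fintype.card (Fin M₀) : ℕ) : ℝ) /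
        ((Fintype.card ι : ℕ) - (Fintype.card (Fin M₀) : ℕ)) = 1 := by
      rw [hcard, Fintype.card_fin]
      push_cast
      rw [div_eq_one_iff_eq (by linarith)]; ring
    rw [h2, Real.rpow_one, hcard] at hcn
    have h3 : |(c k : ℝ)| ≤ ‖c‖ := by
      rw [← Int.norm_eq_abs]; exact norm_le_pi_norm c k
    refine h3.trans (hcn.trans ?_)
    push_cast
    gcongr
    exact max_le hU h1
  · have := congrFun hAc ⟨m, hm⟩
    simp only [Matrix.mulVec, dotProduct, hA, Matrix.of_apply, Pi.zero_apply] at this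
    rw [← this]
    exact Finset.sum_congr rfl fun k _ => mul_comm _ _

/-- The numerator `t J` of `J`. -/
def tJ (z : ℂ) : ℂ := 1 + (2 ^ 24 * t z ^ 3 - cc * 2 ^ 12 * t z ^ 2)

/-- `t ^ L J ^ j`, holomorphic for `j ≤ L`. -/
def tLJ (L j : ℕ) (z : ℂ) : ℂ := t z ^ (L - j) * tJ z ^ j

lemma tJ_eq {z : ℂ} (hz0 : z ≠ 0) (hz : ‖z‖ < 1) : t z * Jq z = tJ z := by
  have := t_ne_zero hz0 hz
  rw [tJ, Jq]
  field_simp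

lemma tLJ_eq {L j : ℕ} (hj : j ≤ L) {z : ℂ} (hz0 : z ≠ 0) (hz : ‖z‖ < 1) :
    tLJ L j z = t z ^ L * Jq z ^ j := by
  rw [tLJ, ← tJ_eq hz0 hz, mul_pow, ← mul_assoc, ← pow_add, Nat.sub_add_cancel hj]

lemma tLJ_intHol (L j : ℕ) : IntHol (tLJ L j) := by
  have h1 : IntHol tJ := by
    have := (intHol_const 1).add
      (((t_intHol.pow 3).const_mul (2 ^ 24)).sub ((t_intHol.pow 2).const_mul (cc * 2 ^ 12)))
    refine this.congr fun z _ => ?_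
    simp only [tJ]; push_cast; ring
  exact (t_intHol.pow _).mul (h1.pow j)

/-- A constant bounding the coefficients of the numerator `tJ`. -/
def A₀ : ℝ := 1 + 2 ^ 24 + |(cc : ℝ)| * 2 ^ 12

lemma one_le_A₀ : 1 ≤ A₀ := by
  rw [A₀]; have := abs_nonneg (cc : ℝ); linarith [mul_nonneg this (by norm_num : (0 : ℝ) ≤ 2 ^ 12)]

lemma norm_tLJ_le {L j : ℕ} (hj : j ≤ L) {η : ℝ} (hη0 : 0 < η) {z : ℂ}
    (hz : ‖z‖ ≤ 1 - η) : ‖tLJ L j z‖ ≤ Real.exp (L * (A₀ + 72 / η)) := by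
  have ht : ‖t z‖ ≤ Real.exp (24 / η) := by
    refine (norm_t_le hz (by linarith)).trans (Real.exp_le_exp.2 ?_)
    rw [show 24 / η = 24 * (1 / η) by ring, sub_sub_cancel]
    gcongr
    linarith
  set e := Real.exp (24 / η) with he
  have he1 : 1 ≤ e := Real.one_le_exp (by positivity)
  have he3 : e ^ 3 = Real.exp (72 / η) := by
    rw [he, ← Real.exp_nat_mul]; congr 1; push_cast; ring
  have hA := one_le_A₀
  have htJ : ‖tJ z‖ ≤ A₀ * e ^ 3 := by
    rw [tJ]
    have h1 : ‖(2 : ℂ) ^ 24 * t z ^ 3‖ ≤ 2 ^ 24 * e ^ 3 := by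
      rw [norm_mul, norm_pow, norm_pow, Complex.norm_ofNat]
      gcongr
    have h2 : ‖(cc : ℂ) * 2 ^ 12 * t z ^ 2‖ ≤ |(cc : ℝ)| * 2 ^ 12 * e ^ 3 := by
      rw [norm_mul, norm_mul, norm_pow, norm_pow, Complex.norm_ofNat, Complex.norm_intCast]
      have h3 : ‖t z‖ ^ 2 ≤ e ^ 3 := (pow_le_pow_left₀ (norm_nonneg _) ht 2).trans
        (pow_le_pow_right₀ he1 (by norm_num))
      gcongr
    have h3 : (1 : ℝ) ≤ e ^ 3 := one_le_pow₀ he1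
    calc _ ≤ ‖(1 : ℂ)‖ + (‖(2 : ℂ) ^ 24 * t z ^ 3‖ + ‖(cc : ℂ) * 2 ^ 12 * t z ^ 2‖) :=
          (norm_add_le _ _).trans (by gcongr; exact norm_sub_le _ _)
      _ ≤ e ^ 3 + (2 ^ 24 * e ^ 3 + |(cc : ℝ)| * 2 ^ 12 * e ^ 3) := by
          rw [norm_one]; gcongr
      _ = _ := by rw [A₀]; ring
  have ht2 : ‖t z‖ ≤ A₀ * e ^ 3 := by
    refine ht.trans ?_
    have : e ≤ e ^ 3 := le_self_pow₀ he1 (by norm_num)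
    nlinarith
  rw [tLJ, norm_mul, norm_pow, norm_pow]
  calc ‖t z‖ ^ (L - j) * ‖tJ z‖ ^ j ≤ (A₀ * e ^ 3) ^ (L - j) * (A₀ * e ^ 3) ^ j := by gcongr
    _ = (A₀ * e ^ 3) ^ L := by rw [← pow_add, Nat.sub_add_cancel hj]
    _ ≤ (Real.exp A₀ * e ^ 3) ^ L := by
        have := Real.add_one_le_exp A₀
        gcongr
        linarith
    _ = _ := by rw [he3, ← Real.exp_add, ← Real.exp_nat_mul]

lemma one_div_one_sub_pow_le {η : ℝ} (hη0 : 0 < η) (hη1 : η ≤ 1 / 2) (m : ℕ) :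
    1 / (1 - η) ^ m ≤ Real.exp (2 * η * m) := by
  have h1 : 1 / (1 - η) ≤ Real.exp (2 * η) := by
    rw [div_le_iff₀ (by linarith)]
    have := Real.add_one_le_exp (2 * η)
    nlinarith
  calc 1 / (1 - η) ^ m = (1 / (1 - η)) ^ m := by rw [one_div_pow]
    _ ≤ Real.exp (2 * η) ^ m :=
        pow_le_pow_left₀ (by have : 0 < 1 - η := by linarith
                             positivity) h1 m
    _ = _ := by rw [← Real.exp_nat_mul]; congr 1; ring

/-- The absolute constant of the auxiliary construction. -/
def C₁ : ℝ := 306 + 4 * A₀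

lemma four_pow_le_exp {s : ℝ} (hs : 1 ≤ s) : 4 * s ^ 4 ≤ Real.exp (6 * s ^ 3) := by
  have h1 : s ≤ Real.exp s := by linarith [Real.add_one_le_exp s]
  have h2 : (4 : ℝ) ≤ Real.exp 2 := by
    have : (2 : ℝ) ≤ Real.exp 1 := by linarith [Real.add_one_le_exp (1 : ℝ)]
    have h3 : Real.exp 2 = Real.exp 1 * Real.exp 1 := by rw [← Real.exp_add]; norm_num
    rw [h3]; nlinarith
  calc 4 * s ^ 4 ≤ Real.exp 2 * Real.exp s ^ 4 := by gcongr
    _ = Real.exp (2 + 4 * s) := by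
        rw [← Real.exp_nat_mul, ← Real.exp_add]; norm_num
    _ ≤ _ := by
        apply Real.exp_le_exp.2
        have : s ≤ s ^ 3 := le_self_pow₀ hs (by norm_num)
        linarith

/-- The auxiliary function `t ^ L P(z, J)`: its polynomial `P` has small integer coefficients, and
it vanishes at the origin to an order `M ≥ 2 s ^ 4`. The quotient `Ψ` by `z ^ M` has a nonzero
integer as value at the origin, and is bounded on the disc of radius `1 - s / √M`. -/
lemma exists_aux {s : ℕ} (hs : 2 ≤ s) : ∃ (c : ℕ → ℕ → ℤ) (M : ℕ) (Ψ : ℂ → ℂ),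
    (∀ i j, |(c i j : ℝ)| ≤ Real.exp (C₁ * s ^ 3)) ∧ 2 * s ^ 4 ≤ M ∧
    DifferentiableOn ℂ Ψ (ball 0 1) ∧ 1 ≤ ‖Ψ 0‖ ∧
    (∀ z : ℂ, z ≠ 0 → ‖z‖ < 1 →
      t z ^ (2 * s ^ 2 - 1) * bieval (2 * s ^ 2 - 1) c z (Jq z) = z ^ M * Ψ z) ∧
    ∀ z : ℂ, ‖z‖ ≤ 1 - s / √M → ‖Ψ z‖ ≤ Real.exp (C₁ * s * √M) := by
  set L := 2 * s ^ 2 - 1 with hL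
  have hs2 : 1 ≤ s ^ 2 := Nat.one_le_pow _ _ (by omega)
  have hL1 : L + 1 = 2 * s ^ 2 := by omega
  have hsr : (2 : ℝ) ≤ s := by exact_mod_cast hs
  have hs0 : (0 : ℝ) < s := by linarith
  have hLr : (L : ℝ) ≤ 2 * s ^ 2 := by
    have : L ≤ 2 * s ^ 2 := by omega
    exact_mod_cast this
  have hA := one_le_A₀
  -- the monomials `z ^ i t ^ L J ^ j` and their power series
  have hser : ∀ k : Fin (L + 1) × Fin (L + 1), ∃ a : ℕ → ℤ,
      IntSer (fun z => z ^ (k.1 : ℕ) * tLJ L k.2 z) a := fun k =>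
    (intHol_pow _).mul (tLJ_intHol L k.2)
  choose a ha using hser
  have hcard : Fintype.card (Fin (L + 1) × Fin (L + 1)) = 2 * (2 * s ^ 4) := by
    rw [Fintype.card_prod, Fintype.card_fin, hL1]; ring
  have hbound : ∀ (η : ℝ), 0 < η → ∀ (k : Fin (L + 1) × Fin (L + 1)) (z : ℂ), ‖z‖ ≤ 1 - η →
      ‖z ^ (k.1 : ℕ) * tLJ L k.2 z‖ ≤ Real.exp (2 * s ^ 2 * (A₀ + 72 / η)) := by
    intro η hη k z hz
    rw [norm_mul, norm_pow]
    have h1 : ‖z‖ ^ (k.1 : ℕ) ≤ 1 := pow_le_one₀ (norm_nonneg _) (by linarith)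
    have h2 := norm_tLJ_le (L := L) (j := k.2) (by omega) hη hz
    calc _ ≤ 1 * Real.exp (L * (A₀ + 72 / η)) := by gcongr
      _ ≤ _ := by
        rw [one_mul]
        apply Real.exp_le_exp.2
        gcongr
  have hη : 0 < 1 / (s : ℝ) := by positivity
  have hη2 : 1 / (s : ℝ) ≤ 1 / 2 := by gcongr
  set U := Real.exp ((148 + 2 * A₀) * s ^ 3) with hU
  have hcoef : ∀ k, ∀ m < 2 * s ^ 4, |(a k m : ℝ)| ≤ U := by
    intro k m hm
    have h1 := (ha k).cauchy (r := 1 - 1 / (s : ℝ)) (by linarith) (by linarith)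
      (fun z hz => hbound _ hη k z hz.le) m
    rw [div_eq_mul_one_div] at h1
    have h2 := one_div_one_sub_pow_le hη hη2 m
    have hm' : (m : ℝ) ≤ 2 * s ^ 4 := by exact_mod_cast hm.le
    refine h1.trans ?_
    calc _ ≤ Real.exp (2 * s ^ 2 * (A₀ + 72 / (1 / (s : ℝ)))) * Real.exp (2 * (1 / (s : ℝ)) * m) := by
          gcongr
      _ = Real.exp (2 * s ^ 2 * (A₀ + 72 / (1 / (s : ℝ))) + 2 * (1 / (s : ℝ)) * m) := by
          rw [Real.exp_add]
      _ ≤ _ := by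
          apply Real.exp_le_exp.2
          have h3 : 2 * (1 / (s : ℝ)) * m ≤ 2 * (1 / (s : ℝ)) * (2 * s ^ 4) := by gcongr
          have h4 : 2 * (1 / (s : ℝ)) * (2 * s ^ 4) = 4 * s ^ 3 := by field_simp; ring
          have h5 : 2 * (s : ℝ) ^ 2 * (A₀ + 72 / (1 / (s : ℝ))) = 2 * A₀ * s ^ 2 + 144 * s ^ 3 := by
            field_simp; ring
          have h6 : (s : ℝ) ^ 2 ≤ s ^ 3 := pow_le_pow_right₀ (by linarith) (by norm_num)
          rw [h5]
          nlinarith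
  obtain ⟨c₀, hc0, hcn, hcz⟩ := siegel_series (a := a) (M₀ := 2 * s ^ 4) (U := U) (by positivity)
    hcard (Real.one_le_exp (by positivity)) hcoef
  have hcH : ∀ k, |(c₀ k : ℝ)| ≤ Real.exp ((154 + 2 * A₀) * s ^ 3) := by
    intro k
    refine (hcn k).trans ?_
    push_cast
    calc 2 * (2 * (s : ℝ) ^ 4) * U = (4 * s ^ 4) * U := by ring
      _ ≤ Real.exp (6 * s ^ 3) * U := by gcongr; exact four_pow_le_exp (by linarith)
      _ = _ := by rw [hU, ← Real.exp_add]; congr 1; ring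
  set c : ℕ → ℕ → ℤ := fun i j =>
    if h : i < L + 1 ∧ j < L + 1 then c₀ (⟨i, h.1⟩, ⟨j, h.2⟩) else 0 with hc
  have hck : ∀ k : Fin (L + 1) × Fin (L + 1), c k.1 k.2 = c₀ k := by
    intro k
    rw [hc]; simp only
    rw [dif_pos ⟨k.1.2, k.2.2⟩]
  set Φ : ℂ → ℂ := fun z => ∑ k, (c₀ k : ℂ) * (z ^ (k.1 : ℕ) * tLJ L k.2 z) with hΦ
  have hΦb : ∀ z : ℂ, z ≠ 0 → ‖z‖ < 1 → Φ z = t z ^ L * bieval L c z (Jq z) := by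
    intro z hz0 hz
    rw [bieval, Finset.sum_range]
    simp_rw [Finset.sum_range]
    rw [hΦ]; simp only
    rw [Fintype.sum_prod_type, Finset.mul_sum]
    refine Finset.sum_congr rfl fun i _ => ?_
    rw [Finset.mul_sum]
    refine Finset.sum_congr rfl fun j _ => ?_
    rw [tLJ_eq (by omega) hz0 hz, ← hck (i, j)]
    ring
  have hΦs : IntSer Φ (fun n => ∑ k, c₀ k * a k n) := IntSer.sum Finset.univ ha c₀
  have hex : ∃ n, ∑ k, c₀ k * a k n ≠ 0 := by
    by_contra! hcon
    have hΦ0 : ∀ z : ℂ, ‖z‖ < 1 → Φ z = 0 := by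
      intro z hz
      have h1 := hΦs z hz
      simp only [hcon, Int.cast_zero, zero_mul] at h1
      exact h1.unique hasSum_zero
    have h2 := bieval_ne_zero (L := L) (c := c) (fun τ hτ => by
      have h3 := hΦb (ex τ) (ex_ne_zero τ) (norm_ex_lt_one hτ)
      rw [hΦ0 _ (norm_ex_lt_one hτ)] at h3
      exact (mul_eq_zero.1 h3.symm).resolve_left
        (pow_ne_zero _ (t_ne_zero (ex_ne_zero τ) (norm_ex_lt_one hτ))))
    refine hc0 (funext fun k => ?_)
    rw [← hck k]
    exact h2 _ k.1.2 _ k.2.2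
  classical
  set M := Nat.find hex with hM
  have hMne : ∑ k, c₀ k * a k M ≠ 0 := Nat.find_spec hex
  have hMlt : ∀ n < M, ∑ k, c₀ k * a k n = 0 := fun n hn => by
    have := Nat.find_min hex hn
    push Not at this
    exact this
  have hMge : 2 * s ^ 4 ≤ M := by
    by_contra! hlt
    exact hMne (hcz M hlt)
  obtain ⟨Ψ, hΨs, hΨ⟩ := hΦs.shift M hMlt
  have hΨd : DifferentiableOn ℂ Ψ (ball 0 1) := IntHol.differentiableOn ⟨_, hΨs⟩
  have hs3 : (0 : ℝ) < (s : ℝ) ^ 3 := by positivity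
  refine ⟨c, M, Ψ, fun i j => ?_, hMge, hΨd, ?_, fun z hz0 hz => ?_, ?_⟩
  · rw [hc]; simp only
    split_ifs with h
    · refine (hcH _).trans (Real.exp_le_exp.2 ?_)
      rw [C₁]
      nlinarith
    · simp [Real.exp_nonneg]
  · rw [hΨs.apply_zero, Complex.norm_intCast, Nat.zero_add]
    exact_mod_cast Int.one_le_abs hMne
  · rw [← hΦb z hz0 hz, hΨ z hz]
  · have hMr : 2 * (s : ℝ) ^ 4 ≤ M := by exact_mod_cast hMge
    set u := √(M : ℝ) with hu
    have hu2 : u ^ 2 = M := Real.sq_sqrt (by positivity)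
    have hsu : (s : ℝ) ^ 2 ≤ u := by
      apply Real.le_sqrt_of_sq_le
      have : (0 : ℝ) ≤ (s : ℝ) ^ 4 := by positivity
      calc ((s : ℝ) ^ 2) ^ 2 = (s : ℝ) ^ 4 := by ring
        _ ≤ _ := by linarith
    have hu0 : 0 < u := by nlinarith
    have hη' : 0 < s / u := by positivity
    have hη'2 : s / u ≤ 1 / 2 := by
      rw [div_le_iff₀ hu0]; nlinarith
    have hsphere : ∀ z : ℂ, ‖z‖ = 1 - s / u → ‖Ψ z‖ ≤ Real.exp (C₁ * s * u) := by
      intro z hz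
      have hz1 : ‖z‖ < 1 := by linarith
      have hz0 : 0 < ‖z‖ := by linarith
      have h1 : ‖Φ z‖ ≤ (4 * s ^ 4) * (Real.exp ((154 + 2 * A₀) * s ^ 3) *
          Real.exp (2 * s ^ 2 * (A₀ + 72 / (s / u)))) := by
        rw [hΦ]; simp only
        calc _ ≤ ∑ k : Fin (L + 1) × Fin (L + 1), Real.exp ((154 + 2 * A₀) * s ^ 3) *
              Real.exp (2 * s ^ 2 * (A₀ + 72 / (s / u))) := by
              refine (norm_sum_le _ _).trans (Finset.sum_le_sum fun k _ => ?_)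
              rw [norm_mul, Complex.norm_intCast]
              exact mul_le_mul (hcH k) (hbound _ hη' k z hz.le) (norm_nonneg _) (Real.exp_nonneg _)
          _ = _ := by
              rw [Finset.sum_const, Finset.card_univ, hcard, nsmul_eq_mul]
              push_cast; ring
      have h2 : ‖Ψ z‖ = ‖Φ z‖ * (1 / (1 - s / u) ^ M) := by
        rw [hΨ z hz1, norm_mul, norm_pow, ← hz]
        field_simp
      have h3 := one_div_one_sub_pow_le hη' hη'2 M
      rw [h2]
      have hpos : (0 : ℝ) ≤ 1 / (1 - s / u) ^ M := by rw [← hz]; positivity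
      calc _ ≤ (Real.exp (6 * s ^ 3) * (Real.exp ((154 + 2 * A₀) * s ^ 3) *
          Real.exp (2 * s ^ 2 * (A₀ + 72 / (s / u))))) * Real.exp (2 * (s / u) * M) := by
            gcongr
            refine h1.trans ?_
            gcongr
            exact four_pow_le_exp (by linarith)
        _ = Real.exp (6 * s ^ 3 + ((154 + 2 * A₀) * s ^ 3 +
          2 * s ^ 2 * (A₀ + 72 / (s / u))) + 2 * (s / u) * M) := by
            simp only [Real.exp_add]
        _ ≤ _ := by
            apply Real.exp_le_exp.2
            have h4 : 2 * (s / u) * M = 2 * (s * u) := by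
              rw [← hu2]; field_simp
            have h5 : 2 * (s : ℝ) ^ 2 * (A₀ + 72 / (s / u)) = 2 * A₀ * s ^ 2 + 144 * (s * u) := by
              field_simp; ring
            have h6 : (s : ℝ) ^ 3 ≤ s * u := by nlinarith
            have h7 : (s : ℝ) ^ 2 ≤ s * u := by nlinarith
            rw [h4, h5, C₁]
            nlinarith
    intro z hz
    have hr0 : 0 < 1 - s / u := by linarith
    refine Complex.norm_le_of_forall_mem_frontier_norm_le (U := ball 0 (1 - s / u)) isBounded_ball
      ?_ (fun z hz => ?_) (by rw [closure_ball _ hr0.ne']; simpa using hz)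
    · refine DifferentiableOn.diffContOnCl ?_
      exact hΨd.mono ((closure_ball_subset_closedBall).trans (closedBall_subset_ball (by linarith)))
    · rw [frontier_ball _ hr0.ne', mem_sphere, dist_zero_right] at hz
      exact hsphere z hz

/-! ### Incompatibility of the growth conditions -/

/-- A weak form of Chebyshev's lower bound. -/
lemma chebyshev_weak {p : ℕ} (hp : 2 ≤ p) :
    (p : ℝ) ≤ 10 * (Nat.primeCounting p * Real.log p) := by
  have hpr : (2 : ℝ) ≤ p := by exact_mod_cast hp
  have hl : 0 < Real.log p := Real.log_pos (by linarith)
  have h1 := Chebyshev.pi_ge p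
  rw [div_le_iff₀ hl] at h1
  have h2 : Real.log (p + 1) ≤ 2 * Real.log 2 + ((p + 1) / 4 - 1) := by
    have h3 := Real.log_le_sub_one_of_pos (show (0 : ℝ) < (p + 1) / 4 by positivity)
    rw [Real.log_div (by positivity) (by norm_num),
      show (4 : ℝ) = 2 ^ 2 by norm_num, Real.log_pow] at h3
    push_cast at h3
    linarith
  have h4 := Real.log_two_gt_d9
  have h5 := Real.log_two_lt_d9
  nlinarith

lemma card_mul_le_sum (S : Finset ℕ) :
    (S.card : ℝ) * (S.card - 1) ≤ 2 * ∑ n ∈ S, (n : ℝ) := by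
  induction S using Finset.induction_on_max with
  | empty => simp
  | insert a S ha ih =>
    have hna : a ∉ S := fun h => lt_irrefl _ (ha a h)
    have hc : S.card ≤ a := by
      simpa using Finset.card_le_card (fun x hx => Finset.mem_range.2 (ha x hx) : S ⊆ Finset.range a)
    have hc' : (S.card : ℝ) ≤ a := by exact_mod_cast hc
    rw [Finset.card_insert_of_notMem hna, Finset.sum_insert hna]
    push_cast
    nlinarith

lemma sq_le_sum_primes {p : ℕ} (hp : p.Prime) :
    (p : ℝ) ^ 2 ≤ 1600 * Real.log p ^ 2 *
      (1 + ∑ n ∈ (Finset.range p).filter Nat.Prime, (n : ℝ)) := by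
  have h1 := chebyshev_weak hp.two_le
  have h2 := card_mul_le_sum ((Finset.range p).filter Nat.Prime)
  have h3 : Nat.primeCounting p = ((Finset.range p).filter Nat.Prime).card + 1 := by
    rw [Nat.primeCounting, Nat.primeCounting', Nat.count_succ, if_pos hp, Nat.count_eq_card_filter_range]
  rw [h3] at h1
  set k := ((Finset.range p).filter Nat.Prime).card
  set W := ∑ n ∈ (Finset.range p).filter Nat.Prime, (n : ℝ)
  push_cast at h1
  have h4 : ((k : ℝ) + 1) ^ 2 ≤ 16 * (1 + W) := by nlinarith [sq_nonneg ((k : ℝ) - 1)]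
  calc (p : ℝ) ^ 2 ≤ (10 * ((k + 1) * Real.log p)) ^ 2 := by gcongr
    _ = 100 * Real.log p ^ 2 * (k + 1) ^ 2 := by ring
    _ ≤ 100 * Real.log p ^ 2 * (16 * (1 + W)) := by gcongr
    _ = _ := by ring

lemma exists_log_pow_lt (D : ℝ) : ∃ P : ℝ, 1 ≤ P ∧ ∀ x ≥ P, D * Real.log x ^ 9 < x := by
  have h := (Real.isLittleO_pow_log_id_atTop (n := 9)).bound
    (show (0 : ℝ) < 1 / (|D| + 1) by positivity)
  obtain ⟨P, hP⟩ := eventually_atTop.1 h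
  refine ⟨max P 1, le_max_right _ _, fun x hx => ?_⟩
  have hx1 : 1 ≤ x := (le_max_right _ _).trans hx
  have h1 := hP x ((le_max_left _ _).trans hx)
  simp only [id, Real.norm_eq_abs] at h1
  rw [abs_of_pos (show 0 < x by linarith), one_div, ← div_eq_inv_mul, le_div_iff₀ (by positivity)] at h1
  have h2 : D * Real.log x ^ 9 ≤ |D| * |Real.log x ^ 9| := by
    rw [← abs_mul]; exact le_abs_self _
  by_cases h0 : |Real.log x ^ 9| = 0
  · rw [h0] at h2; linarith
  · have : 0 < |Real.log x ^ 9| := lt_of_le_of_ne (abs_nonneg _) (Ne.symm h0)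
    linarith

/-- The parameters `s`, `u = √M` and `p` satisfying both growth conditions stay bounded. -/
lemma growth_bounded (D : ℝ) (hD : 1 ≤ D) : ∃ B : ℝ, ∀ (s u : ℝ) (p : ℕ), 1 ≤ s → s ^ 2 ≤ u →
    2 ≤ p → (p : ℝ) ^ 2 ≤ D * Real.log p ^ 2 * (s * u) →
    u ^ 2 ≤ D * (s ^ 2 * (p * Real.log p)) → s ≤ B := by
  obtain ⟨P, hP1, hP⟩ := exists_log_pow_lt (D ^ 7)
  refine ⟨D ^ 6 * Real.log P ^ 8, fun s u p hs hsu hp h1 h2 => ?_⟩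
  have hpr : (2 : ℝ) ≤ p := by exact_mod_cast hp
  set l := Real.log p with hl
  have hl0 : 0 < l := Real.log_pos (by linarith)
  have hsu' : s ≤ u := by nlinarith
  have hu0 : 0 < u := by linarith
  have h3 : u ^ 3 ≤ D ^ 3 * s ^ 5 * l ^ 4 := by
    refine le_of_mul_le_mul_right ?_ hu0
    calc u ^ 3 * u = (u ^ 2) ^ 2 := by ring
      _ ≤ (D * (s ^ 2 * (p * l))) ^ 2 := by gcongr
      _ = D ^ 2 * s ^ 4 * l ^ 2 * (p : ℝ) ^ 2 := by ring
      _ ≤ D ^ 2 * s ^ 4 * l ^ 2 * (D * l ^ 2 * (s * u)) := by gcongr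
      _ = _ := by ring
  have h4 : u ≤ D ^ 6 * l ^ 8 := by
    refine le_of_mul_le_mul_right ?_ (show 0 < u ^ 5 by positivity)
    calc u * u ^ 5 = (u ^ 3) ^ 2 := by ring
      _ ≤ (D ^ 3 * s ^ 5 * l ^ 4) ^ 2 := by gcongr
      _ = D ^ 6 * l ^ 8 * (s ^ 2) ^ 5 := by ring
      _ ≤ D ^ 6 * l ^ 8 * u ^ 5 := by gcongr
  have h5 : (p : ℝ) ≤ D ^ 7 * l ^ 9 := by
    refine le_of_sq_le_sq ?_ (by positivity)
    calc (p : ℝ) ^ 2 ≤ D * l ^ 2 * (s * u) := h1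
      _ ≤ D * l ^ 2 * (D ^ 6 * l ^ 8 * (D ^ 6 * l ^ 8)) := by gcongr; exact hsu'.trans h4
      _ = D ^ 13 * l ^ 18 := by ring
      _ ≤ D ^ 14 * l ^ 18 := by gcongr; norm_num
      _ = _ := by ring
  have h6 : (p : ℝ) ≤ P := by
    by_contra! hlt
    exact absurd (hP p hlt.le) (not_lt.2 h5)
  have h7 : l ≤ Real.log P := Real.log_le_log (by linarith) h6
  calc s ≤ u := hsu'
    _ ≤ _ := h4
    _ ≤ _ := by gcongr

/-! ### Transcendence of one of `q`, `J(q)` -/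

lemma ratio_lower {r y : ℝ} (hr : 1 / 2 ≤ r) (hy0 : 0 < y) (hy : y ≤ 1 / 4) :
    y⁻¹ ≤ (r - y ^ 2) / y ^ 2 := by
  rw [le_div_iff₀ (by positivity), pow_two, inv_mul_cancel_left₀ hy0.ne']
  nlinarith

/-- The two inequalities produced by the auxiliary function and the first prime `p` at which it
does not vanish on `q₀ ^ p`, where `q₀ = exp (-l)`. -/
lemma two_inequalities {τ₀ : ℂ} (hτ₀ : 0 < τ₀.im) {l : ℝ} (hl : 2 * Real.log 2 ≤ l)
    (hql : ex τ₀ = (Real.exp (-l) : ℝ)) {C : ℝ}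
    (hC : ∀ (p : ℕ) [Fact p.Prime] (L : ℕ) (H : ℝ)
      (c : ℕ → ℕ → ℤ), 1 ≤ L → 1 ≤ H → (∀ i j, |(c i j : ℝ)| ≤ H) →
      bieval L c (ex τ₀ ^ p) (J (p * τ₀)) ≠ 0 →
      1 ≤ ‖bieval L c (ex τ₀ ^ p) (J (p * τ₀))‖
        * Real.exp (C * p * (Real.log H + L * (p * Real.log p)))) (hC1 : 1 ≤ C)
    {s : ℕ} (hs : 2 ≤ s) : ∃ (p M : ℕ), p.Prime ∧ 2 * s ^ 4 ≤ M ∧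
      l / 2 * ∑ n ∈ (Finset.range p).filter Nat.Prime, (n : ℝ) ≤ C₁ * s * √M ∧
      p * M * l / 2 ≤ C₁ * s * √M + C * p * (C₁ * s ^ 3 + 2 * s ^ 2 * (p * Real.log p)) := by
  classical
  obtain ⟨c, M, Ψ, hcH, hM, hΨd, hΨ0, hΨ, hΨb⟩ := exists_aux hs
  have hl0 : 0 < l := by have := Real.log_two_gt_d9; linarith
  have hsr : (2 : ℝ) ≤ s := by exact_mod_cast hs
  have hA := one_le_A₀
  have hC₁ : 1 ≤ C₁ := by rw [C₁]; linarith
  set L := 2 * s ^ 2 - 1 with hL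
  have hs2 : 4 ≤ s ^ 2 := by nlinarith
  have hL1 : 1 ≤ L := by omega
  have hLr : (L : ℝ) ≤ 2 * s ^ 2 := by
    have : L ≤ 2 * s ^ 2 := by omega
    exact_mod_cast this
  have hMr : 2 * (s : ℝ) ^ 4 ≤ M := by exact_mod_cast hM
  set u := √(M : ℝ) with hu
  have hu2 : u ^ 2 = M := Real.sq_sqrt (by positivity)
  have hsu : (s : ℝ) ^ 2 ≤ u := by
    apply Real.le_sqrt_of_sq_le
    have : (0 : ℝ) ≤ (s : ℝ) ^ 4 := by positivity
    calc ((s : ℝ) ^ 2) ^ 2 = (s : ℝ) ^ 4 := by ring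
      _ ≤ _ := by linarith
  have hu0 : 0 < u := by nlinarith
  have hη' : 0 < s / u := by positivity
  have hη'2 : s / u ≤ 1 / 2 := by
    rw [div_le_iff₀ hu0]; nlinarith
  have hqn : ∀ n : ℕ, ex τ₀ ^ n = ((Real.exp (-(n * l)) : ℝ) : ℂ) := by
    intro n
    rw [hql, ← Complex.ofReal_pow, ← Real.exp_nat_mul]
    congr 2; ring
  have hnorm : ∀ n : ℕ, ‖ex τ₀ ^ n‖ = Real.exp (-(n * l)) := by
    intro n
    rw [hqn, Complex.norm_real, Real.norm_of_nonneg (Real.exp_nonneg _)]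
  -- for primes `n`, half the exponent already gives a number at most `1/4`
  have hquart : ∀ n : ℕ, 2 ≤ n → Real.exp (-(n * l / 2)) ≤ 1 / 4 := by
    intro n hn
    have hn' : (2 : ℝ) ≤ n := by exact_mod_cast hn
    have h1 : (1 / 4 : ℝ) = Real.exp (-(2 * Real.log 2)) := by
      rw [Real.exp_neg, mul_comm, Real.exp_mul, Real.exp_log (by norm_num)]; norm_num
    rw [h1]
    apply Real.exp_le_exp.2
    nlinarith
  have hsq : ∀ n : ℕ, Real.exp (-(n * l)) = Real.exp (-(n * l / 2)) ^ 2 := by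
    intro n
    rw [← Real.exp_nat_mul]; congr 1; push_cast; ring
  have hle : ∀ n : ℕ, 2 ≤ n → Real.exp (-(n * l)) ≤ 1 / 16 := by
    intro n hn
    rw [hsq]
    have := hquart n hn
    have h0 := Real.exp_pos (-(n * l / 2))
    nlinarith
  have hval : ∀ n : ℕ, 2 ≤ n →
      t (ex τ₀ ^ n) ^ L * bieval L c (ex τ₀ ^ n) (J (n * τ₀)) = (ex τ₀ ^ n) ^ M * Ψ (ex τ₀ ^ n) := by
    intro n hn
    rw [J, ex_nat_mul]
    refine hΨ _ (pow_ne_zero _ (ex_ne_zero _)) ?_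
    rw [hnorm]; linarith [hle n hn]
  -- some prime is not a zero, since `Ψ 0 ≠ 0`
  have hex : ∃ p : ℕ, p.Prime ∧ Ψ (ex τ₀ ^ p) ≠ 0 := by
    have h1 : ContinuousAt Ψ 0 :=
      (hΨd.differentiableAt (isOpen_ball.mem_nhds (by simp))).continuousAt
    have h2 : Ψ 0 ≠ 0 := by
      intro h; rw [h, norm_zero] at hΨ0; linarith
    have h3 : Tendsto (fun n : ℕ => ex τ₀ ^ n) atTop (𝓝 0) :=
      tendsto_pow_atTop_nhds_zero_of_norm_lt_one (norm_ex_lt_one hτ₀)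
    have h4 : ∀ᶠ n : ℕ in atTop, Ψ (ex τ₀ ^ n) ≠ 0 :=
      (h1.tendsto.comp h3).eventually_ne h2
    obtain ⟨N, hN⟩ := eventually_atTop.1 h4
    obtain ⟨p, hpN, hp⟩ := Nat.exists_infinite_primes N
    exact ⟨p, hp, hN p hpN⟩
  set p := Nat.find hex with hp
  obtain ⟨hpp, hpne⟩ : p.Prime ∧ Ψ (ex τ₀ ^ p) ≠ 0 := Nat.find_spec hex
  have hpmin : ∀ n < p, n.Prime → Ψ (ex τ₀ ^ n) = 0 := by
    intro n hn hnp
    by_contra h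
    exact Nat.find_min hex hn ⟨hnp, h⟩
  refine ⟨p, M, hpp, hM, ?_, ?_⟩
  · set S := (Finset.range p).filter Nat.Prime with hS
    have hS2 : ∀ n ∈ S, n < p ∧ n.Prime := fun n hn => by
      rw [hS, Finset.mem_filter, Finset.mem_range] at hn; exact hn
    have hinj : Function.Injective fun n : ℕ => ex τ₀ ^ n := by
      intro m n hmn
      have h1 := congrArg norm hmn
      simp only [hnorm] at h1
      have h2 := Real.exp_injective h1
      have h3 : (m : ℝ) = n := by
        have : (m : ℝ) * l = n * l := by linarith
        exact mul_right_cancel₀ hl0.ne' this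
      exact_mod_cast h3
    have h1 := schwarz_zeros (r := 1 - s / u) (by linarith) (by linarith)
      (S.image fun n : ℕ => ex τ₀ ^ n) hΨd (fun z hz => hΨb z hz.le) (by
        intro x hx
        obtain ⟨n, hn, rfl⟩ := Finset.mem_image.1 hx
        refine ⟨pow_ne_zero _ (ex_ne_zero _), ?_, hpmin n (hS2 n hn).1 (hS2 n hn).2⟩
        rw [hnorm]
        linarith [hle n (hS2 n hn).2.two_le])
    rw [Finset.prod_image hinj.injOn] at h1
    have h2 : Real.exp (∑ n ∈ S, (n : ℝ) * l / 2) ≤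
        ∏ n ∈ S, (1 - s / u - ‖ex τ₀ ^ n‖) / ‖ex τ₀ ^ n‖ := by
      rw [Real.exp_sum]
      refine Finset.prod_le_prod (fun _ _ => Real.exp_nonneg _) fun n hn => ?_
      rw [hnorm, hsq]
      have := ratio_lower (r := 1 - s / u) (by linarith) (Real.exp_pos _)
        (hquart n (hS2 n hn).2.two_le)
      rwa [← Real.exp_neg, neg_neg] at this
    have h3 : Real.exp (∑ n ∈ S, (n : ℝ) * l / 2) ≤ Real.exp (C₁ * s * u) := by
      refine h2.trans (le_trans ?_ h1)
      exact le_mul_of_one_le_left ((Real.exp_nonneg _).trans h2) hΨ0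
    have h4 := Real.exp_le_exp.1 h3
    rw [← Finset.sum_div, ← Finset.sum_mul] at h4
    linarith
  · have : Fact p.Prime := ⟨hpp⟩
    have hv := hval p hpp.two_le
    have hz0 : ex τ₀ ^ p ≠ 0 := pow_ne_zero _ (ex_ne_zero _)
    have hbne : bieval L c (ex τ₀ ^ p) (J (p * τ₀)) ≠ 0 := by
      intro h
      rw [h, mul_zero] at hv
      exact mul_ne_zero (pow_ne_zero _ hz0) hpne hv.symm
    have h1 := hC p L (Real.exp (C₁ * s ^ 3)) c hL1 (Real.one_le_exp (by positivity)) hcH hbne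
    rw [Real.log_exp] at h1
    set θ := ‖bieval L c (ex τ₀ ^ p) (J (p * τ₀))‖ with hθ
    have h2 : Real.exp (-(p * l)) ≤ ‖t (ex τ₀ ^ p)‖ := by
      rw [t, norm_mul, norm_pow (g _), hnorm]
      have h3 : 1 ≤ ‖g (ex τ₀ ^ p)‖ := by
        rw [hqn]
        exact one_le_norm_g_ofReal (Real.exp_nonneg _) (by linarith [hle p hpp.two_le])
      exact le_mul_of_one_le_right (Real.exp_nonneg _) (one_le_pow₀ h3)
    have h3 : Real.exp (-(p * l)) ^ L * θ ≤ Real.exp (-(p * l)) ^ M * Real.exp (C₁ * s * u) := by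
      calc _ ≤ ‖t (ex τ₀ ^ p)‖ ^ L * θ := by gcongr
        _ = ‖ex τ₀ ^ p‖ ^ M * ‖Ψ (ex τ₀ ^ p)‖ := by
            rw [hθ, ← norm_pow, ← norm_mul, hv, norm_mul, norm_pow]
        _ ≤ _ := by
            rw [hnorm]
            gcongr
            exact hΨb _ (by rw [hnorm]; linarith [hle p hpp.two_le])
    have hpr : (2 : ℝ) ≤ p := by exact_mod_cast hpp.two_le
    set W := C * p * (C₁ * s ^ 3 + L * (p * Real.log p)) with hW
    have h4 : Real.exp (-(p * l)) ^ L ≤ Real.exp (-(p * l)) ^ M * Real.exp (C₁ * s * u) *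
        Real.exp W := by
      calc _ ≤ Real.exp (-(p * l)) ^ L * (θ * Real.exp W) :=
            le_mul_of_one_le_right (by positivity) h1
        _ = Real.exp (-(p * l)) ^ L * θ * Real.exp W := by ring
        _ ≤ _ := by gcongr
    rw [← Real.exp_nat_mul, ← Real.exp_nat_mul, ← Real.exp_add, ← Real.exp_add,
      Real.exp_le_exp] at h4
    have hlog : 0 ≤ Real.log p := Real.log_nonneg (by linarith)
    have h5 : W ≤ C * p * (C₁ * s ^ 3 + 2 * s ^ 2 * (p * Real.log p)) := by
      rw [hW]; gcongr
    have h6 : (L : ℝ) ≤ M / 2 := by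
      have : (4 : ℝ) ≤ (s : ℝ) ^ 2 := by exact_mod_cast hs2
      nlinarith
    have h7 : L * (p * l) ≤ M / 2 * (p * l) := by gcongr
    linarith

/-- If `0 < q₀ ≤ 1/4` is real, then `q₀` and `J(q₀)` are not both algebraic. -/
theorem not_both_algebraic {τ₀ : ℂ} (hτ₀ : 0 < τ₀.im) {q₀ : ℝ} (hq0 : 0 < q₀) (hq1 : q₀ ≤ 1 / 4)
    (hqe : ex τ₀ = q₀) (hq : IsAlgebraic ℚ (ex τ₀)) (hj : IsAlgebraic ℚ (J τ₀)) : False := by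
  obtain ⟨C, hC1, hC⟩ := exists_lower_bound hτ₀ hq hj
  set l := -Real.log q₀ with hl
  have hl2 : 2 * Real.log 2 ≤ l := by
    have h1 := Real.log_le_log hq0 hq1
    rw [show (1 / 4 : ℝ) = (2 ^ 2)⁻¹ by norm_num, Real.log_inv, Real.log_pow] at h1
    push_cast at h1
    linarith
  have hl1 : 1 ≤ l := by have := Real.log_two_gt_d9; linarith
  have hql : ex τ₀ = (Real.exp (-l) : ℝ) := by rw [hl, neg_neg, Real.exp_log hq0, hqe]
  have hA := one_le_A₀
  have hC₁ : 1 ≤ C₁ := by rw [C₁]; linarith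
  obtain ⟨B, hB⟩ := growth_bounded (1600 * (1 + 2 * C₁) + 8 * C) (by linarith)
  obtain ⟨s, hs⟩ := exists_nat_gt (max (max B 2) (4 * (C₁ + C * C₁)))
  have hsB : B < s := (le_max_left _ _).trans_lt ((le_max_left _ _).trans_lt hs)
  have hs2 : (2 : ℝ) < s := (le_max_right _ _).trans_lt ((le_max_left _ _).trans_lt hs)
  have hsC : 4 * (C₁ + C * C₁) < s := (le_max_right _ _).trans_lt hs
  obtain ⟨p, M, hp, hM, h1, h2⟩ := two_inequalities hτ₀ hl2 hql hC hC1
    (s := s) (by exact_mod_cast hs2.le)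
  have hMr : 2 * (s : ℝ) ^ 4 ≤ M := by exact_mod_cast hM
  have hu2 : √(M : ℝ) ^ 2 = M := Real.sq_sqrt (by positivity)
  have hsu : (s : ℝ) ^ 2 ≤ √(M : ℝ) := by
    apply Real.le_sqrt_of_sq_le
    have : (0 : ℝ) ≤ (s : ℝ) ^ 4 := by positivity
    calc ((s : ℝ) ^ 2) ^ 2 = (s : ℝ) ^ 4 := by ring
      _ ≤ _ := by linarith
  set u := √(M : ℝ) with hu
  have hpr : (2 : ℝ) ≤ p := by exact_mod_cast hp.two_le
  have hs0 : (0 : ℝ) < s := by linarith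
  have hlog : 0 < Real.log p := Real.log_pos (by linarith)
  have hu0 : 0 < u := by nlinarith
  have hsu1 : 1 ≤ (s : ℝ) * u := by nlinarith
  refine absurd (hB s u p (by linarith) hsu hp.two_le ?_ ?_) (not_le.2 hsB)
  · have h3 := sq_le_sum_primes hp
    set W := ∑ n ∈ (Finset.range p).filter Nat.Prime, (n : ℝ)
    have hW : 0 ≤ W := Finset.sum_nonneg fun _ _ => Nat.cast_nonneg _
    have h4 : 1 + W ≤ (1 + 2 * C₁) * (s * u) := by nlinarith
    calc _ ≤ _ := h3
      _ ≤ 1600 * Real.log p ^ 2 * ((1 + 2 * C₁) * (s * u)) := by gcongr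
      _ = (1600 * (1 + 2 * C₁)) * Real.log p ^ 2 * (s * u) := by ring
      _ ≤ _ := by gcongr; linarith
  · -- divide by `p`; the two terms without `p log p` are absorbed because `s` is large
    have h3 : u ^ 2 * l / 2 ≤ (C₁ + C * C₁) * (u ^ 2 / s) + 2 * C * (s ^ 2 * (p * Real.log p)) := by
      have h4 : s * u ≤ u ^ 2 / s := by
        rw [le_div_iff₀ hs0]; nlinarith
      have h5 : (s : ℝ) ^ 3 ≤ u ^ 2 / s := by
        rw [le_div_iff₀ hs0]
        calc (s : ℝ) ^ 3 * s = (s ^ 2) ^ 2 := by ring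
          _ ≤ _ := by gcongr
      have hp0 : (0 : ℝ) < p := by linarith
      refine le_of_mul_le_mul_left ?_ hp0
      have h6 : C₁ * (s * u) ≤ p * (C₁ * (u ^ 2 / s)) := by
        have h7 : C₁ * (s * u) ≤ C₁ * (u ^ 2 / s) := by gcongr
        have h8 : 0 ≤ C₁ * (u ^ 2 / s) := by positivity
        nlinarith
      have h9 : C * p * (C₁ * s ^ 3) ≤ C * p * (C₁ * (u ^ 2 / s)) := by gcongr
      calc p * (u ^ 2 * l / 2) = p * M * l / 2 := by rw [hu2]; ring
        _ ≤ _ := h2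
        _ = C₁ * (s * u) + C * p * (C₁ * s ^ 3) + C * p * (2 * s ^ 2 * (p * Real.log p)) := by ring
        _ ≤ p * (C₁ * (u ^ 2 / s)) + C * p * (C₁ * (u ^ 2 / s))
            + C * p * (2 * s ^ 2 * (p * Real.log p)) := by gcongr
        _ = _ := by ring
    have h4 : (C₁ + C * C₁) * (u ^ 2 / s) ≤ u ^ 2 / 4 := by
      rw [mul_div_assoc', div_le_iff₀ hs0]
      nlinarith [sq_nonneg u]
    have h5 : u ^ 2 ≤ u ^ 2 * l := le_mul_of_one_le_right (by positivity) hl1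
    have h6 : 0 ≤ (s : ℝ) ^ 2 * (p * Real.log p) := by positivity
    calc u ^ 2 ≤ 8 * C * (s ^ 2 * (p * Real.log p)) := by linarith
      _ ≤ _ := by gcongr; linarith

/-! ### The Fibonacci product as an eta quotient -/

/-- The square of the inverse golden ratio, `Q = (3 - √5) / 2`. -/
def Q : ℝ := (Real.goldenRatio ^ 2)⁻¹

lemma Q_pos : 0 < Q := by have := Real.goldenRatio_pos; rw [Q]; positivity

lemma Q_le : Q ≤ 1 / 2 := by
  have h := Real.goldenRatio_sq
  have h1 := Real.one_lt_goldenRatio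
  rw [Q, h, inv_eq_one_div]
  gcongr
  linarith

lemma gold_mul_Q (n : ℕ) : Real.goldenRatio ^ n * Q ^ n = (Real.goldenRatio⁻¹) ^ n := by
  have h := Real.goldenRatio_ne_zero
  rw [← mul_pow, Q]
  congr 1
  field_simp

lemma fib_even (j : ℕ) :
    (Nat.fib (2 * j) : ℝ) = Real.goldenRatio ^ (2 * j) * (1 - Q ^ (2 * j)) / √5 := by
  rw [Real.coe_fib_eq, mul_sub, gold_mul_Q, mul_one, Real.inv_goldenRatio, Even.neg_pow ⟨j, by ring⟩]

lemma fib_odd (j : ℕ) :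
    (Nat.fib (2 * j + 1) : ℝ) = Real.goldenRatio ^ (2 * j + 1) * (1 + Q ^ (2 * j + 1)) / √5 := by
  rw [Real.coe_fib_eq, mul_add, gold_mul_Q, mul_one, Real.inv_goldenRatio, Odd.neg_pow ⟨j, by ring⟩]
  ring

/-- The Lucas numbers of even index. -/
lemma lucas_even (j : ℕ) :
    2 * (Nat.fib (2 * j + 1) : ℝ) - Nat.fib (2 * j) =
      Real.goldenRatio ^ (2 * j) * (1 + Q ^ (2 * j)) := by
  rw [mul_add, gold_mul_Q, mul_one, Real.inv_goldenRatio, Even.neg_pow ⟨j, by ring⟩,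
    Real.coe_fib_eq, Real.coe_fib_eq, pow_succ, pow_succ]
  have h5 : √(5 : ℝ) ≠ 0 := by positivity
  have h1 : 2 * Real.goldenRatio = 1 + √5 := by rw [Real.goldenRatio]; ring
  have h2 : 2 * Real.goldenConj = 1 - √5 := by rw [Real.goldenConj]; ring
  rw [mul_div_assoc', ← sub_div, div_eq_iff h5]
  linear_combination Real.goldenRatio ^ (2 * j) * h1 - Real.goldenConj ^ (2 * j) * h2

/-- Cassini's identity. -/
lemma cassini (j : ℕ) : (Nat.fib (2 * j + 1) : ℝ) ^ 2 - Nat.fib (2 * j) * Nat.fib (2 * j + 1)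
    - Nat.fib (2 * j) ^ 2 = 1 := by
  induction j with
  | zero => simp
  | succ j ih =>
    have h1 : Nat.fib (2 * (j + 1)) = Nat.fib (2 * j) + Nat.fib (2 * j + 1) := Nat.fib_add_two
    have h2 : Nat.fib (2 * (j + 1) + 1) = Nat.fib (2 * j + 1) + Nat.fib (2 * (j + 1)) :=
      Nat.fib_add_two
    rw [h2, h1]
    push_cast
    linear_combination ih

lemma F_eq_fib (n : ℕ) : F n = Nat.fib (n + 1) := by
  induction n using Nat.twoStepInduction with
  | zero => rfl
  | one => rfl
  | more n h1 h2 => rw [F, h1, h2, Nat.fib_add_two (n := n + 1), add_comm]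

/-- `∏ (1 + Q ^ (2 n + 1))` over `n < K`. -/
def pA (K : ℕ) : ℝ := ∏ n ∈ Finset.range K, (1 + Q ^ (2 * n + 1))
/-- `∏ (1 + Q ^ (2 n + 2))` over `n < K`. -/
def pG (K : ℕ) : ℝ := ∏ n ∈ Finset.range K, (1 + Q ^ (2 * n + 2))

lemma pA_pos (K : ℕ) : 0 < pA K := Finset.prod_pos fun n _ => by have := Q_pos; positivity
lemma pG_pos (K : ℕ) : 0 < pG K := Finset.prod_pos fun n _ => by have := Q_pos; positivity

/-- Four consecutive factors of the product, expressed through `a = fib (2 j)` and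
`b = fib (2 j + 1)`; Cassini's identity factors each `fib (4 j + i) + 1`. -/
lemma four_factors {a b : ℝ} (ha : 0 < a) (hab : a ≤ b) (h : b ^ 2 - a * b - a ^ 2 = 1) :
    (1 + 1 / (a * (2 * b - a))) * (1 + 1 / (a ^ 2 + b ^ 2)) * (1 + 1 / (2 * a * b + b ^ 2)) *
      (1 + 1 / (a ^ 2 + 2 * a * b + 2 * b ^ 2)) =
    (b - a) * b * (a + b) * (2 * b - a) * (3 * b + a) /
      (a * (a ^ 2 + b ^ 2) * (a ^ 2 + 2 * a * b + 2 * b ^ 2)) := by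
  have hb : 0 < b := by linarith
  have h2 : 0 < 2 * b - a := by linarith
  have e1 : 1 + 1 / (a * (2 * b - a)) = (b - a) * (b + 2 * a) / (a * (2 * b - a)) := by
    rw [eq_div_iff (by positivity), add_mul, one_div, inv_mul_cancel₀ (by positivity)]
    linear_combination -h
  have e2 : 1 + 1 / (a ^ 2 + b ^ 2) = b * (2 * b - a) / (a ^ 2 + b ^ 2) := by
    rw [eq_div_iff (by positivity), add_mul, one_div, inv_mul_cancel₀ (by positivity)]
    linear_combination -h
  have e3 : 1 + 1 / (2 * a * b + b ^ 2) = (a + b) * (2 * b - a) / (b * (b + 2 * a)) := by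
    rw [show 2 * a * b + b ^ 2 = b * (b + 2 * a) by ring,
      eq_div_iff (by positivity), add_mul, one_div, inv_mul_cancel₀ (by positivity)]
    linear_combination -h
  have e4 : 1 + 1 / (a ^ 2 + 2 * a * b + 2 * b ^ 2) =
      b * (3 * b + a) / (a ^ 2 + 2 * a * b + 2 * b ^ 2) := by
    rw [eq_div_iff (by positivity), add_mul, one_div, inv_mul_cancel₀ (by positivity)]
    linear_combination -h
  rw [e1, e2, e3, e4]
  field_simp

/-- The partial products of `∏ (1 + 1 / F n)` at the indices `4 K + 2`. -/
lemma partial_product (K : ℕ) :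
    ∏ n ∈ Finset.Icc 1 (4 * K + 2), (1 + 1 / (F n : ℝ)) =
      3 * (pA K * pA (K + 1) * (1 - Q ^ (2 * K + 2)) * (pG K * pG (K + 1)) * (1 + Q ^ 3)) /
        ((1 - Q ^ 2) * (1 + Q ^ 2) * pA (2 * K + 2)) := by
  have hQ0 := Q_pos
  have hQ1 := Q_le
  have hQ2 : Q ^ 2 < 1 := by nlinarith
  have hQ2' : 1 - Q ^ 2 ≠ 0 := by linarith
  induction K with
  | zero =>
    simp [pA, pG, Finset.prod_range_succ, Finset.prod_Icc_succ_top, F]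
    field_simp
    norm_num
  | succ K ih =>
    rw [show 4 * (K + 1) + 2 = 4 * K + 2 + 1 + 1 + 1 + 1 by ring,
      Finset.prod_Icc_succ_top (by omega), Finset.prod_Icc_succ_top (by omega),
      Finset.prod_Icc_succ_top (by omega), Finset.prod_Icc_succ_top (by omega), ih]
    set a : ℝ := (Nat.fib (2 * (K + 1)) : ℝ) with ha
    set b : ℝ := (Nat.fib (2 * (K + 1) + 1) : ℝ) with hb
    have hc : b ^ 2 - a * b - a ^ 2 = 1 := cassini (K + 1)
    have ha0 : 0 < a := by rw [ha]; exact_mod_cast Nat.fib_pos.2 (by omega)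
    have hab : a ≤ b := by
      rw [ha, hb]; exact_mod_cast Nat.fib_le_fib_succ
    have hab1 : b - a = Nat.fib (2 * K + 1) := by
      have : Nat.fib (2 * (K + 1) + 1) = Nat.fib (2 * K + 1) + Nat.fib (2 * (K + 1)) :=
        Nat.fib_add_two
      rw [hb, this]; push_cast; ring
    have hab2 : a + b = Nat.fib (2 * (K + 2)) := by
      have : Nat.fib (2 * (K + 2)) = Nat.fib (2 * (K + 1)) + Nat.fib (2 * (K + 1) + 1) :=
        Nat.fib_add_two
      rw [this]; push_cast; ring
    have hab3 : a + 2 * b = Nat.fib (2 * (K + 2) + 1) := by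
      have : Nat.fib (2 * (K + 2) + 1) = Nat.fib (2 * (K + 1) + 1) + Nat.fib (2 * (K + 2)) :=
        Nat.fib_add_two
      rw [this]; push_cast; rw [← hab2]; ring
    have f1 : (F (4 * K + 2 + 1) : ℝ) = a * (2 * b - a) := by
      rw [F_eq_fib, show 4 * K + 2 + 1 + 1 = 2 * (2 * (K + 1)) by ring, Nat.fib_two_mul,
        Nat.cast_mul, Nat.cast_sub (Nat.fib_le_fib_succ.trans (by omega))]
      push_cast; rfl
    have f2 : (F (4 * K + 2 + 1 + 1) : ℝ) = a ^ 2 + b ^ 2 := by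
      rw [F_eq_fib, show 4 * K + 2 + 1 + 1 + 1 = 2 * (2 * (K + 1)) + 1 by ring,
        Nat.fib_two_mul_add_one]
      push_cast; rw [← ha, ← hb]; ring
    have f3 : (F (4 * K + 2 + 1 + 1 + 1) : ℝ) = 2 * a * b + b ^ 2 := by
      rw [F]; push_cast; rw [f1, f2]; ring
    have f4 : (F (4 * K + 2 + 1 + 1 + 1 + 1) : ℝ) = a ^ 2 + 2 * a * b + 2 * b ^ 2 := by
      rw [F]; push_cast; rw [f2, f3]; ring
    have g1 : a ^ 2 + b ^ 2 = Nat.fib (2 * (2 * K + 2) + 1) := by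
      rw [← f2, F_eq_fib]; congr 2; ring
    have g2 : a ^ 2 + 2 * a * b + 2 * b ^ 2 = Nat.fib (2 * (2 * K + 3) + 1) := by
      rw [← f4, F_eq_fib]; congr 2; ring
    have key := four_factors ha0 hab hc
    rw [f1, f2, f3, f4]
    have k1 : a = Real.goldenRatio ^ (2 * K + 2) * (1 - Q ^ (2 * K + 2)) / √5 := fib_even (K + 1)
    have k2 : b = Real.goldenRatio ^ (2 * K + 3) * (1 + Q ^ (2 * K + 3)) / √5 := fib_odd (K + 1)
    have k3 : b - a = Real.goldenRatio ^ (2 * K + 1) * (1 + Q ^ (2 * K + 1)) / √5 :=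
      hab1.trans (fib_odd K)
    have k4 : a + b = Real.goldenRatio ^ (2 * K + 4) * (1 - Q ^ (2 * K + 4)) / √5 :=
      hab2.trans (fib_even (K + 2))
    have k5 : 2 * b - a = Real.goldenRatio ^ (2 * K + 2) * (1 + Q ^ (2 * K + 2)) :=
      lucas_even (K + 1)
    have k6 : 3 * b + a = Real.goldenRatio ^ (2 * K + 4) * (1 + Q ^ (2 * K + 4)) := by
      have := lucas_even (K + 2)
      rw [← hab2, ← hab3] at this
      rw [show 2 * K + 4 = 2 * (K + 2) by ring, ← this]; ring
    have k7 : a ^ 2 + b ^ 2 = Real.goldenRatio ^ (4 * K + 5) * (1 + Q ^ (4 * K + 5)) / √5 := by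
      rw [g1, fib_odd, show 2 * (2 * K + 2) + 1 = 4 * K + 5 by ring]
    have k8 : a ^ 2 + 2 * a * b + 2 * b ^ 2 =
        Real.goldenRatio ^ (4 * K + 7) * (1 + Q ^ (4 * K + 7)) / √5 := by
      rw [g2, fib_odd, show 2 * (2 * K + 3) + 1 = 4 * K + 7 by ring]
    have key2 : (1 + 1 / (a * (2 * b - a))) * (1 + 1 / (a ^ 2 + b ^ 2)) *
        (1 + 1 / (2 * a * b + b ^ 2)) * (1 + 1 / (a ^ 2 + 2 * a * b + 2 * b ^ 2)) =
        (1 + Q ^ (2 * K + 1)) * (1 + Q ^ (2 * K + 3)) * (1 - Q ^ (2 * K + 4)) *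
          (1 + Q ^ (2 * K + 2)) * (1 + Q ^ (2 * K + 4)) /
          ((1 - Q ^ (2 * K + 2)) * (1 + Q ^ (4 * K + 5)) * (1 + Q ^ (4 * K + 7))) := by
      rw [key, k3, k4, k5, k6, k7, k8, k2, k1]
      have hg := Real.goldenRatio_pos
      have hQn : Q ^ (2 * K + 2) < 1 := pow_lt_one₀ hQ0.le (by linarith) (by omega)
      have hne : 1 - Q ^ (2 * K + 2) ≠ 0 := by linarith
      have h5 : (0 : ℝ) < √5 := by positivity
      rw [div_eq_div_iff (by positivity) (by positivity)]
      field_simp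
      ring
    have hA1 : pA (K + 1 + 1) = pA (K + 1) * (1 + Q ^ (2 * K + 3)) := Finset.prod_range_succ _ _
    have hA0 : pA (K + 1) = pA K * (1 + Q ^ (2 * K + 1)) := Finset.prod_range_succ _ _
    have hG1 : pG (K + 1 + 1) = pG (K + 1) * (1 + Q ^ (2 * K + 4)) := Finset.prod_range_succ _ _
    have hG0 : pG (K + 1) = pG K * (1 + Q ^ (2 * K + 2)) := Finset.prod_range_succ _ _
    have hA2 : pA (2 * (K + 1) + 2) = pA (2 * K + 2) * (1 + Q ^ (4 * K + 5)) *
        (1 + Q ^ (4 * K + 7)) := by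
      rw [show 2 * (K + 1) + 2 = 2 * K + 2 + 1 + 1 by ring, pA, Finset.prod_range_succ,
        Finset.prod_range_succ, ← pA]
      congr 3 <;> ring
    have hQn : Q ^ (2 * K + 2) < 1 := pow_lt_one₀ hQ0.le (by linarith) (by omega)
    have hne : 1 - Q ^ (2 * K + 2) ≠ 0 := by linarith
    have hp1 := pA_pos (2 * K + 2)
    rw [mul_assoc, mul_assoc, mul_assoc, ← mul_assoc (1 + 1 / (a * (2 * b - a))),
      ← mul_assoc (_ * _) (1 + 1 / (2 * a * b + b ^ 2)), key2, hA1, hA0, hG1, hG0, hA2,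
      show 2 * (K + 1) + 2 = 2 * K + 4 by ring]
    field_simp

lemma norm_Q_lt : ‖(Q : ℂ)‖ < 1 := by
  rw [Complex.norm_real, Real.norm_of_nonneg Q_pos.le]; linarith [Q_le]

lemma tendsto_pA : Tendsto (fun K => (pA K : ℂ)) atTop (𝓝 (gi (-Q))) := by
  have h1 := (prodE_multipliable (ε := -1) (by simp) (e := fun n => 2 * n + 1)
    (fun _ => by omega) (z := -(Q : ℂ)) (by simpa using norm_Q_lt)).hasProd.tendsto_prod_nat
  refine h1.congr fun K => ?_
  rw [pA]
  push_cast
  refine Finset.prod_congr rfl fun n _ => ?_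
  rw [Odd.neg_pow ⟨n, rfl⟩]
  ring

lemma tendsto_pG : Tendsto (fun K => (pG K : ℂ)) atTop (𝓝 (g ((Q : ℂ) ^ 2))) := by
  have h0 : ‖(Q : ℂ) ^ 2‖ < 1 := by
    rw [norm_pow]; exact pow_lt_one₀ (norm_nonneg _) norm_Q_lt two_ne_zero
  have h1 := (prodE_multipliable (ε := 1) (by simp) (e := fun n => n + 1)
    (fun _ => le_rfl) h0).hasProd.tendsto_prod_nat
  refine h1.congr fun K => ?_
  rw [pG]
  push_cast
  refine Finset.prod_congr rfl fun n _ => ?_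
  rw [← pow_mul]
  ring

/-- The algebraic factor relating the Fibonacci product to an eta quotient. -/
def κ : ℂ := 3 * (1 + (Q : ℂ) ^ 3) / ((1 - (Q : ℂ) ^ 2) * (1 + (Q : ℂ) ^ 2))

lemma κ_ofReal : κ = ((3 * (1 + Q ^ 3) / ((1 - Q ^ 2) * (1 + Q ^ 2)) : ℝ) : ℂ) := by
  rw [κ]; push_cast; rfl

lemma κ_ne_zero : κ ≠ 0 := by
  have h0 := Q_pos
  have h1 := Q_le
  have h2 : 0 < 1 - Q ^ 2 := by nlinarith
  rw [κ_ofReal]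
  exact_mod_cast (by positivity : (0 : ℝ) < _).ne'

lemma isAlgebraic_Q : IsAlgebraic ℚ (Q : ℂ) := by
  -- `Q` is a root of `X ^ 2 - 3 X + 1`
  have hg := Real.goldenRatio_ne_zero
  have h : Q ^ 2 - 3 * Q + 1 = 0 := by
    have h2 := Real.goldenRatio_sq
    rw [Q]
    generalize Real.goldenRatio = x at *
    field_simp
    linear_combination (x ^ 2 + x - 1) * h2
  have hC : (Q : ℂ) ^ 2 - 3 * Q + 1 = 0 := by exact_mod_cast h
  refine ⟨Polynomial.X ^ 2 - Polynomial.C 3 * Polynomial.X + Polynomial.C 1, ?_, ?_⟩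
  · intro h0
    have := congrArg (fun p => Polynomial.coeff p 0) h0
    simp at this
  · simpa using hC

lemma isAlgebraic_κ : IsAlgebraic ℚ κ := by
  have h1 : IsAlgebraic ℚ (1 : ℂ) := isAlgebraic_one
  have h3 : IsAlgebraic ℚ (3 : ℂ) := by exact_mod_cast isAlgebraic_natCast (R := ℚ) (A := ℂ) 3
  have hQ := isAlgebraic_Q
  rw [κ, div_eq_mul_inv]
  exact (h3.mul (h1.add (hQ.pow 3))).mul
    ((h1.sub (hQ.pow 2)).mul (h1.add (hQ.pow 2))).inv

lemma limit_eq {ξ1 : ℝ} (h1 : Tendsto (fun N : ℕ => ∏ n ∈ Finset.Icc 1 N, (1 + 1 / (F n : ℝ)))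
      atTop (𝓝 ξ1)) : (ξ1 : ℂ) = κ * (gi (-Q) * g ((Q : ℂ) ^ 2) ^ 2) := by
  have hsub : Tendsto (fun K : ℕ => 4 * K + 2) atTop atTop :=
    tendsto_atTop_mono (fun K => by simp only [id]; omega) tendsto_id
  have hsub2 : Tendsto (fun K : ℕ => 2 * K + 2) atTop atTop :=
    tendsto_atTop_mono (fun K => by simp only [id]; omega) tendsto_id
  have hl := (Complex.continuous_ofReal.tendsto ξ1).comp (h1.comp hsub)
  refine tendsto_nhds_unique hl ?_
  have hne : gi (-(Q : ℂ)) ≠ 0 := gi_ne_zero (by simpa using norm_Q_lt)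
  have hQ0 := Q_pos
  have hQ1 := Q_le
  have hden : (1 - (Q : ℂ) ^ 2) * (1 + (Q : ℂ) ^ 2) ≠ 0 := by
    have : 0 < (1 - Q ^ 2) * (1 + Q ^ 2) := by
      have h2 : 0 < 1 - Q ^ 2 := by nlinarith
      positivity
    exact_mod_cast this.ne'
  have hp : Tendsto (fun K : ℕ => (Q : ℂ) ^ (2 * K + 2)) atTop (𝓝 0) :=
    (tendsto_pow_atTop_nhds_zero_of_norm_lt_one norm_Q_lt).comp hsub2
  have hA1 := (tendsto_add_atTop_iff_nat 1).2 tendsto_pA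
  have hG1 := (tendsto_add_atTop_iff_nat 1).2 tendsto_pG
  have hA2 := tendsto_pA.comp hsub2
  have hmain := ((((tendsto_pA.mul hA1).mul (hp.const_sub 1)).mul
    (tendsto_pG.mul hG1)).mul_const (1 + (Q : ℂ) ^ 3)).const_mul 3 |>.div
      (hA2.const_mul ((1 - (Q : ℂ) ^ 2) * (1 + (Q : ℂ) ^ 2))) (mul_ne_zero hden hne)
  have hval : κ * (gi (-Q) * g ((Q : ℂ) ^ 2) ^ 2) =
      3 * (gi (-Q) * gi (-Q) * (1 - 0) * (g ((Q : ℂ) ^ 2) * g ((Q : ℂ) ^ 2)) * (1 + (Q : ℂ) ^ 3)) /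
        ((1 - (Q : ℂ) ^ 2) * (1 + (Q : ℂ) ^ 2) * gi (-Q)) := by
    rw [κ, div_mul_eq_mul_div, div_eq_div_iff hden (mul_ne_zero hden hne)]
    ring
  rw [hval]
  refine hmain.congr fun K => ?_
  simp only [Function.comp]
  rw [partial_product]
  push_cast
  rfl

lemma isAlgebraic_of_cubic {a b d v : ℂ} (ha : IsAlgebraic ℚ a) (hb : IsAlgebraic ℚ b)
    (hd : IsAlgebraic ℚ d) (hd0 : d ≠ 0) (h : a * v ^ 3 + b * v ^ 2 + d = 0) :
    IsAlgebraic ℚ v := by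
  let K : IntermediateField ℚ ℂ := algebraicClosure ℚ ℂ
  have hK : ∀ {x : ℂ}, IsAlgebraic ℚ x → x ∈ K := fun hx => mem_algebraicClosure_iff.2 hx
  have hv : IsAlgebraic K v := by
    refine ⟨Polynomial.C ⟨a, hK ha⟩ * Polynomial.X ^ 3 + Polynomial.C ⟨b, hK hb⟩ * Polynomial.X ^ 2
      + Polynomial.C ⟨d, hK hd⟩, fun h0 => hd0 ?_, ?_⟩
    · have h1 := congrArg (fun p => Polynomial.coeff p 0) h0
      simp at h1
      exact congrArg Subtype.val h1
    · simpa using h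
  have : Algebra.IsAlgebraic ℚ K := algebraicClosure.isAlgebraic ℚ ℂ
  exact hv.restrictScalars ℚ

end XiOne

open XiOne in
theorem xi1_transcendental (ξ1 : ℝ)
    (h1 : Filter.Tendsto (fun N : ℕ => ∏ n ∈ Finset.Icc 1 N, (1 + 1 / (F n : ℝ)))
      Filter.atTop (nhds ξ1)) :
    Transcendental ℚ ξ1 := by
  intro halg
  have hξ : IsAlgebraic ℚ (ξ1 : ℂ) := halg.algebraMap (A := ℂ)
  have hQ := isAlgebraic_Q
  have hQ0 := Q_pos
  have hQ1 := Q_le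
  have hQc : (Q : ℂ) ≠ 0 := by exact_mod_cast hQ0.ne'
  have hQn := norm_Q_lt
  have hQn2 : ‖(Q : ℂ) ^ 2‖ < 1 := by
    rw [norm_pow]; exact pow_lt_one₀ (norm_nonneg _) hQn two_ne_zero
  set α₁ := gi (-(Q : ℂ)) with hα
  set β₁ := gi (Q : ℂ) with hβ
  set γ₁ := g ((Q : ℂ) ^ 2) with hγ
  set f := α₁ * γ₁ ^ 2 with hf
  have hlim : (ξ1 : ℂ) = κ * f := limit_eq h1
  have hfalg : IsAlgebraic ℚ f := by
    have : f = (ξ1 : ℂ) * κ⁻¹ := by rw [hlim]; field_simp [κ_ne_zero]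
    rw [this]
    exact hξ.mul isAlgebraic_κ.inv
  have hprod : α₁ * β₁ * γ₁ = 1 := by
    rw [mul_comm α₁, hα, hβ, hγ, gi_mul_gi_neg hQn, mul_comm]
    exact g_mul_gi hQn2
  have hα0 : α₁ ≠ 0 := gi_ne_zero (by simpa using hQn)
  have hβ0 : β₁ ≠ 0 := gi_ne_zero hQn
  have hγ0 : γ₁ ≠ 0 := g_ne_zero hQn2
  have hf0 : f ≠ 0 := mul_ne_zero hα0 (pow_ne_zero _ hγ0)
  have hγf : γ₁ = f * β₁ := by
    rw [hf]; linear_combination -γ₁ * hprod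
  have hαf : α₁ * (f * β₁ ^ 2) = 1 := by
    rw [hf]; linear_combination (α₁ * β₁ * γ₁ + 1) * hprod
  obtain ⟨σ, hσ, hσQ⟩ := exists_ex_eq hQc hQn
  have hτ : 0 < (2 * σ).im := by simpa using hσ
  have hhalf : 2 * σ / 2 = σ := by ring
  have hexτ : ex (2 * σ) = (Q : ℂ) ^ 2 := by rw [ex_half_sq, hhalf, hσQ]
  have hsum := u_sum hτ
  rw [u1_q hτ, u2_q hτ, u3_q hτ, hhalf, hσQ, hexτ, t, ← hα, ← hβ, ← hγ] at hsum
  -- eliminating `α₁` and `γ₁` leaves a cubic equation for `β₁ ^ 24`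
  have hcubic : ((2 : ℂ) ^ 12 * (Q : ℂ) ^ 3 * f ^ 24 + 1) * (β₁ ^ 24) ^ 3
      + (-(cc * Q)) * (β₁ ^ 24) ^ 2 + (-(f ^ 24)⁻¹) = 0 := by
    have h2 : (f ^ 24)⁻¹ = α₁ ^ 24 * β₁ ^ 48 := by
      refine inv_eq_of_mul_eq_one_right ?_
      calc f ^ 24 * (α₁ ^ 24 * β₁ ^ 48) = (α₁ * (f * β₁ ^ 2)) ^ 24 := by ring
        _ = 1 := by rw [hαf, one_pow]
    have h3 : (2 : ℂ) ^ 12 * Q ^ 3 * γ₁ ^ 24 + β₁ ^ 24 - α₁ ^ 24 = cc * Q := by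
      rw [← hsum]; field_simp; ring
    rw [h2]
    rw [hγf] at h3
    linear_combination β₁ ^ 48 * h3
  have hcc : IsAlgebraic ℚ (cc : ℂ) := isAlgebraic_intCast cc
  have h2alg : IsAlgebraic ℚ (2 : ℂ) := by
    exact_mod_cast isAlgebraic_natCast (R := ℚ) (A := ℂ) 2
  have hv : IsAlgebraic ℚ (β₁ ^ 24) :=
    isAlgebraic_of_cubic ((((h2alg.pow 12).mul (hQ.pow 3)).mul (hfalg.pow 24)).add isAlgebraic_one)
      (hcc.mul hQ).neg (hfalg.pow 24).inv.neg (neg_ne_zero.2 (inv_ne_zero (pow_ne_zero _ hf0)))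
      hcubic
  have ht : IsAlgebraic ℚ (t ((Q : ℂ) ^ 2)) := by
    have : t ((Q : ℂ) ^ 2) = Q ^ 2 * (f ^ 24 * β₁ ^ 24) := by
      rw [t, ← hγ, hγf]; ring
    rw [this]
    exact (hQ.pow 2).mul ((hfalg.pow 24).mul hv)
  refine not_both_algebraic hτ (q₀ := Q ^ 2) (by positivity) (by nlinarith)
    (by rw [hexτ]; push_cast; rfl) (by rw [hexτ]; exact hQ.pow 2) ?_
  rw [J, hexτ, Jq]
  exact ht.inv.add (((h2alg.pow 24).mul (ht.pow 2)).sub ((hcc.mul (h2alg.pow 12)).mul ht))
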